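/- Let a ∈ ℝ, b > 0, and A := {x ∈ ℝ² : |x| > 1}. For E < 0 let N(E) := n(q_E), the negativity index of q_E(ψ) := ∫_A (|∇ψ(x)|² − ((a + b·x₁/|x|)/|x|²)·|ψ(x)|² − E·|ψ(x)|²) dx on the complex vector space of restrictions to A of smooth compactly supported functions ψ : ℝ² → ℂ (no boundary condition at |x| = 1; N(E) is the counting function N_{(−∞,E)} of the Neumann realization of H_{a,b} = −Δ − (a + b·x₁/|x|)/|x|² on A). Then lim_{E↗0} N(E)/|log|E|| = (1/(2π)) · Σ m_b(e)·√(a−e), the sum running over all Mathieu eigenvalues e of M_b with e < a. -/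

import Mathlib

/-!
In the coordinates `s = log |x|` and `θ = arg x` the operator separates: the form becomes that of
`-∂ₛ² + (M_b - a) - E e^{2s}` on `s > 0`, where `M_b = -∂_θ² - b cos θ` is the Mathieu operator. Each
Mathieu eigenvalue `e_j < a` contributes a channel `-d²/ds² - k_j² + |E| e^{2s}` with
`k_j = √(a - e_j)`, whose potential well has length about `½ |log |E||`. A Dirichlet interval of
length `π / k` has lowest eigenvalue `k²`, so the well holds about `k_j |log |E|| / (2π)` negative
directions, and the remaining directions contribute none. Boundary conditions at the finitely many
ends cost only a bounded number of dimensions, hence do not affect the limit.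

**Mathieu eigenfunctions.** In the Fourier basis `M_b` is a tridiagonal matrix. For large `C` the
inverse `(M_b + C)⁻¹` is constructed by a Neumann series as a compact self-adjoint operator
(`exists_jacobi_resolvent`). Splitting off its eigenvalues above `(a + C)⁻¹`
(`compact_spectral_bound`) gives a finite orthonormal family `g_j` of smooth eigenfunctions with
`M_b ≥ a - ∑ (a - e_j) |g_j⟩⟨g_j|` in the sense of forms: this is `MathieuFamily`, whose existence
is `exists_mathieuFamily`. The family exhausts all solutions with eigenvalue below `a`, so the sum
over eigenvalues with multiplicity is `∑ k_j` (`MathieuFamily.tsum_eq`).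

**Upper bound.** Beyond `log |x| = cutLog a b E`, about `½ |log |E||`, the form density is
non-negative. Inside, the form is at least `∑_j ∫ (r |c_j'|² - k_j² r⁻¹ |c_j|²) dr` in terms of the
angular coefficients `c_j(r)` along `g_j`, and a Riccati argument makes the `j`-th integral
non-negative once `c_j` vanishes at the ends of blocks of logarithmic length less than `π / k_j`.
These are `∑_j (⌊k_j L / π⌋ + 2)` linear conditions, `L = cutLog a b E`, so no subspace on which the
form is negative has larger dimension (`MathieuFamily.upper_bound`).

**Lower bound.** For `k < K < k_j` a bump `w` supported in an interval of length `π / k` has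
`∫ w'² - K² w² < 0`. The functions `w(log |x| - i π / k) g_j(arg x)` with `i < n_j` have disjoint
radial supports for fixed `j` and are orthogonal in the angle for different `j`; the term
`|E| e^{2s}` is absorbed as long as it is at most `k_j² - K²`. They span a subspace of dimension
`∑ n_j` on which the form is negative (`MathieuFamily.lower_bound`), with `n_j` about
`k |log |E|| / (2π)`. Letting `k` tend to `k_j` gives the limit.
-/

open MeasureTheory Real Filter Topology

noncomputable section

abbrev E2 := EuclideanSpace ℝ (Fin 2)

/-- negativity index of `q` over subspaces consisting of vectors satisfying `P` -/
def negIndexOn {V : Type*} [AddCommGroup V] [Module ℂ V] (P : V → Prop) (q : V → ℝ) : ℕ∞ :=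
  ⨆ W ∈ {W : Submodule ℂ V | (W : Set V) ⊆ {ψ | P ψ} ∧ ∀ ψ ∈ W, ψ ≠ 0 → q ψ < 0},
    (Module.finrank ℂ W : ℕ∞)

def IsMathieuSol (b e : ℝ) (g : ℝ → ℂ) : Prop :=
  ContDiff ℝ (⊤ : ℕ∞) g ∧ Function.Periodic g (2 * π) ∧
    ∀ t, -(deriv (deriv g) t) - (b * Real.cos t : ℂ) * g t = (e : ℂ) * g t

def IsMathieuEV (b e : ℝ) : Prop := ∃ g, g ≠ 0 ∧ IsMathieuSol b e g

/-- multiplicity of a Mathieu eigenvalue (the solution set is a linear subspace, so its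
span has the same underlying set and the correct dimension). -/
def mathieuMult (b e : ℝ) : ℕ :=
  Module.finrank ℂ (Submodule.span ℂ {g : ℝ → ℂ | IsMathieuSol b e g})

open scoped InnerProductSpace ComplexInnerProductSpace

/-! ### Compact self-adjoint operators -/

section
variable {H : Type*} [NormedAddCommGroup H] [InnerProductSpace ℂ H] [CompleteSpace H]

/-- The operator inequality `S² ≤ τ S` for a compact self-adjoint `S` whose eigenvalues lie in
`[0, τ]`, by the continuous functional calculus. -/
theorem norm_sq_le_of_eigenvalues_mem_Icc (S : H →L[ℂ] H) (hS : IsSelfAdjoint S)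
    (hc : IsCompactOperator S) (τ : ℝ) (hτ : 0 < τ)
    (h : ∀ (μ : ℝ) (x : H), x ≠ 0 → S x = (μ : ℂ) • x → 0 ≤ μ ∧ μ ≤ τ) (f : H) :
    ‖S f‖ ^ 2 ≤ τ * (⟪S f, f⟫_ℂ).re := by
  have hspec : ∀ k ∈ spectrum ℝ S, 0 ≤ k ∧ k ≤ τ := by
    intro k hk
    by_cases hk0 : k = 0
    · subst hk0; exact ⟨le_rfl, hτ.le⟩
    · have hk' : (k : ℂ) ∈ spectrum ℂ S := by
        have := spectrum.algebraMap_mem ℂ hk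
        simpa using this
      have := (hc.hasEigenvalue_iff_mem_spectrum (by exact_mod_cast hk0)).2 hk'
      obtain ⟨x, hx⟩ := this.exists_hasEigenvector
      exact h k x hx.2 (by simpa using hx.apply_eq_smul)
  have hnn : 0 ≤ cfc (fun x : ℝ => x * (τ - x)) S :=
    cfc_nonneg (fun k hk => mul_nonneg (hspec k hk).1 (by linarith [(hspec k hk).2]))
  have heq : cfc (fun x : ℝ => x * (τ - x)) S = S * (algebraMap ℝ _ τ - S) := by
    rw [cfc_mul (fun x : ℝ => x) (fun x => τ - x) S, cfc_sub (fun _ : ℝ => τ) (fun x => x) S,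
      cfc_id' ℝ S, cfc_const τ S]
  rw [heq, ContinuousLinearMap.nonneg_iff_isPositive] at hnn
  have h1 := hnn.re_inner_nonneg_left f
  have h2 : ⟪(S * (algebraMap ℝ _ τ - S)) f, f⟫_ℂ = τ * ⟪S f, f⟫_ℂ - ⟪S f, S f⟫_ℂ := by
    have hsym := hS.isSymmetric
    have e1 : (S * (algebraMap ℝ (H →L[ℂ] H) τ - S)) f = (τ : ℂ) • S f - S (S f) := by
      simp [Algebra.algebraMap_eq_smul_one]
    rw [e1, inner_sub_left, inner_smul_left]
    have := hsym (S f) f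
    simp only [ContinuousLinearMap.coe_coe] at this
    rw [this]; simp
  rw [h2] at h1
  rw [inner_self_eq_norm_sq_to_K] at h1
  simp only [map_sub, RCLike.re_to_complex, Complex.re_ofReal_mul] at h1
  have : ((‖S f‖ : ℂ) ^ 2).re = ‖S f‖ ^ 2 := by norm_cast
  simp only [Complex.coe_algebraMap] at h1
  linarith

/-- The images under `T` of orthonormal eigenvectors with eigenvalues above `τ` are at mutual distance
more than `τ`, so a finite `τ / 2`-net of the compact image of the unit ball bounds their number. -/
theorem card_orthonormal_eigenvectors_bounded (T : H →L[ℂ] H) (hc : IsCompactOperator T)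
    (τ : ℝ) (hτ : 0 < τ) :
    ∃ M : ℕ, ∀ (m : ℕ) (x : Fin m → H) (μ : Fin m → ℝ), Orthonormal ℂ x →
      (∀ j, τ < μ j ∧ T (x j) = (μ j : ℂ) • x j) → m ≤ M := by
  obtain ⟨K, hK, hK'⟩ := hc.image_closedBall_subset_compact (1 : ℝ)
  obtain ⟨t, -, ht, hKt⟩ := hK.finite_cover_balls (e := τ / 2) (by positivity)
  refine ⟨ht.toFinset.card, fun m x μ hx hμ => ?_⟩
  by_contra! hlt
  have hmem : ∀ j, ∃ y : ht.toFinset, dist (T (x j)) y < τ / 2 := by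
    intro j
    have : T (x j) ∈ K := hK' ⟨x j, by simp [hx.1 j], rfl⟩
    have := hKt this
    simp only [Set.mem_iUnion, Metric.mem_ball] at this
    obtain ⟨y, hy, hd⟩ := this
    exact ⟨⟨y, by simpa using hy⟩, hd⟩
  choose y hy using hmem
  obtain ⟨i, j, hij, hyij⟩ := Fintype.exists_ne_map_eq_of_card_lt y (by simpa using hlt)
  have hd : dist (T (x i)) (T (x j)) < τ := by
    have := dist_triangle_right (T (x i)) (T (x j)) (y i : H)
    have h1 := hy i
    have h2 := hy j
    rw [← hyij] at h2
    linarith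
  have hin : ⟪x i, T (x i) - T (x j)⟫_ℂ = μ i := by
    rw [(hμ i).2, (hμ j).2, inner_sub_right, inner_smul_right, inner_smul_right,
      inner_self_eq_norm_sq_to_K, hx.1 i, hx.2 hij]
    simp
  have hn := norm_inner_le_norm (𝕜 := ℂ) (x i) (T (x i) - T (x j))
  rw [hin, hx.1 i, one_mul, ← dist_eq_norm] at hn
  have := (hμ i).1
  rw [Complex.norm_real, Real.norm_eq_abs, abs_of_pos (by linarith)] at hn
  linarith

/-- Splitting off the finitely many eigenvalues above `τ` of a compact self-adjoint operator with
nonnegative eigenvalues. Writing `v = T f`, the conclusion bounds the form `⟪v, T⁻¹ v⟫` of the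
inverse operator from below by `τ⁻¹ ‖v‖²` up to the contribution of these eigenvectors. -/
theorem compact_spectral_bound (T : H →L[ℂ] H) (hT : IsSelfAdjoint T)
    (hc : IsCompactOperator T) (τ : ℝ) (hτ : 0 < τ)
    (hpos : ∀ (μ : ℝ) (x : H), x ≠ 0 → T x = (μ : ℂ) • x → 0 ≤ μ) :
    ∃ (m : ℕ) (x : Fin m → H) (μ : Fin m → ℝ), Orthonormal ℂ x ∧
      (∀ j, τ < μ j ∧ T (x j) = (μ j : ℂ) • x j) ∧
      ∀ f, τ⁻¹ * ‖T f‖ ^ 2 - ∑ j, (τ⁻¹ - (μ j)⁻¹) * ‖⟪x j, T f⟫_ℂ‖ ^ 2 ≤ (⟪T f, f⟫_ℂ).re := by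
  classical
  obtain ⟨M, hM⟩ := card_orthonormal_eigenvectors_bounded T hc τ hτ
  let P : ℕ → Prop := fun m => ∃ (x : Fin m → H) (μ : Fin m → ℝ), Orthonormal ℂ x ∧
      (∀ j, τ < μ j ∧ T (x j) = (μ j : ℂ) • x j)
  have hP0 : P 0 := ⟨Fin.elim0, Fin.elim0, ⟨fun i => i.elim0, fun i => i.elim0⟩, fun i => i.elim0⟩
  -- a maximal orthonormal family of eigenvectors with eigenvalues above `τ`
  have hPm : P (Nat.findGreatest P M) := Nat.findGreatest_spec (Nat.zero_le M) hP0
  have hmax : ¬ P (Nat.findGreatest P M + 1) := by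
    intro h
    obtain ⟨x, μ, h1, h2⟩ := id h
    have := Nat.le_findGreatest (hM _ x μ h1 h2) h
    omega
  generalize Nat.findGreatest P M = m at hPm hmax
  obtain ⟨x, μ, hx, hμ⟩ := hPm
  refine ⟨m, x, μ, hx, hμ, fun f => ?_⟩
  have hsym := hT.isSymmetric
  have hadj : ∀ u w, ⟪T u, w⟫_ℂ = ⟪u, T w⟫_ℂ := fun u w => hsym u w
  -- the part of `T` living on the orthogonal complement of the `x j`
  let S : H →L[ℂ] H := T - ∑ j, (μ j : ℂ) • (innerSL ℂ (x j)).smulRight (x j)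
  have hSapp : ∀ u, S u = T u - ∑ j, ((μ j : ℂ) * ⟪x j, u⟫_ℂ) • x j := by
    intro u
    simp [S, mul_smul]
  have hxT : ∀ j u, ⟪x j, T u⟫_ℂ = μ j * ⟪x j, u⟫_ℂ := by
    intro j u; rw [← hadj, (hμ j).2, inner_smul_left]; simp
  have hsumin : ∀ (c : Fin m → ℂ) j, ⟪x j, ∑ i, c i • x i⟫_ℂ = c j := fun c j =>
    hx.inner_right_fintype c j
  have hxS : ∀ j u, ⟪x j, S u⟫_ℂ = 0 := by
    intro j u
    rw [hSapp, inner_sub_right, hxT, hsumin (fun i => (μ i : ℂ) * ⟪x i, u⟫_ℂ) j, sub_self]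
  have hSsa : IsSelfAdjoint S := by
    rw [ContinuousLinearMap.isSelfAdjoint_iff_isSymmetric]
    intro u w
    simp only [ContinuousLinearMap.coe_coe, hSapp, inner_sub_left, inner_sub_right, hadj,
      sum_inner, inner_sum, inner_smul_left, inner_smul_right, map_mul, Complex.conj_ofReal,
      inner_conj_symm]
    congr 1
    refine Finset.sum_congr rfl fun j _ => by ring
  have hSc : IsCompactOperator S := by
    have : (∑ j, (μ j : ℂ) • (innerSL ℂ (x j)).smulRight (x j)) ∈
        compactOperator (RingHom.id ℂ) H H := by
      refine Submodule.sum_mem _ fun j _ => Submodule.smul_mem _ _ ?_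
      have h1 : IsCompactOperator (ContinuousLinearMap.toSpanSingleton ℂ (x j)) :=
        isCompactOperator_of_locallyCompactSpace_rng _
      exact h1.comp_clm (innerSL ℂ (x j))
    exact hc.sub this
  have hSeig : ∀ (k : ℝ) (z : H), z ≠ 0 → S z = (k : ℂ) • z → 0 ≤ k ∧ k ≤ τ := by
    intro k z hz hSz
    by_cases hk : k = 0
    · subst hk; exact ⟨le_rfl, hτ.le⟩
    have hkC : (k : ℂ) ≠ 0 := by exact_mod_cast hk
    have hzx : ∀ j, ⟪x j, z⟫_ℂ = 0 := by
      intro j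
      have := hxS j z
      rw [hSz, inner_smul_right] at this
      exact (mul_eq_zero.1 this).resolve_left hkC
    have hTz : T z = (k : ℂ) • z := by
      rw [← hSz, hSapp]; simp [hzx]
    refine ⟨hpos k z hz hTz, ?_⟩
    by_contra! hlt
    -- an eigenvalue of `S` above `τ` would extend the maximal family
    apply hmax
    have hz' : (‖z‖ : ℂ) ≠ 0 := by exact_mod_cast norm_ne_zero_iff.2 hz
    let z' : H := ((‖z‖ : ℂ)⁻¹) • z
    have hz1 : ‖z'‖ = 1 := by
      simp only [z', norm_smul, norm_inv, Complex.norm_real, norm_norm]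
      exact inv_mul_cancel₀ (norm_ne_zero_iff.2 hz)
    have hz'x : ∀ j, ⟪x j, z'⟫_ℂ = 0 := fun j => by simp [z', hzx j]
    refine ⟨Fin.snoc x z', Fin.snoc μ k, ?_, ?_⟩
    · refine ⟨fun i => ?_, fun i j hij => ?_⟩
      · refine Fin.lastCases ?_ (fun i => ?_) i
        · simpa using hz1
        · simpa using hx.1 i
      · induction i using Fin.lastCases with
        | last =>
          induction j using Fin.lastCases with
          | last => exact absurd rfl hij
          | cast j =>
            simp only [Fin.snoc_last, Fin.snoc_castSucc]
            rw [inner_eq_zero_symm]; exact hz'x j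
        | cast i =>
          induction j using Fin.lastCases with
          | last => simpa using hz'x i
          | cast j =>
            simp only [Fin.snoc_castSucc]
            exact hx.2 (fun h => hij (by rw [h]))
    · intro i
      refine Fin.lastCases ?_ (fun i => ?_) i
      · simp only [Fin.snoc_last]
        refine ⟨hlt, ?_⟩
        simp only [z', map_smul, hTz, smul_smul]
        rw [mul_comm]
      · simpa using hμ i
  have hmain := norm_sq_le_of_eigenvalues_mem_Icc S hSsa hSc τ hτ hSeig f
  have hTf : T f = S f + ∑ j, ((μ j : ℂ) * ⟪x j, f⟫_ℂ) • x j := by rw [hSapp]; abel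
  have hnorm : ‖T f‖ ^ 2 = ‖S f‖ ^ 2 + ∑ j, (μ j) ^ 2 * ‖⟪x j, f⟫_ℂ‖ ^ 2 := by
    have horth : ⟪S f, ∑ j, ((μ j : ℂ) * ⟪x j, f⟫_ℂ) • x j⟫_ℂ = 0 := by
      rw [inner_sum]
      refine Finset.sum_eq_zero fun j _ => ?_
      rw [inner_smul_right, ← inner_conj_symm (S f), hxS]; simp
    have h1 := norm_add_sq_eq_norm_sq_add_norm_sq_of_inner_eq_zero _ _ horth
    have h2 : ‖∑ j, ((μ j : ℂ) * ⟪x j, f⟫_ℂ) • x j‖ ^ 2 = ∑ j, (μ j) ^ 2 * ‖⟪x j, f⟫_ℂ‖ ^ 2 := by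
      have h3 := hx.inner_sum (fun j => (μ j : ℂ) * ⟪x j, f⟫_ℂ) (fun j => (μ j : ℂ) * ⟪x j, f⟫_ℂ)
        Finset.univ
      rw [inner_self_eq_norm_sq_to_K] at h3
      have h4 : ∀ j, (starRingEnd ℂ) ((μ j : ℂ) * ⟪x j, f⟫_ℂ) * ((μ j : ℂ) * ⟪x j, f⟫_ℂ)
          = (((μ j) ^ 2 * ‖⟪x j, f⟫_ℂ‖ ^ 2 : ℝ) : ℂ) := by
        intro j
        rw [Complex.conj_mul', norm_mul, Complex.norm_real, Real.norm_eq_abs]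
        push_cast
        rw [mul_pow]
        congr 1
        norm_cast
        rw [sq_abs]
      rw [Finset.sum_congr rfl (fun j _ => h4 j)] at h3
      rw [← Complex.ofReal_sum] at h3
      rw [← Complex.ofReal_inj, ← h3]; simp
    rw [← h2, sq, sq, sq, hTf]; exact h1
  have hre : (⟪T f, f⟫_ℂ).re = (⟪S f, f⟫_ℂ).re + ∑ j, μ j * ‖⟪x j, f⟫_ℂ‖ ^ 2 := by
    rw [hTf, inner_add_left, Complex.add_re, sum_inner, Complex.re_sum]
    congr 1
    refine Finset.sum_congr rfl fun j _ => ?_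
    rw [inner_smul_left, map_mul, Complex.conj_ofReal, mul_assoc, Complex.conj_mul']
    norm_cast
  have hxTn : ∀ j, ‖⟪x j, T f⟫_ℂ‖ ^ 2 = (μ j) ^ 2 * ‖⟪x j, f⟫_ℂ‖ ^ 2 := by
    intro j
    rw [hxT, norm_mul, mul_pow, Complex.norm_real, Real.norm_eq_abs, sq_abs]
  rw [hnorm, hre]
  have h5 : ∑ j, (τ⁻¹ - (μ j)⁻¹) * ‖⟪x j, T f⟫_ℂ‖ ^ 2
      = τ⁻¹ * ∑ j, (μ j) ^ 2 * ‖⟪x j, f⟫_ℂ‖ ^ 2 - ∑ j, μ j * ‖⟪x j, f⟫_ℂ‖ ^ 2 := by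
    rw [Finset.mul_sum, ← Finset.sum_sub_distrib]
    refine Finset.sum_congr rfl fun j _ => ?_
    have hμ0 : μ j ≠ 0 := by have := (hμ j).1; linarith
    rw [hxTn]; field_simp
  rw [h5]
  have h6 : τ⁻¹ * ‖S f‖ ^ 2 ≤ (⟪S f, f⟫_ℂ).re := by
    rw [inv_mul_le_iff₀ hτ]; exact hmain
  linarith

end

/-! ### The resolvent of the Mathieu matrix -/

theorem summable_inv_int_sq_add (C : ℝ) (hC : 0 < C) :
    Summable (fun n : ℤ => ((n : ℝ) ^ 2 + C)⁻¹) := by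
  have h : Summable (fun n : ℤ => 1 / (n : ℝ) ^ 2) := Real.summable_one_div_int_pow.2 (by norm_num)
  refine Summable.of_norm_bounded_eventually h ?_
  have : ∀ᶠ n : ℤ in cofinite, n ≠ 0 := by
    exact (Set.finite_singleton (0 : ℤ)).eventually_cofinite_notMem
  filter_upwards [this] with n hn
  have hn' : (0 : ℝ) < (n : ℝ) ^ 2 := by positivity
  rw [Real.norm_eq_abs, abs_of_pos (by positivity), one_div]
  gcongr
  linarith

/-- The sum bounds the norm of the off-diagonal part of the Mathieu matrix relative to the diagonal
`n² + C`; it tends to `0` as `C → ∞` by dominated convergence. -/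
theorem exists_tsum_inv_int_sq_add_lt (b : ℝ) :
    ∃ C : ℝ, b ≤ C ∧ 0 < C ∧ b * ∑' n : ℤ, ((n : ℝ) ^ 2 + C)⁻¹ < 1 := by
  have h : Tendsto (fun C : ℝ => ∑' n : ℤ, ((n : ℝ) ^ 2 + C)⁻¹) atTop (𝓝 (∑' _ : ℤ, (0 : ℝ))) := by
    refine tendsto_tsum_of_dominated_convergence (summable_inv_int_sq_add 1 one_pos) ?_ ?_
    · intro n
      exact tendsto_inv_atTop_zero.comp (tendsto_atTop_add_const_left _ _ tendsto_id)
    · filter_upwards [eventually_ge_atTop 1] with C hC n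
      have : (0 : ℝ) ≤ (n : ℝ) ^ 2 := by positivity
      rw [Real.norm_eq_abs, abs_of_pos (by positivity)]
      gcongr
  rw [tsum_zero] at h
  have h2 := h.const_mul b
  rw [mul_zero] at h2
  have h3 := (h2.eventually_lt_const one_pos).and
    ((eventually_ge_atTop b).and (eventually_gt_atTop 0))
  obtain ⟨C, h4, h5, h6⟩ := h3.exists
  exact ⟨C, h5, h6, h4⟩

section
variable {H : Type*} [NormedAddCommGroup H] [InnerProductSpace ℂ H] [CompleteSpace H]

set_option maxHeartbeats 1000000 in
/-- The resolvent `T = (M + C)⁻¹` of the infinite matrix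
`(M v)ₙ = n² vₙ - (b / 2) (vₙ₋₁ + vₙ₊₁)` (the Mathieu operator in the Fourier basis), for `C` large.
With `R = (n² + C)⁻¹` and `J` the neighbour sum, `T = R (1 - (b / 2) J R)⁻¹`. -/
theorem exists_jacobi_resolvent (e : ℤ → H) (ho : Orthonormal ℂ e)
    (htot : ∀ u : H, (∀ n, ⟪e n, u⟫_ℂ = 0) → u = 0) (b : ℝ) (hb : 0 ≤ b) :
    ∃ C : ℝ, b ≤ C ∧ 0 < C ∧ ∃ T : H →L[ℂ] H, IsSelfAdjoint T ∧ IsCompactOperator T ∧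
      (∀ v y f : H, (∀ n : ℤ, ⟪e n, y⟫_ℂ = ((n : ℂ) ^ 2 + C) * ⟪e n, v⟫_ℂ) →
        (∀ n : ℤ, ⟪e n, f⟫_ℂ = ⟪e n, y⟫_ℂ - (b / 2) * (⟪e (n - 1), v⟫_ℂ + ⟪e (n + 1), v⟫_ℂ)) →
        T f = v) ∧
      (∀ (x : H) (μ : ℝ), T x = (μ : ℂ) • x → ∀ n : ℤ,
        ⟪e n, x⟫_ℂ = μ * (((n : ℂ) ^ 2 + C) * ⟪e n, x⟫_ℂ
          - (b / 2) * (⟪e (n - 1), x⟫_ℂ + ⟪e (n + 1), x⟫_ℂ))) := by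
  classical
  obtain ⟨C, hbC, hC, hlt⟩ := exists_tsum_inv_int_sq_add_lt b
  refine ⟨C, hbC, hC, ?_⟩
  have hsum := summable_inv_int_sq_add C hC
  obtain ⟨r, hr⟩ : ∃ r : ℤ → ℝ, r = fun n : ℤ => ((n : ℝ) ^ 2 + C)⁻¹ := ⟨_, rfl⟩
  rw [← hr] at hsum
  have hlt' : b * ∑' n, r n < 1 := by rw [hr]; exact hlt
  have hrpos : ∀ n, 0 < r n := fun n => by rw [hr]; positivity
  have hrC : ∀ n : ℤ, (r n : ℂ) * ((n : ℂ) ^ 2 + C) = 1 := by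
    intro n
    have : r n * ((n : ℝ) ^ 2 + C) = 1 := by
      rw [hr]; exact inv_mul_cancel₀ (by positivity)
    exact_mod_cast this
  have hrle : ∀ n, r n ≤ C⁻¹ := fun n => by
    rw [hr]; dsimp only; gcongr; nlinarith [sq_nonneg (n : ℝ)]
  have hinnorm : ∀ n, ‖innerSL ℂ (e n)‖ = 1 := fun n => by rw [innerSL_apply_norm, ho.1 n]
  have hinle : ∀ n (u : H), ‖⟪e n, u⟫_ℂ‖ ≤ ‖u‖ := fun n u => by
    simpa [ho.1 n] using norm_inner_le_norm (𝕜 := ℂ) (e n) u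
  have hoo : ∀ m n, ⟪e m, e n⟫_ℂ = if m = n then 1 else 0 := orthonormal_iff_ite.1 ho
  let Rn : ℤ → H →L[ℂ] H := fun n => (r n : ℂ) • (innerSL ℂ (e n)).smulRight (e n)
  let Ln : ℤ → H →L[ℂ] H := fun n =>
    ((b / 2 * r n : ℝ) : ℂ) • (innerSL ℂ (e n)).smulRight (e (n + 1) + e (n - 1))
  have hRnn : ∀ n, ‖Rn n‖ ≤ r n := by
    intro n
    simp only [Rn, norm_smul, ContinuousLinearMap.norm_smulRight_apply, hinnorm, ho.1]
    simp [abs_of_pos (hrpos n)]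
  have hLnn : ∀ n, ‖Ln n‖ ≤ b * r n := by
    intro n
    simp only [Ln, norm_smul, ContinuousLinearMap.norm_smulRight_apply, hinnorm, one_mul]
    have h2 : ‖e (n + 1) + e (n - 1)‖ ≤ 2 := by
      refine (norm_add_le _ _).trans ?_
      rw [ho.1, ho.1]; norm_num
    have h3 : 0 ≤ b / 2 * r n := mul_nonneg (by linarith) (hrpos n).le
    rw [Complex.norm_real, Real.norm_eq_abs, abs_of_nonneg h3]
    nlinarith
  have hRs : Summable Rn := Summable.of_norm_bounded hsum hRnn
  have hLs : Summable Ln := Summable.of_norm_bounded (hsum.mul_left b) hLnn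
  obtain ⟨R, hR⟩ := hRs
  obtain ⟨L, hL⟩ := hLs
  have hLnorm : ‖L‖ < 1 := by
    refine lt_of_le_of_lt ?_ hlt'
    rw [← tsum_mul_left]
    exact hL.norm_le_of_bounded (hsum.mul_left b).hasSum hLnn
  -- matrix elements of `R` and `L`
  have hRap : ∀ w u, HasSum (fun n => (r n : ℂ) * ⟪e n, u⟫_ℂ * ⟪w, e n⟫_ℂ) ⟪w, R u⟫_ℂ := by
    intro w u
    have h1 := hR.mapL (ContinuousLinearMap.apply ℂ H u)
    have h2 := h1.mapL (innerSL ℂ w)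
    simpa [Rn, inner_smul_right, mul_assoc] using h2
  have hLap : ∀ w u, HasSum (fun n => ((b / 2 * r n : ℝ) : ℂ) * ⟪e n, u⟫_ℂ *
      (⟪w, e (n + 1)⟫_ℂ + ⟪w, e (n - 1)⟫_ℂ)) ⟪w, L u⟫_ℂ := by
    intro w u
    have h1 := hL.mapL (ContinuousLinearMap.apply ℂ H u)
    have h2 := h1.mapL (innerSL ℂ w)
    simpa [Ln, inner_smul_right, inner_add_right, mul_assoc, mul_add] using h2
  have hRco : ∀ m u, ⟪e m, R u⟫_ℂ = r m * ⟪e m, u⟫_ℂ := by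
    intro m u
    refine (hRap (e m) u).unique ?_
    have := hasSum_ite_eq m ((r m : ℂ) * ⟪e m, u⟫_ℂ)
    refine this.congr_fun ?_ |> id
    intro n
    rw [hoo]
    by_cases h : n = m
    · subst h; simp
    · simp [h, Ne.symm h]
  have hLco : ∀ m u, ⟪e m, L u⟫_ℂ = (b / 2) * (⟪e (m - 1), R u⟫_ℂ + ⟪e (m + 1), R u⟫_ℂ) := by
    intro m u
    rw [hRco, hRco]
    refine (hLap (e m) u).unique ?_
    have h1 := (hasSum_ite_eq (m - 1) ((b / 2 : ℂ) * (r (m - 1) * ⟪e (m - 1), u⟫_ℂ))).add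
      (hasSum_ite_eq (m + 1) ((b / 2 : ℂ) * (r (m + 1) * ⟪e (m + 1), u⟫_ℂ)))
    rw [mul_add]
    refine h1.congr_fun ?_ |> id
    intro n
    rw [hoo, hoo]
    by_cases h : n = m - 1
    · subst h
      have h2 : m - 1 ≠ m + 1 := by omega
      have h3 : m ≠ m - 1 - 1 := by omega
      simp [h2, h3]; ring
    · by_cases h' : n = m + 1
      · subst h'
        have h2 : m + 1 ≠ m - 1 := by omega
        have h3 : m ≠ m + 1 + 1 := by omega
        simp [h2, h3]; ring
      · have h2 : m ≠ n + 1 := by omega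
        have h3 : m ≠ n - 1 := by omega
        simp [h2, h3, h, h']
  have hRco' : ∀ m u, ⟪R u, e m⟫_ℂ = r m * ⟪u, e m⟫_ℂ := by
    intro m u
    rw [← inner_conj_symm, hRco, map_mul, inner_conj_symm, Complex.conj_ofReal]
  have hRsym : ∀ u w, ⟪R u, w⟫_ℂ = ⟪u, R w⟫_ℂ := by
    intro u w
    have h1 := (hRap w u).map (starRingEnd ℂ) Complex.continuous_conj
    rw [inner_conj_symm] at h1
    refine h1.unique ((hRap u w).congr_fun ?_ |> id)
    intro n
    simp only [Function.comp, map_mul, inner_conj_symm, Complex.conj_ofReal]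
    ring
  -- `L = (b / 2) J R`, so this is the symmetry of `R J R`; it amounts to shifting the summation index
  have hRL : ∀ u w, ⟪R u, L w⟫_ℂ = ⟪L u, R w⟫_ℂ := by
    intro u w
    let s : ℤ → ℂ := fun n => ((b / 2 * r n : ℝ) : ℂ) * ⟪e n, w⟫_ℂ * (r (n + 1) * ⟪u, e (n + 1)⟫_ℂ)
    let t : ℤ → ℂ := fun n => ((b / 2 * r n : ℝ) : ℂ) * ⟪e n, w⟫_ℂ * (r (n - 1) * ⟪u, e (n - 1)⟫_ℂ)
    have hbd : ∀ n k, ‖((b / 2 * r n : ℝ) : ℂ) * ⟪e n, w⟫_ℂ * (r k * ⟪u, e k⟫_ℂ)‖ ≤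
        b / 2 * ‖w‖ * (C⁻¹ * ‖u‖) * r n := by
      intro n k
      have h3 : 0 ≤ b / 2 * r n := mul_nonneg (by linarith) (hrpos n).le
      rw [norm_mul, norm_mul, norm_mul, Complex.norm_real, Complex.norm_real, Real.norm_eq_abs,
        Real.norm_eq_abs, abs_of_nonneg h3, abs_of_pos (hrpos k), norm_inner_symm u]
      have h1 : r k * ‖⟪e k, u⟫_ℂ‖ ≤ C⁻¹ * ‖u‖ :=
        mul_le_mul (hrle k) (hinle k u) (norm_nonneg _) (by positivity)
      have h2 : b / 2 * r n * ‖⟪e n, w⟫_ℂ‖ ≤ b / 2 * r n * ‖w‖ :=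
        mul_le_mul_of_nonneg_left (hinle n w) h3
      calc _ ≤ b / 2 * r n * ‖w‖ * (C⁻¹ * ‖u‖) :=
            mul_le_mul h2 h1 (mul_nonneg (hrpos k).le (norm_nonneg _))
              (mul_nonneg h3 (norm_nonneg _))
        _ = _ := by ring
    have hs : Summable s := Summable.of_norm_bounded (hsum.mul_left _) (fun n => hbd n (n + 1))
    have ht : Summable t := Summable.of_norm_bounded (hsum.mul_left _) (fun n => hbd n (n - 1))
    have h1 := hs.hasSum.add ht.hasSum
    have e1 : ⟪R u, L w⟫_ℂ = (∑' n, s n) + ∑' n, t n := by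
      refine (hLap (R u) w).unique (h1.congr_fun ?_ |> id)
      intro n
      simp only [hRco', s, t]; ring
    have hs' : HasSum (fun n => s (n - 1)) (∑' n, s n) :=
      ((Equiv.subRight (1 : ℤ)).hasSum_iff (f := s)).2 hs.hasSum
    have ht' : HasSum (fun n => t (n + 1)) (∑' n, t n) :=
      ((Equiv.addRight (1 : ℤ)).hasSum_iff (f := t)).2 ht.hasSum
    have e2 : ⟪L u, R w⟫_ℂ = (∑' n, s n) + ∑' n, t n := by
      have h3 := (hLap (R w) u).map (starRingEnd ℂ) Complex.continuous_conj
      rw [inner_conj_symm] at h3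
      refine h3.unique ((hs'.add ht').congr_fun ?_ |> id)
      intro n
      simp only [Function.comp, map_mul, map_add, inner_conj_symm, Complex.conj_ofReal, hRco, s, t,
        sub_add_cancel, add_sub_cancel_right]
      push_cast; ring
    rw [e1, e2]
  -- since `‖L‖ < 1`, the Neumann series inverts `1 - L`
  let U := Units.oneSub L hLnorm
  let G : H →L[ℂ] H := ↑(U⁻¹)
  have hG1 : ∀ u, G u - L (G u) = u := by
    intro u
    have h : ((1 : H →L[ℂ] H) - L) * G = 1 := U.mul_inv
    simpa using congrArg (fun A : H →L[ℂ] H => A u) h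
  have hG2 : ∀ u, G (u - L u) = u := by
    intro u
    have h : G * ((1 : H →L[ℂ] H) - L) = 1 := U.inv_mul
    simpa using congrArg (fun A : H →L[ℂ] H => A u) h
  have hTeq : ∀ u, (R * G) u = R (G u) := fun u => rfl
  refine ⟨R * G, ?_, ?_, ?_, ?_⟩
  · rw [ContinuousLinearMap.isSelfAdjoint_iff_isSymmetric]
    intro f g
    simp only [ContinuousLinearMap.coe_coe, hTeq]
    have h1 : ⟪R (G f), G g - L (G g)⟫_ℂ = ⟪G f - L (G f), R (G g)⟫_ℂ := by
      rw [inner_sub_left, inner_sub_right, hRsym, hRL]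
    rwa [hG1, hG1] at h1
  · have hRc : IsCompactOperator R := by
      refine isCompactOperator_of_tendsto hR (Eventually.of_forall fun s => ?_)
      have : (∑ n ∈ s, Rn n) ∈ compactOperator (RingHom.id ℂ) H H := by
        refine Submodule.sum_mem _ fun j _ => Submodule.smul_mem _ _ ?_
        have h1 : IsCompactOperator (ContinuousLinearMap.toSpanSingleton ℂ (e j)) :=
          isCompactOperator_of_locallyCompactSpace_rng _
        exact h1.comp_clm (innerSL ℂ (e j))
      exact this
    exact hRc.comp_clm G
  · intro v y f hy hf
    have hv : R y = v := by
      rw [← sub_eq_zero]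
      apply htot
      intro n
      rw [inner_sub_right, hRco, hy, ← mul_assoc, hrC]; ring
    have hfy : f = y - L y := by
      rw [← sub_eq_zero]
      apply htot
      intro n
      rw [inner_sub_right, inner_sub_right, hLco, hv, hf]; ring
    rw [hTeq, hfy, hG2, hv]
  · intro x μ hx n
    rw [hTeq] at hx
    have h1 := congrArg (fun z => ⟪e n, z⟫_ℂ) (hG1 x)
    simp only [inner_sub_right, hLco, hx, inner_smul_right] at h1
    have h2 := hRco n (G x)
    rw [hx, inner_smul_right] at h2
    have h3 : ⟪e n, G x⟫_ℂ = ((n : ℂ) ^ 2 + C) * (μ * ⟪e n, x⟫_ℂ) := by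
      rw [h2, ← mul_assoc, mul_comm _ (r n : ℂ), hrC, one_mul]
    rw [h3] at h1
    linear_combination -h1

end

/-! ### Fourier series with rapidly decaying coefficients -/

/-- Rapid decay of a two-sided sequence of Fourier coefficients. -/
def RapidDecay (x : ℤ → ℂ) : Prop := ∀ k : ℕ, ∃ D : ℝ, ∀ n : ℤ, ‖x n‖ * (1 + (n : ℝ) ^ 2) ^ k ≤ D

/-- Bounded solutions of the recurrence for the Fourier coefficients of a Mathieu solution decay
rapidly: each application of the recurrence gains a factor `1 + n²`. -/
theorem rapidDecay_of_recurrence (x : ℤ → ℂ) (B : ℝ) (hB : ∀ n, ‖x n‖ ≤ B) (b ε : ℝ)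
    (hrec : ∀ n : ℤ, (n : ℂ) ^ 2 * x n - (b / 2) * (x (n - 1) + x (n + 1)) = ε * x n) :
    RapidDecay x := by
  intro k
  induction k with
  | zero => exact ⟨B, fun n => by simpa using hB n⟩
  | succ k ih =>
    obtain ⟨D, hD⟩ := ih
    refine ⟨|ε + 1| * D + |b| / 2 * (3 ^ k * D + 3 ^ k * D), fun n => ?_⟩
    have key : ∀ s : ℤ, s ^ 2 = 1 → ‖x (n + s)‖ * (1 + (n : ℝ) ^ 2) ^ k ≤ 3 ^ k * D := by
      intro s hs
      have h2 : 1 + (n : ℝ) ^ 2 ≤ 3 * (1 + ((n + s : ℤ) : ℝ) ^ 2) := by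
        push_cast
        have : (s : ℝ) ^ 2 = 1 := by exact_mod_cast hs
        nlinarith [sq_nonneg (2 * (n : ℝ) + 3 * s)]
      calc ‖x (n + s)‖ * (1 + (n : ℝ) ^ 2) ^ k
          ≤ ‖x (n + s)‖ * (3 * (1 + ((n + s : ℤ) : ℝ) ^ 2)) ^ k := by gcongr
        _ = 3 ^ k * (‖x (n + s)‖ * (1 + ((n + s : ℤ) : ℝ) ^ 2) ^ k) := by rw [mul_pow]; ring
        _ ≤ _ := by gcongr; exact hD _
    have h1 := key 1 (by norm_num)
    have h2 := key (-1) (by norm_num)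
    have e : ((1 + (n : ℝ) ^ 2 : ℝ) : ℂ) * x n =
        ((ε + 1 : ℝ) : ℂ) * x n + ((b / 2 : ℝ) : ℂ) * (x (n + -1) + x (n + 1)) := by
      have := hrec n
      rw [sub_eq_add_neg n 1] at this
      push_cast
      linear_combination this
    have e2 : ‖x n‖ * (1 + (n : ℝ) ^ 2) ≤
        |ε + 1| * ‖x n‖ + |b| / 2 * (‖x (n + -1)‖ + ‖x (n + 1)‖) := by
      have := congrArg norm e
      rw [norm_mul, Complex.norm_real, Real.norm_eq_abs, abs_of_pos (by positivity)] at this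
      rw [mul_comm, this]
      refine (norm_add_le _ _).trans ?_
      rw [norm_mul, norm_mul, Complex.norm_real, Complex.norm_real, Real.norm_eq_abs,
        Real.norm_eq_abs, abs_div, abs_of_pos (zero_lt_two' ℝ)]
      gcongr
      exact norm_add_le _ _
    have hp : 0 ≤ (1 + (n : ℝ) ^ 2) ^ k := by positivity
    calc ‖x n‖ * (1 + (n : ℝ) ^ 2) ^ (k + 1) = (‖x n‖ * (1 + (n : ℝ) ^ 2)) * (1 + (n : ℝ) ^ 2) ^ k := by
          ring
      _ ≤ (|ε + 1| * ‖x n‖ + |b| / 2 * (‖x (n + -1)‖ + ‖x (n + 1)‖)) * (1 + (n : ℝ) ^ 2) ^ k := by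
          gcongr
      _ = |ε + 1| * (‖x n‖ * (1 + (n : ℝ) ^ 2) ^ k) + |b| / 2 * (‖x (n + -1)‖ * (1 + (n : ℝ) ^ 2) ^ k
            + ‖x (n + 1)‖ * (1 + (n : ℝ) ^ 2) ^ k) := by ring
      _ ≤ _ := by gcongr; exact hD n

theorem RapidDecay.summable {x : ℤ → ℂ} (h : RapidDecay x) : Summable (fun n => ‖x n‖) := by
  obtain ⟨D, hD⟩ := h 1
  refine Summable.of_nonneg_of_le (fun _ => norm_nonneg _) (fun n => ?_)
    ((summable_inv_int_sq_add 1 one_pos).mul_left D)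
  rw [← div_eq_mul_inv, le_div_iff₀ (by positivity)]
  simpa [add_comm] using hD n

theorem RapidDecay.deriv {x : ℤ → ℂ} (h : RapidDecay x) :
    RapidDecay (fun n => Complex.I * n * x n) := by
  intro k
  obtain ⟨D, hD⟩ := h (k + 1)
  refine ⟨D, fun n => le_trans ?_ (hD n)⟩
  have : ‖(n : ℂ)‖ ≤ 1 + (n : ℝ) ^ 2 := by
    rw [Complex.norm_intCast]
    nlinarith [sq_nonneg (|(n : ℝ)| - 1), sq_abs (n : ℝ)]
  rw [norm_mul, norm_mul, Complex.norm_I, one_mul, pow_succ]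
  calc ‖(n : ℂ)‖ * ‖x n‖ * (1 + (n : ℝ) ^ 2) ^ k ≤ (1 + (n : ℝ) ^ 2) * ‖x n‖ * (1 + (n : ℝ) ^ 2) ^ k := by
        gcongr
    _ = _ := by ring

theorem HasSum.congrX {f g : ℤ → ℂ} {s : ℂ} (h : HasSum g s) (hfg : ∀ n, f n = g n) :
    HasSum f s := by
  rw [show f = g from funext hfg]; exact h

/-- The Fourier series with coefficients `x`, as a function on the real line. -/
def fSeries (x : ℤ → ℂ) (t : ℝ) : ℂ := ∑' n : ℤ, x n * Complex.exp (Complex.I * n * t)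

theorem norm_exp_I_int (n : ℤ) (t : ℝ) : ‖Complex.exp (Complex.I * n * t)‖ = 1 := by
  rw [Complex.norm_exp]
  simp

theorem fSeries_summable {x : ℤ → ℂ} (h : Summable (fun n => ‖x n‖)) (t : ℝ) :
    Summable (fun n : ℤ => x n * Complex.exp (Complex.I * n * t)) := by
  refine Summable.of_norm ?_
  simpa [norm_exp_I_int] using h

theorem hasDerivAt_fSeries {x : ℤ → ℂ} (h : RapidDecay x) (t : ℝ) :
    HasDerivAt (fSeries x) (fSeries (fun n => Complex.I * n * x n) t) t := by
  have := hasDerivAt_tsum (𝕜 := ℝ) (F := ℂ) (u := fun n : ℤ => ‖Complex.I * n * x n‖)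
    (g := fun (n : ℤ) (t : ℝ) => x n * Complex.exp (Complex.I * n * t))
    (g' := fun (n : ℤ) (t : ℝ) => (Complex.I * n * x n) * Complex.exp (Complex.I * n * t)) (y₀ := 0)
    h.deriv.summable ?_ ?_ (fSeries_summable h.summable 0) t
  · exact this
  · intro n y
    have h1 : HasDerivAt (fun y : ℝ => Complex.I * n * (y : ℂ)) (Complex.I * n) y := by
      simpa using (Complex.ofRealCLM.hasDerivAt (x := y)).const_mul (Complex.I * (n : ℂ))
    have h2 := (h1.cexp).const_mul (x n)
    have h3 : x n * (Complex.exp (Complex.I * n * y) * (Complex.I * n)) =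
        (Complex.I * n * x n) * Complex.exp (Complex.I * n * y) := by ring
    rw [h3] at h2
    exact h2
  · intro n y
    simp only [norm_mul, norm_exp_I_int, mul_one, le_refl]

theorem contDiff_fSeries (k : ℕ) : ∀ {x : ℤ → ℂ}, RapidDecay x → ContDiff ℝ k (fSeries x) := by
  induction k with
  | zero =>
    intro x h
    simp only [Nat.cast_zero, contDiff_zero]
    exact continuous_iff_continuousAt.2 fun t => (hasDerivAt_fSeries h t).continuousAt
  | succ k ih =>
    intro x h
    push_cast
    rw [contDiff_succ_iff_deriv]
    refine ⟨fun t => (hasDerivAt_fSeries h t).differentiableAt, by simp, ?_⟩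
    have : _root_.deriv (fSeries x) = fSeries (fun n => Complex.I * n * x n) :=
      funext fun t => (hasDerivAt_fSeries h t).deriv
    rw [this]
    exact ih h.deriv

/-- In the Fourier basis multiplication by `cos` is half the sum of the two shifts, so the recurrence
for the coefficients is the Mathieu equation. -/
theorem fSeries_isMathieuSol (x : ℤ → ℂ) (hx : RapidDecay x) (b ε : ℝ)
    (hrec : ∀ n : ℤ, (n : ℂ) ^ 2 * x n - (b / 2) * (x (n - 1) + x (n + 1)) = ε * x n) :
    IsMathieuSol b ε (fSeries x) := by
  refine ⟨contDiff_infty.2 fun k => contDiff_fSeries k hx, ?_, ?_⟩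
  · intro t
    unfold fSeries
    congr 1
    funext n
    congr 1
    rw [Complex.exp_eq_exp_iff_exists_int]
    exact ⟨n, by push_cast; ring⟩
  · intro t
    have d1 : _root_.deriv (fSeries x) = fSeries (fun n => Complex.I * n * x n) :=
      funext fun t => (hasDerivAt_fSeries hx t).deriv
    rw [d1, (hasDerivAt_fSeries hx.deriv t).deriv]
    have s0 := fSeries_summable hx.summable t
    have s2 := fSeries_summable hx.deriv.deriv.summable t
    have ep : ∀ n : ℤ, x (n + 1 - 1) * Complex.exp (Complex.I * (n + 1 : ℤ) * t) =
        (x n * Complex.exp (Complex.I * n * t)) * Complex.exp (t * Complex.I) := by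
      intro n
      rw [mul_assoc (x n), ← Complex.exp_add, add_sub_cancel_right]; congr 2
      push_cast; ring
    have em : ∀ n : ℤ, x (n - 1 + 1) * Complex.exp (Complex.I * (n - 1 : ℤ) * t) =
        (x n * Complex.exp (Complex.I * n * t)) * Complex.exp (-t * Complex.I) := by
      intro n
      rw [mul_assoc (x n), ← Complex.exp_add, sub_add_cancel]; congr 2
      push_cast; ring
    have hp : HasSum (fun n : ℤ => x (n - 1) * Complex.exp (Complex.I * n * t))
        (fSeries x t * Complex.exp (t * Complex.I)) := by
      rw [← (Equiv.addRight (1 : ℤ)).hasSum_iff]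
      exact (s0.hasSum.mul_right (Complex.exp (t * Complex.I))).congrX ep
    have hm : HasSum (fun n : ℤ => x (n + 1) * Complex.exp (Complex.I * n * t))
        (fSeries x t * Complex.exp (-t * Complex.I)) := by
      rw [← (Equiv.subRight (1 : ℤ)).hasSum_iff]
      exact (s0.hasSum.mul_right (Complex.exp (-t * Complex.I))).congrX em
    have tot := (s2.hasSum.neg.sub ((hp.add hm).mul_left ((b : ℂ) / 2)))
    have tot2 := s0.hasSum.mul_left (ε : ℂ)
    have := tot.unique (by
      refine tot2.congrX fun n => ?_
      have h := hrec n
      linear_combination (Complex.exp (Complex.I * n * t)) * h - (n : ℂ) ^ 2 * x n *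
        Complex.exp (Complex.I * n * t) * Complex.I_sq)
    have hc : (Real.cos t : ℂ) = (Complex.exp (t * Complex.I) + Complex.exp (-t * Complex.I)) / 2 := by
      rw [Complex.ofReal_cos, Complex.cos]
    rw [hc]
    change -fSeries _ t - _ = _ * fSeries x t at this
    rw [← this]
    ring

/-! ### The space `L²` of the circle -/

instance fact_two_pi_pos : Fact (0 < 2 * π) := ⟨by positivity⟩

/-- The Hilbert space `L²` of the circle of length `2π`, with normalised Haar measure. -/
abbrev CircL2 := Lp ℂ 2 (AddCircle.haarAddCircle (T := 2 * π))

open Classical in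
/-- The `L²` class of a continuous `2π`-periodic function (and `0` for any other function). -/
def circ (v : ℝ → ℂ) : CircL2 :=
  if h : Continuous v ∧ Function.Periodic v (2 * π) then
    ContinuousMap.toLp (E := ℂ) 2 AddCircle.haarAddCircle ℂ
      (⟨h.2.lift, continuous_coinduced_dom.mpr h.1⟩ : C(AddCircle (2 * π), ℂ))
  else 0

theorem circ_eq_toLp (v : ℝ → ℂ) (F : C(AddCircle (2 * π), ℂ)) (h : ∀ t : ℝ, F t = v t) :
    circ v = ContinuousMap.toLp (E := ℂ) 2 AddCircle.haarAddCircle ℂ F := by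
  have h1 : Continuous v := by
    have : v = fun t : ℝ => F t := funext fun t => (h t).symm
    rw [this]
    exact F.continuous.comp (AddCircle.continuous_mk' _)
  have h2 : Function.Periodic v (2 * π) := by
    intro t
    rw [← h, ← h, AddCircle.coe_add_period]
  unfold circ
  rw [dif_pos ⟨h1, h2⟩]
  congr 1
  ext x
  induction x using QuotientAddGroup.induction_on with
  | H t => exact (h t).symm

theorem inner_circ (u v : ℝ → ℂ) (hu : Continuous u) (hup : Function.Periodic u (2 * π))
    (hv : Continuous v) (hvp : Function.Periodic v (2 * π)) :
    ⟪circ u, circ v⟫_ℂ = (1 / (2 * π) : ℝ) * ∫ t in (-π)..π, (starRingEnd ℂ) (u t) * v t := by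
  unfold circ
  rw [dif_pos ⟨hu, hup⟩, dif_pos ⟨hv, hvp⟩, ContinuousMap.inner_toLp,
    AddCircle.integral_haarAddCircle, ← AddCircle.intervalIntegral_preimage (2 * π) (-π)]
  rw [show -π + 2 * π = π by ring, one_div, Complex.real_smul]
  congr 1
  refine intervalIntegral.integral_congr fun t _ => ?_
  simp only [ContinuousMap.coe_mk]
  change v t * (starRingEnd ℂ) (u t) = _
  ring

/-- The exponential `t ↦ exp(i n t)`. -/
def expI (n : ℤ) (t : ℝ) : ℂ := Complex.exp (Complex.I * n * t)

theorem fourier_eq_expI (n : ℤ) (t : ℝ) : fourier (T := 2 * π) n (t : AddCircle (2 * π)) = expI n t := by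
  rw [fourier_coe_apply, expI]
  congr 1
  have : (π : ℂ) ≠ 0 := by exact_mod_cast pi_ne_zero
  push_cast
  field_simp

theorem circ_expI (n : ℤ) : circ (expI n) = fourierLp (T := 2 * π) 2 n :=
  circ_eq_toLp _ _ (fourier_eq_expI n)

theorem circ_fSeries (x : ℤ → ℂ) (hx : Summable fun n => ‖x n‖) (v : CircL2)
    (hv : ∀ n, ⟪circ (expI n), v⟫_ℂ = x n) : circ (fSeries x) = v := by
  have hs : Summable (fun n : ℤ => x n • fourier (T := 2 * π) n) := by
    refine Summable.of_norm ?_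
    simpa [norm_smul, fourier_norm] using hx
  have hF : ∀ t : ℝ, (∑' n : ℤ, x n • fourier (T := 2 * π) n) (t : AddCircle (2 * π)) = fSeries x t := by
    intro t
    rw [← ContinuousMap.tsum_apply hs]
    refine tsum_congr fun n => ?_
    rw [ContinuousMap.smul_apply, fourier_eq_expI]
    rfl
  rw [circ_eq_toLp _ _ hF]
  have h1 := (ContinuousMap.toLp (E := ℂ) 2 (AddCircle.haarAddCircle (T := 2 * π)) ℂ).hasSum hs.hasSum
  have h2 := (fourierBasis (T := 2 * π)).hasSum_repr v
  refine h1.unique ?_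
  convert h2 using 1
  funext n
  rw [(fourierBasis (T := 2 * π)).repr_apply_apply, coe_fourierBasis, ← circ_expI, hv,
    circ_expI]
  simp

theorem circ_expI_orthonormal : Orthonormal ℂ (fun n : ℤ => circ (expI n)) := by
  have := orthonormal_fourier (T := 2 * π)
  convert this using 1
  funext n
  exact circ_expI n

theorem circ_expI_total (u : CircL2) (h : ∀ n, ⟪circ (expI n), u⟫_ℂ = 0) : u = 0 := by
  have h2 := (fourierBasis (T := 2 * π)).hasSum_repr u
  refine h2.unique ?_
  convert hasSum_zero using 1
  funext n
  rw [(fourierBasis (T := 2 * π)).repr_apply_apply, coe_fourierBasis, ← circ_expI, h, zero_smul]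

/-! ### Integration by parts and the Mathieu form -/

/-- Smooth `2π`-periodic functions on the line. -/
def SmoothPer (v : ℝ → ℂ) : Prop := ContDiff ℝ (⊤ : ℕ∞) v ∧ Function.Periodic v (2 * π)

theorem SmoothPer.continuous {v : ℝ → ℂ} (h : SmoothPer v) : Continuous v := h.1.continuous

theorem SmoothPer.differentiable {v : ℝ → ℂ} (h : SmoothPer v) : Differentiable ℝ v :=
  h.1.differentiable (by simp)

theorem SmoothPer.deriv {v : ℝ → ℂ} (h : SmoothPer v) : SmoothPer (deriv v) := by
  refine ⟨(contDiff_infty_iff_deriv.1 h.1).2, fun t => ?_⟩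
  have : (fun s => v (s + 2 * π)) = v := funext h.2
  rw [← deriv_comp_add_const, this]

theorem SmoothPer.const_mul {v : ℝ → ℂ} (h : SmoothPer v) (c : ℂ) : SmoothPer (fun t => c * v t) :=
  ⟨contDiff_const.mul h.1, fun t => by beta_reduce; rw [h.2]⟩

theorem SmoothPer.add {u v : ℝ → ℂ} (hu : SmoothPer u) (h : SmoothPer v) :
    SmoothPer (fun t => u t + v t) :=
  ⟨hu.1.add h.1, fun t => by beta_reduce; rw [h.2, hu.2]⟩

theorem SmoothPer.cos_mul {v : ℝ → ℂ} (h : SmoothPer v) :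
    SmoothPer (fun t => (Real.cos t : ℂ) * v t) :=
  ⟨(Complex.ofRealCLM.contDiff.comp Real.contDiff_cos).mul h.1, fun t => by beta_reduce; rw [h.2, Real.cos_add_two_pi]⟩

theorem smoothPer_expI (n : ℤ) : SmoothPer (expI n) := by
  refine ⟨?_, fun t => ?_⟩
  · unfold expI
    exact ((contDiff_const.mul Complex.ofRealCLM.contDiff).cexp)
  · unfold expI
    rw [Complex.exp_eq_exp_iff_exists_int]
    exact ⟨n, by push_cast; ring⟩

theorem deriv_expI (n : ℤ) : deriv (expI n) = fun t => Complex.I * n * expI n t := by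
  funext y
  have h1 : HasDerivAt (fun y : ℝ => Complex.I * n * (y : ℂ)) (Complex.I * n) y := by
    simpa using (Complex.ofRealCLM.hasDerivAt (x := y)).const_mul (Complex.I * (n : ℂ))
  have h2 := (h1.cexp).deriv
  unfold expI
  rw [h2]; ring

theorem IsMathieuSol.smoothPer {b e : ℝ} {g : ℝ → ℂ} (h : IsMathieuSol b e g) : SmoothPer g :=
  ⟨h.1, h.2.1⟩

/-- The (unnormalised) `L²` inner product of functions on `[-π, π]`. -/
def ip (u v : ℝ → ℂ) : ℂ := ∫ t in (-π)..π, (starRingEnd ℂ) (u t) * v t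

theorem ip_self (u : ℝ → ℂ) : ip u u = ((∫ t in (-π)..π, ‖u t‖ ^ 2 : ℝ) : ℂ) := by
  rw [ip, ← intervalIntegral.integral_ofReal]
  refine intervalIntegral.integral_congr fun t _ => ?_
  simp only [Complex.conj_mul']
  push_cast; rfl

theorem ip_intervalIntegrable {u v : ℝ → ℂ} (hu : Continuous u) (hv : Continuous v) :
    IntervalIntegrable (fun t => (starRingEnd ℂ) (u t) * v t) volume (-π) π :=
  ((Complex.continuous_conj.comp hu).mul hv).intervalIntegrable _ _

theorem ip_deriv {u v : ℝ → ℂ} (hu : SmoothPer u) (hv : SmoothPer v) :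
    ip u (deriv v) = - ip (deriv u) v := by
  have h1 : ∀ t, HasDerivAt (fun t => (starRingEnd ℂ) (u t)) ((starRingEnd ℂ) (deriv u t)) t := by
    intro t
    exact Complex.conjCLE.toContinuousLinearMap.hasFDerivAt.comp_hasDerivAt t
      (hu.differentiable t).hasDerivAt
  have := intervalIntegral.integral_mul_deriv_eq_deriv_mul (a := -π) (b := π)
    (fun t _ => h1 t) (fun t _ => (hv.differentiable t).hasDerivAt)
    ((Complex.continuous_conj.comp hu.deriv.continuous).intervalIntegrable _ _)
    (hv.deriv.continuous.intervalIntegrable _ _)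
  unfold ip
  rw [this]
  have e1 : u π = u (-π) := by rw [← hu.2 (-π)]; congr 1; ring
  have e2 : v π = v (-π) := by rw [← hv.2 (-π)]; congr 1; ring
  rw [e1, e2]; ring

theorem ip_add_right {u v w : ℝ → ℂ} (hu : Continuous u) (hv : Continuous v) (hw : Continuous w) :
    ip u (fun t => v t + w t) = ip u v + ip u w := by
  unfold ip
  rw [← intervalIntegral.integral_add (ip_intervalIntegrable hu hv) (ip_intervalIntegrable hu hw)]
  simp only [mul_add]

theorem ip_mul_right (u v : ℝ → ℂ) (c : ℂ) : ip u (fun t => c * v t) = c * ip u v := by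
  unfold ip
  rw [← intervalIntegral.integral_const_mul]
  congr 1; funext t; ring

theorem ip_mul_left (u v : ℝ → ℂ) (c : ℂ) :
    ip (fun t => c * u t) v = (starRingEnd ℂ) c * ip u v := by
  unfold ip
  rw [← intervalIntegral.integral_const_mul]
  congr 1; funext t; simp only [map_mul]; ring

theorem inner_circ_eq_ip {u v : ℝ → ℂ} (hu : SmoothPer u) (hv : SmoothPer v) :
    ⟪circ u, circ v⟫_ℂ = (1 / (2 * π) : ℝ) * ip u v :=
  inner_circ u v hu.continuous hu.2 hv.continuous hv.2

theorem ip_neg_deriv2 {u v : ℝ → ℂ} (hu : SmoothPer u) (hv : SmoothPer v) :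
    ip u (deriv (deriv v)) = ip (deriv (deriv u)) v := by
  rw [ip_deriv hu hv.deriv, ip_deriv hu.deriv hv, neg_neg]

theorem ip_expI_deriv2 (n : ℤ) {v : ℝ → ℂ} (hv : SmoothPer v) :
    ip (expI n) (deriv (deriv v)) = - (n : ℂ) ^ 2 * ip (expI n) v := by
  have h0 := ip_deriv (smoothPer_expI n) hv.deriv
  have h1 := ip_deriv (smoothPer_expI n) hv
  rw [h0, deriv_expI, ip_mul_left, h1, deriv_expI, ip_mul_left]
  simp only [map_mul, Complex.conj_I, map_intCast]
  linear_combination (n : ℂ) ^ 2 * ip (expI n) v * Complex.I_sq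

theorem ip_expI_cos (n : ℤ) {v : ℝ → ℂ} (hv : SmoothPer v) :
    ip (expI n) (fun t => (Real.cos t : ℂ) * v t) =
      (1 / 2) * (ip (expI (n - 1)) v + ip (expI (n + 1)) v) := by
  unfold ip
  rw [← intervalIntegral.integral_add
    (ip_intervalIntegrable (smoothPer_expI _).continuous hv.continuous)
    (ip_intervalIntegrable (smoothPer_expI _).continuous hv.continuous),
    ← intervalIntegral.integral_const_mul]
  congr 1; funext t; beta_reduce
  have hc : (Real.cos t : ℂ) = (Complex.exp (t * Complex.I) + Complex.exp (-t * Complex.I)) / 2 := by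
    rw [Complex.ofReal_cos, Complex.cos]
  have e1 : expI (n - 1) t = expI n t * Complex.exp (-t * Complex.I) := by
    unfold expI; rw [← Complex.exp_add]; congr 1; push_cast; ring
  have e2 : expI (n + 1) t = expI n t * Complex.exp (t * Complex.I) := by
    unfold expI; rw [← Complex.exp_add]; congr 1; push_cast; ring
  rw [e1, e2, hc]
  simp only [map_mul, ← Complex.exp_conj, map_neg, Complex.conj_ofReal, Complex.conj_I]
  have e3 : (-(t:ℂ)) * -Complex.I = t * Complex.I := by ring
  have e4 : (t:ℂ) * -Complex.I = -t * Complex.I := by ring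
  rw [e3, e4]; ring

/-- The Mathieu operator shifted by `C`, applied to `v`. -/
def mathieuOp (b C : ℝ) (v : ℝ → ℂ) (t : ℝ) : ℂ :=
  (C * v t + (-1) * deriv (deriv v) t) + (-b) * (Real.cos t * v t)

theorem smoothPer_y (C : ℝ) {v : ℝ → ℂ} (hv : SmoothPer v) :
    SmoothPer (fun t => C * v t + (-1) * deriv (deriv v) t) :=
  (hv.const_mul _).add (hv.deriv.deriv.const_mul _)

theorem smoothPer_mathieuOp (b C : ℝ) {v : ℝ → ℂ} (hv : SmoothPer v) :
    SmoothPer (mathieuOp b C v) :=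
  (smoothPer_y C hv).add (hv.cos_mul.const_mul _)

theorem ip_mathieuOp (b C : ℝ) {u v : ℝ → ℂ} (hu : SmoothPer u) (hv : SmoothPer v) :
    ip u (mathieuOp b C v) = C * ip u v + (-1) * ip u (deriv (deriv v)) +
      (-b) * ip u (fun t => (Real.cos t : ℂ) * v t) := by
  unfold mathieuOp
  rw [ip_add_right hu.continuous (smoothPer_y C hv).continuous (hv.cos_mul.const_mul _).continuous,
    ip_add_right hu.continuous (hv.const_mul _).continuous (hv.deriv.deriv.const_mul _).continuous,
    ip_mul_right, ip_mul_right, ip_mul_right]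

/-- The quadratic form of the Mathieu operator. -/
def mForm (b : ℝ) (v : ℝ → ℂ) : ℝ :=
  ∫ t in (-π)..π, (‖deriv v t‖ ^ 2 - b * Real.cos t * ‖v t‖ ^ 2)

theorem ip_self_mathieuOp (b C : ℝ) {v : ℝ → ℂ} (hv : SmoothPer v) :
    ip v (mathieuOp b C v) = ((C * (∫ t in (-π)..π, ‖v t‖ ^ 2) + mForm b v : ℝ) : ℂ) := by
  have c1 := hv.continuous
  have c2 := hv.deriv.continuous
  rw [ip_mathieuOp b C hv hv, ip_deriv hv hv.deriv, ip_self, ip_self, mForm,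
    intervalIntegral.integral_sub (Continuous.intervalIntegrable (by fun_prop) _ _)
      (Continuous.intervalIntegrable (by fun_prop) _ _)]
  have : ip v (fun t => (Real.cos t : ℂ) * v t) = ((∫ t in (-π)..π, Real.cos t * ‖v t‖ ^ 2 : ℝ) : ℂ) := by
    rw [ip, ← intervalIntegral.integral_ofReal]
    refine intervalIntegral.integral_congr fun t _ => ?_
    have := Complex.conj_mul' (v t)
    push_cast
    linear_combination (Complex.cos t) * this
  rw [this]
  have : (∫ t in (-π)..π, b * Real.cos t * ‖v t‖ ^ 2) = b * ∫ t in (-π)..π, Real.cos t * ‖v t‖ ^ 2 := by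
    rw [← intervalIntegral.integral_const_mul]; congr 1; funext t; ring
  rw [this]
  push_cast; ring

/-- `M_b ≥ -b`, because `cos ≤ 1`. -/
theorem mForm_lower (b : ℝ) (hb : 0 ≤ b) {v : ℝ → ℂ} (hv : SmoothPer v) :
    - b * (∫ t in (-π)..π, ‖v t‖ ^ 2) ≤ mForm b v := by
  have c1 := hv.continuous
  have c2 := hv.deriv.continuous
  rw [mForm, ← intervalIntegral.integral_const_mul]
  refine intervalIntegral.integral_mono_on (by linarith [pi_pos])
    (Continuous.intervalIntegrable (by fun_prop) _ _)
    (Continuous.intervalIntegrable (by fun_prop) _ _) fun t _ => ?_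
  have h1 : b * Real.cos t * ‖v t‖ ^ 2 ≤ b * 1 * ‖v t‖ ^ 2 := by
    gcongr; exact Real.cos_le_one t
  nlinarith [sq_nonneg ‖deriv v t‖]

theorem integral_norm_sq_eq_zero {v : ℝ → ℂ} (hv : SmoothPer v)
    (h : (∫ t in (-π)..π, ‖v t‖ ^ 2) ≤ 0) : v = 0 := by
  have hc : Continuous (fun t => ‖v t‖ ^ 2) := by have := hv.continuous; fun_prop
  have hz : ∀ t ∈ Set.Icc (-π) π, v t = 0 := by
    by_contra! hcon
    obtain ⟨t, ht, hne⟩ := hcon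
    have := intervalIntegral.integral_pos (a := -π) (b := π) (by linarith [pi_pos]) hc.continuousOn
      (fun x _ => by positivity) ⟨t, ht, by positivity⟩
    linarith
  funext t
  obtain ⟨y, hy, hty⟩ := hv.2.exists_mem_Ico (by positivity) t (-π)
  rw [hty]
  exact hz y ⟨hy.1, by linarith [hy.2]⟩

/-! ### Eigenfunctions below `a` -/

/-- An `L²(-π,π)`-orthonormal family of Mathieu eigenfunctions with eigenvalues below `a`
that exhausts the part of the form of `M_b - a` below zero. -/
structure MathieuFamily (a b : ℝ) {m : ℕ} (g : Fin m → ℝ → ℂ) (e : Fin m → ℝ) : Prop where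
  lt : ∀ j, e j < a
  sol : ∀ j, IsMathieuSol b (e j) (g j)
  orth : ∀ i j, ip (g i) (g j) = if i = j then 1 else 0
  bound : ∀ v, SmoothPer v →
    a * (∫ t in (-π)..π, ‖v t‖ ^ 2) - ∑ j, (a - e j) * ‖ip (g j) v‖ ^ 2 ≤ mForm b v

theorem IsMathieuSol.mathieuOp {b e : ℝ} {g : ℝ → ℂ} (h : IsMathieuSol b e g) (C : ℝ) :
    mathieuOp b C g = fun t => ((C + e : ℝ) : ℂ) * g t := by
  funext t
  have := h.2.2 t
  unfold _root_.mathieuOp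
  push_cast
  push_cast at this
  linear_combination this

theorem IsMathieuSol.mForm {b e : ℝ} {g : ℝ → ℂ} (h : IsMathieuSol b e g) :
    mForm b g = e * ∫ t in (-π)..π, ‖g t‖ ^ 2 := by
  have h1 := ip_self_mathieuOp b 0 h.smoothPer
  rw [h.mathieuOp 0, ip_mul_right, ip_self] at h1
  have h2 : ((0 + e) * (∫ t in (-π)..π, ‖g t‖ ^ 2) : ℝ) =
    0 * (∫ t in (-π)..π, ‖g t‖ ^ 2) + _root_.mForm b g := by exact_mod_cast h1
  linarith

theorem norm_circ_sq {v : ℝ → ℂ} (hv : SmoothPer v) :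
    ‖circ v‖ ^ 2 = (1 / (2 * π)) * ∫ t in (-π)..π, ‖v t‖ ^ 2 := by
  have h := inner_circ_eq_ip hv hv
  rw [inner_self_eq_norm_sq_to_K, ip_self] at h
  change ((‖circ v‖ : ℝ) : ℂ) ^ 2 = _ at h
  exact_mod_cast h

/-- The spectral bound for the compact operator `(M_b + C)⁻¹` at the threshold `(a + C)⁻¹`, translated
back to `M_b`. Eigenvectors of the inverse are smooth Mathieu solutions because their Fourier
coefficients satisfy the recurrence. -/
theorem exists_mathieuFamily (a b : ℝ) (hb : 0 ≤ b) :
    ∃ (m : ℕ) (g : Fin m → ℝ → ℂ) (e : Fin m → ℝ), MathieuFamily a b g e := by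
  obtain ⟨C, hbC, hC, T, hTs, hTc, hTinv, hTeig⟩ := exists_jacobi_resolvent
    (fun n : ℤ => circ (expI n)) circ_expI_orthonormal circ_expI_total b hb
  rcases le_or_gt (a + C) 0 with hac | hac
  -- here `a ≤ -C ≤ -b ≤ M_b`, and there is nothing to split off
  · refine ⟨0, Fin.elim0, Fin.elim0, ⟨fun j => j.elim0, fun j => j.elim0, fun j => j.elim0, ?_⟩⟩
    intro v hv
    have h1 := mForm_lower b hb hv
    have h2 : 0 ≤ ∫ t in (-π)..π, ‖v t‖ ^ 2 :=
      intervalIntegral.integral_nonneg (by linarith [pi_pos]) fun t _ => by positivity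
    simp only [Finset.univ_eq_empty, Finset.sum_empty, sub_zero]
    nlinarith
  -- the inverse maps the shifted Mathieu expression of `v` back to `v`
  have hT : ∀ v, SmoothPer v → T (circ (mathieuOp b C v)) = circ v := by
    intro v hv
    refine hTinv (circ v) (circ (fun t => C * v t + (-1) * deriv (deriv v) t)) _ ?_ ?_
    · intro n
      rw [inner_circ_eq_ip (smoothPer_expI n) (smoothPer_y C hv),
        inner_circ_eq_ip (smoothPer_expI n) hv,
        ip_add_right (smoothPer_expI n).continuous (hv.const_mul _).continuous
          (hv.deriv.deriv.const_mul _).continuous, ip_mul_right, ip_mul_right,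
        ip_expI_deriv2 n hv]
      ring
    · intro n
      rw [inner_circ_eq_ip (smoothPer_expI n) (smoothPer_y C hv),
        inner_circ_eq_ip (smoothPer_expI n) (smoothPer_mathieuOp b C hv),
        inner_circ_eq_ip (smoothPer_expI _) hv, inner_circ_eq_ip (smoothPer_expI _) hv,
        ip_mathieuOp b C (smoothPer_expI n) hv,
        ip_add_right (smoothPer_expI n).continuous (hv.const_mul _).continuous
          (hv.deriv.deriv.const_mul _).continuous, ip_mul_right, ip_mul_right,
        ip_expI_cos n hv]
      ring
  -- eigenvectors are smooth solutions
  have hreg : ∀ (x : CircL2) (μ : ℝ), μ ≠ 0 → T x = (μ : ℂ) • x →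
      ∃ g, IsMathieuSol b (μ⁻¹ - C) g ∧ circ g = x := by
    intro x μ hμ hx
    have hrec := hTeig x μ hx
    set c : ℤ → ℂ := fun n => ⟪circ (expI n), x⟫_ℂ with hc
    have hμ' : (μ : ℂ) ≠ 0 := by exact_mod_cast hμ
    have hrec' : ∀ n : ℤ, (n : ℂ) ^ 2 * c n - (b / 2) * (c (n - 1) + c (n + 1)) =
        ((μ⁻¹ - C : ℝ) : ℂ) * c n := by
      intro n
      have := hrec n
      change c n = μ * (((n : ℂ) ^ 2 + C) * c n - (b / 2) * (c (n - 1) + c (n + 1))) at this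
      push_cast
      have h2 : (μ : ℂ)⁻¹ * c n = ((n : ℂ) ^ 2 + C) * c n - (b / 2) * (c (n - 1) + c (n + 1)) := by
        rw [this, ← mul_assoc, inv_mul_cancel₀ hμ', one_mul, ← this]
      linear_combination -h2
    have hbd : ∀ n, ‖c n‖ ≤ ‖x‖ := by
      intro n
      refine (norm_inner_le_norm _ _).trans ?_
      rw [circ_expI_orthonormal.1 n, one_mul]
    have hrd := rapidDecay_of_recurrence c ‖x‖ hbd b _ hrec'
    exact ⟨fSeries c, fSeries_isMathieuSol c hrd b _ hrec', circ_fSeries c hrd.summable x fun n => rfl⟩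
  have hpos : ∀ (μ : ℝ) (x : CircL2), x ≠ 0 → T x = (μ : ℂ) • x → 0 ≤ μ := by
    intro μ x hx0 hx
    by_contra! hneg
    obtain ⟨g, hg, hgx⟩ := hreg x μ hneg.ne hx
    have h1 := mForm_lower b hb hg.smoothPer
    rw [hg.mForm] at h1
    have h2 : 0 ≤ ∫ t in (-π)..π, ‖g t‖ ^ 2 :=
      intervalIntegral.integral_nonneg (by linarith [pi_pos]) fun t _ => by positivity
    have h3 : μ⁻¹ < 0 := inv_lt_zero.2 hneg
    have h4 : (∫ t in (-π)..π, ‖g t‖ ^ 2) ≤ 0 := by nlinarith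
    have h5 := norm_circ_sq hg.smoothPer
    rw [le_antisymm h4 h2, mul_zero, hgx] at h5
    exact hx0 (by simpa using h5)
  obtain ⟨m, x, μ, hon, hx, hbound⟩ := compact_spectral_bound T hTs hTc (a + C)⁻¹ (inv_pos.2 hac) hpos
  have hμ0 : ∀ j, 0 < μ j := fun j => (inv_pos.2 hac).trans (hx j).1
  choose G hG hGx using fun j => hreg (x j) (μ j) (hμ0 j).ne' (hx j).2
  have h2π : 0 < 2 * π := by positivity
  -- `CircL2` carries the normalised measure, `ip` the Lebesgue measure on `[-π, π]`
  set s : ℝ := (Real.sqrt (2 * π))⁻¹ with hs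
  have hs2 : s ^ 2 = 1 / (2 * π) := by rw [hs, inv_pow, Real.sq_sqrt h2π.le, one_div]
  have hs2' : (s : ℂ) ^ 2 = ((1 / (2 * π) : ℝ) : ℂ) := by rw [← hs2]; push_cast; ring
  have hsm : ∀ j, SmoothPer (fun t => (s : ℂ) * G j t) := fun j => (hG j).smoothPer.const_mul _
  refine ⟨m, fun j t => (s : ℂ) * G j t, fun j => (μ j)⁻¹ - C, ⟨?_, ?_, ?_, ?_⟩⟩
  · intro j
    have := (inv_lt_comm₀ hac (hμ0 j)).1 (hx j).1
    linarith
  · intro j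
    refine ⟨(hsm j).1, (hsm j).2, fun t => ?_⟩
    have hd : deriv (fun t => (s : ℂ) * G j t) = fun t => (s : ℂ) * deriv (G j) t := by
      funext t; exact deriv_const_mul _ ((hG j).smoothPer.differentiable t)
    have hd2 : deriv (fun t => (s : ℂ) * deriv (G j) t) = fun t => (s : ℂ) * deriv (deriv (G j)) t := by
      funext t; exact deriv_const_mul _ ((hG j).smoothPer.deriv.differentiable t)
    rw [hd, hd2]
    have := (hG j).2.2 t
    linear_combination (s : ℂ) * this
  · intro i j
    rw [ip_mul_left, ip_mul_right, Complex.conj_ofReal]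
    have h1 := inner_circ_eq_ip (hG i).smoothPer (hG j).smoothPer
    rw [hGx, hGx, orthonormal_iff_ite.1 hon i j, ← hs2'] at h1
    rw [h1]; ring
  · intro v hv
    have h1 := hbound (circ (mathieuOp b C v))
    rw [hT v hv, inner_circ_eq_ip hv (smoothPer_mathieuOp b C hv), ip_self_mathieuOp b C hv,
      norm_circ_sq hv, inv_inv] at h1
    rw [← Complex.ofReal_mul, Complex.ofReal_re] at h1
    have h3 : ∀ j, ‖⟪x j, circ v⟫_ℂ‖ ^ 2 = (1 / (2 * π)) * ‖ip (fun t => (s : ℂ) * G j t) v‖ ^ 2 := by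
      intro j
      rw [← hGx j, inner_circ_eq_ip (hG j).smoothPer hv, ip_mul_left, ← hs2', Complex.conj_ofReal]
      rw [norm_mul, norm_mul, norm_pow, Complex.norm_real, ← hs2, Real.norm_eq_abs, sq_abs,
        mul_pow, mul_pow, sq_abs]
      ring
    simp only [h3] at h1
    have h4 : ∑ j, (a + C - (μ j)⁻¹) * (1 / (2 * π) * ‖ip (fun t => (s : ℂ) * G j t) v‖ ^ 2) =
        1 / (2 * π) * ∑ j, (a - ((μ j)⁻¹ - C)) * ‖ip (fun t => (s : ℂ) * G j t) v‖ ^ 2 := by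
      rw [Finset.mul_sum]
      refine Finset.sum_congr rfl fun j _ => ?_
      ring
    rw [h4] at h1
    have h5 : (0 : ℝ) < 1 / (2 * π) := by positivity
    refine le_of_mul_le_mul_left ?_ h5
    linarith

/-! ### Multiplicities and the sum over eigenvalues -/

theorem ip_conj_symm (u v : ℝ → ℂ) : (starRingEnd ℂ) (ip u v) = ip v u := by
  unfold ip
  rw [← intervalIntegral.intervalIntegral_conj]
  congr 1; funext t
  simp [mul_comm]

theorem ip_add_left {u v w : ℝ → ℂ} (hu : Continuous u) (hv : Continuous v) (hw : Continuous w) :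
    ip (fun t => v t + w t) u = ip v u + ip w u := by
  rw [← ip_conj_symm, ip_add_right hu hv hw, map_add, ip_conj_symm, ip_conj_symm]

theorem MathieuFamily.bessel {a b : ℝ} {m : ℕ} {g : Fin m → ℝ → ℂ} {e : Fin m → ℝ}
    (h : MathieuFamily a b g e) {w : ℝ → ℂ} (hw : SmoothPer w) :
    ∑ j, ‖ip (g j) w‖ ^ 2 ≤ ∫ t in (-π)..π, ‖w t‖ ^ 2 := by
  have h2π : 0 < 2 * π := by positivity
  set s : ℝ := Real.sqrt (2 * π) with hs
  have hs2 : s ^ 2 = 2 * π := Real.sq_sqrt h2π.le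
  have hs2' : (s : ℂ) ^ 2 = ((2 * π : ℝ) : ℂ) := by rw [← hs2]; push_cast; ring
  have hsm : ∀ j, SmoothPer (fun t => (s : ℂ) * g j t) := fun j => (h.sol j).smoothPer.const_mul _
  have hne : ((2 * π : ℝ) : ℂ) ≠ 0 := by exact_mod_cast h2π.ne'
  have hon : Orthonormal ℂ (fun j => circ (fun t => (s : ℂ) * g j t)) := by
    rw [orthonormal_iff_ite]
    intro i j
    rw [inner_circ_eq_ip (hsm i) (hsm j), ip_mul_left, ip_mul_right, h.orth i j, Complex.conj_ofReal]
    rw [← mul_assoc, ← mul_assoc, mul_assoc _ (s : ℂ) (s : ℂ), ← pow_two, hs2',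
      ← Complex.ofReal_mul, one_div_mul_cancel h2π.ne', Complex.ofReal_one, one_mul]
  have := hon.sum_inner_products_le (circ w) (s := Finset.univ)
  rw [norm_circ_sq hw] at this
  have h3 : ∀ j, ‖⟪circ (fun t => (s : ℂ) * g j t), circ w⟫_ℂ‖ ^ 2 = (1 / (2 * π)) * ‖ip (g j) w‖ ^ 2 := by
    intro j
    rw [inner_circ_eq_ip (hsm j) hw, ip_mul_left, Complex.conj_ofReal, norm_mul, norm_mul,
      Complex.norm_real, Complex.norm_real, mul_pow, mul_pow, Real.norm_eq_abs, Real.norm_eq_abs,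
      sq_abs, sq_abs, hs2]
    field_simp
  simp only [h3] at this
  rw [← Finset.mul_sum] at this
  exact le_of_mul_le_mul_left this (by positivity)

/-- The space of `2π`-periodic solutions is a linear subspace. -/
def solSpace (b e : ℝ) : Submodule ℂ (ℝ → ℂ) where
  carrier := {g | IsMathieuSol b e g}
  zero_mem' := by
    refine ⟨contDiff_const, fun t => rfl, fun t => ?_⟩
    have : deriv (0 : ℝ → ℂ) = 0 := by funext t; simp
    rw [this, this]; simp
  add_mem' := by
    intro u v hu hv
    have d1 : deriv (u + v) = deriv u + deriv v := by
      funext t; exact deriv_add (hu.smoothPer.differentiable t) (hv.smoothPer.differentiable t)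
    have d2 : deriv (deriv u + deriv v) = deriv (deriv u) + deriv (deriv v) := by
      funext t
      exact deriv_add (hu.smoothPer.deriv.differentiable t) (hv.smoothPer.deriv.differentiable t)
    refine ⟨hu.1.add hv.1, hu.2.1.add hv.2.1, fun t => ?_⟩
    rw [d1, d2]
    have h1 := hu.2.2 t
    have h2 := hv.2.2 t
    simp only [Pi.add_apply]
    linear_combination h1 + h2
  smul_mem' := by
    intro c u hu
    have d1 : deriv (c • u) = c • deriv u := by
      funext t; exact deriv_const_smul c (hu.smoothPer.differentiable t)
    have d2 : deriv (c • deriv u) = c • deriv (deriv u) := by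
      funext t; exact deriv_const_smul c (hu.smoothPer.deriv.differentiable t)
    refine ⟨contDiff_const.smul hu.1, fun t => by simp [hu.2.1 t], fun t => ?_⟩
    rw [d1, d2]
    have h1 := hu.2.2 t
    simp only [Pi.smul_apply, smul_eq_mul]
    linear_combination c * h1

theorem mem_solSpace {b e : ℝ} {g : ℝ → ℂ} : g ∈ solSpace b e ↔ IsMathieuSol b e g := Iff.rfl

theorem mathieuMult_eq (b e : ℝ) : mathieuMult b e = Module.finrank ℂ (solSpace b e) := by
  unfold mathieuMult
  have : {g : ℝ → ℂ | IsMathieuSol b e g} = (solSpace b e : Set (ℝ → ℂ)) := rfl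
  rw [this, Submodule.span_eq]

/-- Symmetry of the Mathieu operator: solutions for different eigenvalues are orthogonal. -/
theorem ip_eq_zero_of_ne {b e e' : ℝ} {u v : ℝ → ℂ} (hu : IsMathieuSol b e u)
    (hv : IsMathieuSol b e' v) (hne : e ≠ e') : ip u v = 0 := by
  have h1 := ip_mathieuOp b 0 hu.smoothPer hv.smoothPer
  have h2 := ip_mathieuOp b 0 hv.smoothPer hu.smoothPer
  rw [hv.mathieuOp 0, ip_mul_right] at h1
  rw [hu.mathieuOp 0, ip_mul_right] at h2
  have h3 := congrArg (starRingEnd ℂ) h2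
  simp only [map_add, map_mul, map_neg, map_one, Complex.conj_ofReal, ip_conj_symm] at h3
  rw [← ip_neg_deriv2 hu.smoothPer hv.smoothPer] at h3
  have h4 : ip (fun t => (Real.cos t : ℂ) * u t) v = ip u (fun t => (Real.cos t : ℂ) * v t) := by
    unfold ip
    congr 1; funext t
    simp only [map_mul, Complex.conj_ofReal]; ring
  rw [h4, ← h1] at h3
  have h5 : ((e : ℂ) - e') * ip u v = 0 := by
    push_cast at h3
    linear_combination h3
  rcases mul_eq_zero.1 h5 with h | h
  · exact absurd (by exact_mod_cast sub_eq_zero.1 h) hne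
  · exact h

theorem ip_sum_right {ι : Type*} (s : Finset ι) {u : ℝ → ℂ} (hu : Continuous u) (v : ι → ℝ → ℂ)
    (hv : ∀ i, Continuous (v i)) : ip u (∑ i ∈ s, v i) = ∑ i ∈ s, ip u (v i) := by
  unfold ip
  rw [← intervalIntegral.integral_finsetSum fun i _ => ip_intervalIntegrable hu (hv i)]
  simp only [Finset.sum_apply, Finset.mul_sum]

section
variable {a b : ℝ} {m : ℕ} {g : Fin m → ℝ → ℂ} {e : Fin m → ℝ}

/-- A solution `v` with eigenvalue `ε < a` orthogonal to the family would satisfy `a ‖v‖² ≤ ε ‖v‖²`. -/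
theorem MathieuFamily.eq_zero_of_orth (h : MathieuFamily a b g e) {ε : ℝ} (hε : ε < a) {v : ℝ → ℂ}
    (hv : IsMathieuSol b ε v) (h0 : ∀ j, ip (g j) v = 0) : v = 0 := by
  have h1 := h.bound v hv.smoothPer
  rw [hv.mForm] at h1
  simp only [h0, norm_zero, ne_eq, OfNat.ofNat_ne_zero, not_false_eq_true, zero_pow, mul_zero,
    Finset.sum_const_zero, sub_zero] at h1
  refine integral_norm_sq_eq_zero hv.smoothPer ?_
  by_contra! hc
  nlinarith

/-- The members of the family with eigenvalue `ε` span the space of Mathieu solutions for `ε`. -/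
theorem MathieuFamily.sol_eq (h : MathieuFamily a b g e) {ε : ℝ} (hε : ε < a) {v : ℝ → ℂ}
    (hv : IsMathieuSol b ε v) : v = ∑ j ∈ Finset.univ.filter (fun j => e j = ε), ip (g j) v • g j := by
  have hmem : v - ∑ j ∈ Finset.univ.filter (fun j => e j = ε), ip (g j) v • g j ∈ solSpace b ε := by
    refine Submodule.sub_mem _ hv (Submodule.sum_mem _ fun j hj => Submodule.smul_mem _ _ ?_)
    have := (Finset.mem_filter.1 hj).2
    have h2 := h.sol j
    rw [this] at h2; exact h2
  rw [← sub_eq_zero]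
  refine h.eq_zero_of_orth hε hmem fun i => ?_
  by_cases hi : e i = ε
  · have e1 : v - ∑ j ∈ Finset.univ.filter (fun j => e j = ε), ip (g j) v • g j =
        fun t => v t + (-1 : ℂ) * (∑ j ∈ Finset.univ.filter (fun j => e j = ε), ip (g j) v • g j) t := by
      funext t; simp only [Pi.sub_apply]; ring
    have cg : ∀ j, Continuous (g j) := fun j => (h.sol j).smoothPer.continuous
    have cs : Continuous (∑ j ∈ Finset.univ.filter (fun j => e j = ε), ip (g j) v • g j) := by
      rw [Finset.sum_fn]
      exact continuous_finsetSum _ fun j _ => (cg j).const_smul (ip (g j) v)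
    have cs2 : Continuous (fun t => (-1 : ℂ) *
        (∑ j ∈ Finset.univ.filter (fun j => e j = ε), ip (g j) v • g j) t) := continuous_const.mul cs
    rw [e1, ip_add_right (cg i) hv.smoothPer.continuous cs2, ip_mul_right,
      ip_sum_right _ (cg i) _ fun j => (cg j).const_smul _]
    have : ∀ j, ip (g i) (ip (g j) v • g j) = ip (g j) v * if i = j then 1 else 0 := by
      intro j
      rw [← h.orth i j, ← ip_mul_right]; rfl
    simp only [this, mul_ite, mul_one, mul_zero]
    rw [Finset.sum_ite_eq, if_pos (by simp [hi])]
    ring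
  · exact ip_eq_zero_of_ne (h.sol i) hmem hi

theorem MathieuFamily.linearIndependent (h : MathieuFamily a b g e) : LinearIndependent ℂ g := by
  rw [Fintype.linearIndependent_iff]
  intro c hc i
  have cg : ∀ j, Continuous (g j) := fun j => (h.sol j).smoothPer.continuous
  have h1 := ip_sum_right Finset.univ (cg i) (fun j => c j • g j) fun j => (cg j).const_smul _
  rw [hc] at h1
  have : ∀ j, ip (g i) (c j • g j) = c j * if i = j then 1 else 0 := by
    intro j
    rw [← h.orth i j, ← ip_mul_right]; rfl
  simp only [this, mul_ite, mul_one, mul_zero, Finset.sum_ite_eq, Finset.mem_univ, if_true] at h1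
  rw [← h1]
  simp [ip]

theorem MathieuFamily.mult_eq (h : MathieuFamily a b g e) {ε : ℝ} (hε : ε < a) :
    mathieuMult b ε = (Finset.univ.filter (fun j => e j = ε)).card := by
  rw [mathieuMult_eq]
  have hsp : solSpace b ε = Submodule.span ℂ (Set.range (g ∘ (Subtype.val : {j // e j = ε} → Fin m))) := by
    refine le_antisymm (fun v hv => ?_) (Submodule.span_le.2 ?_)
    · rw [h.sol_eq hε hv]
      refine Submodule.sum_mem _ fun j hj => Submodule.smul_mem _ _ (Submodule.subset_span ?_)
      exact ⟨⟨j, (Finset.mem_filter.1 hj).2⟩, rfl⟩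
    · rintro _ ⟨⟨j, hj⟩, rfl⟩
      have := h.sol j
      rw [hj] at this
      exact this
  rw [hsp, finrank_span_eq_card (h.linearIndependent.comp _ Subtype.val_injective),
    Fintype.card_subtype]

/-- The eigenvalues below `a` are exactly the values of `e`, each attained as often as its
multiplicity; in particular the series has only finitely many terms. -/
theorem MathieuFamily.tsum_eq (h : MathieuFamily a b g e) :
    ∑' ε : {ε : ℝ // IsMathieuEV b ε ∧ ε < a}, (mathieuMult b ε : ℝ) * Real.sqrt (a - (ε : ℝ)) =
      ∑ j, Real.sqrt (a - e j) := by
  classical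
  have hset : ∀ ε : ℝ, (IsMathieuEV b ε ∧ ε < a) ↔ ε ∈ Finset.univ.image e := by
    intro ε
    simp only [Finset.mem_image, Finset.mem_univ, true_and]
    constructor
    · rintro ⟨⟨v, hv0, hv⟩, hlt⟩
      by_contra! hc
      refine hv0 ?_
      rw [h.sol_eq hlt hv]
      rw [Finset.filter_false_of_mem fun j _ => hc j, Finset.sum_empty]
    · rintro ⟨j, rfl⟩
      refine ⟨⟨g j, ?_, h.sol j⟩, h.lt j⟩
      exact h.linearIndependent.ne_zero j
  have e1 : ∑' ε : {ε : ℝ // IsMathieuEV b ε ∧ ε < a}, (mathieuMult b ε : ℝ) * Real.sqrt (a - (ε : ℝ)) =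
      ∑ ε ∈ Finset.univ.image e, (mathieuMult b ε : ℝ) * Real.sqrt (a - ε) := by
    rw [← Finset.tsum_subtype]
    exact (Equiv.subtypeEquivRight hset).tsum_eq
      (fun ε : {x // x ∈ Finset.univ.image e} => (mathieuMult b ε : ℝ) * Real.sqrt (a - (ε : ℝ)))
  rw [e1, ← Finset.sum_fiberwise_of_maps_to (g := e) (t := Finset.univ.image e)
    (fun j _ => Finset.mem_image_of_mem e (Finset.mem_univ j))]
  refine Finset.sum_congr rfl fun ε hε => ?_
  rw [h.mult_eq ((hset ε).2 hε).2, Finset.card_eq_sum_ones, Nat.cast_sum, Finset.sum_mul]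
  refine Finset.sum_congr rfl fun j hj => ?_
  rw [(Finset.mem_filter.1 hj).2]; simp
end

/-! ### Polar coordinates -/

/-- The point of the plane with polar coordinates `p = (r, θ)`. -/
def polPt (p : ℝ × ℝ) : E2 := !₂[p.1 * Real.cos p.2, p.1 * Real.sin p.2]

theorem norm_polPt (p : ℝ × ℝ) : ‖polPt p‖ = |p.1| := by
  rw [EuclideanSpace.norm_eq, ← Real.sqrt_sq_eq_abs]
  congr 1
  simp only [polPt, Fin.sum_univ_two, Real.norm_eq_abs, sq_abs, PiLp.toLp_apply, Matrix.cons_val_zero,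
    Matrix.cons_val_one, Matrix.cons_val_fin_one]
  nlinarith [Real.sin_sq_add_cos_sq p.2]

theorem contDiff_polPt : ContDiff ℝ (⊤ : ℕ∞) polPt := by
  rw [contDiff_euclidean]
  intro i
  fin_cases i
  · change ContDiff ℝ _ (fun p : ℝ × ℝ => p.1 * Real.cos p.2)
    fun_prop
  · change ContDiff ℝ _ (fun p : ℝ × ℝ => p.1 * Real.sin p.2)
    fun_prop

theorem integral_E2 (f : E2 → ℝ) : ∫ x, f x = ∫ p : ℝ × ℝ, f !₂[p.1, p.2] := by
  have h1 := (EuclideanSpace.volume_preserving_symm_measurableEquiv_toLp (Fin 2))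
  have h2 := (volume_preserving_finTwoArrow ℝ)
  have h3 := h2.comp h1
  have h4 := h3.integral_comp
    ((MeasurableEquiv.finTwoArrow (α := ℝ)).measurableEmbedding.comp
      (MeasurableEquiv.toLp 2 (Fin 2 → ℝ)).symm.measurableEmbedding) (fun p : ℝ × ℝ => f !₂[p.1, p.2])
  rw [← h4]
  congr 1
  funext x
  congr 1
  ext i
  fin_cases i <;> rfl

/-- Integration in polar coordinates over the exterior of the unit disc. The function vanishes for
`|x| ≥ S`, so that the radial integral is over a compact interval. -/
theorem polar_integral (F : E2 → ℝ) (hF : ContinuousOn F {x | 1 ≤ ‖x‖}) (S : ℝ) (hS1 : 1 ≤ S)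
    (hS : ∀ x, S ≤ ‖x‖ → F x = 0) :
    ∫ x in {x : E2 | 1 < ‖x‖}, F x = ∫ r in (1 : ℝ)..S, ∫ θ in (-π)..π, r * F (polPt (r, θ)) := by
  have hA : MeasurableSet {x : E2 | 1 < ‖x‖} := (isOpen_lt continuous_const continuous_norm).measurableSet
  have hππ : -π ≤ π := by linarith [pi_pos]
  have hci : ContinuousOn (fun p : ℝ × ℝ => p.1 * F (polPt p)) (Set.Icc 1 S ×ˢ Set.Icc (-π) π) := by
    refine continuous_fst.continuousOn.mul (hF.comp contDiff_polPt.continuous.continuousOn ?_)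
    intro p hp
    simp only [Set.mem_ofPred_eq, norm_polPt]
    exact hp.1.1.trans (le_abs_self _)
  have hF_int : IntegrableOn (fun p : ℝ × ℝ => p.1 * F (polPt p)) (Set.Ioc 1 S ×ˢ Set.Ioc (-π) π) :=
    (hci.integrableOn_compact (isCompact_Icc.prod isCompact_Icc)).mono_set
      (Set.prod_mono Set.Ioc_subset_Icc_self Set.Ioc_subset_Icc_self)
  rw [intervalIntegral.integral_of_le hS1]
  simp only [intervalIntegral.integral_of_le hππ]
  rw [Measure.volume_eq_prod] at hF_int
  have hprod := setIntegral_prod (fun p : ℝ × ℝ => p.1 * F (polPt p)) hF_int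
  simp only at hprod
  rw [← hprod, ← integral_indicator hA, integral_E2, ← integral_comp_polarCoord_symm,
    ← Measure.volume_eq_prod, ← integral_indicator (polarCoord.open_target.measurableSet),
    ← integral_indicator (measurableSet_Ioc.prod measurableSet_Ioc)]
  -- the polar coordinate chart omits the half-line `θ = π`, a null set
  have hae : ∀ᵐ p : ℝ × ℝ, p.2 ≠ π := by
    have h0 : ∀ᵐ t : ℝ, t ≠ π := by
      simp [ae_iff]
    rw [Measure.volume_eq_prod]
    exact Measure.quasiMeasurePreserving_snd.ae h0
  refine integral_congr_ae ?_
  filter_upwards [hae] with p hp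
  have hsy : !₂[(polarCoord.symm p).1, (polarCoord.symm p).2] = polPt p := by
    simp [polarCoord_symm_apply, polPt]
  by_cases h1 : p ∈ Set.Ioc 1 S ×ˢ Set.Ioc (-π) π
  · have h2 : p ∈ polarCoord.target := by
      rw [polarCoord_target]
      exact ⟨lt_trans one_pos h1.1.1, h1.2.1, lt_of_le_of_ne h1.2.2 hp⟩
    rw [Set.indicator_of_mem h1, Set.indicator_of_mem h2, hsy, Set.indicator_of_mem, smul_eq_mul]
    simp only [Set.mem_ofPred_eq, norm_polPt]
    exact h1.1.1.trans_le (le_abs_self _)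
  · rw [Set.indicator_of_notMem h1]
    by_cases h2 : p ∈ polarCoord.target
    · rw [Set.indicator_of_mem h2, hsy]
      rw [polarCoord_target] at h2
      have hpos : 0 < p.1 := h2.1
      rw [smul_eq_mul]
      by_cases h3 : polPt p ∈ {x : E2 | 1 < ‖x‖}
      · rw [Set.indicator_of_mem h3]
        simp only [Set.mem_ofPred_eq, norm_polPt, abs_of_pos hpos] at h3
        have : S ≤ p.1 := by
          by_contra! hlt
          exact h1 ⟨⟨h3, hlt.le⟩, h2.2.1, h2.2.2.le⟩
        rw [hS _ (by rw [norm_polPt, abs_of_pos hpos]; exact this), mul_zero]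
      · rw [Set.indicator_of_notMem h3, mul_zero]
    · rw [Set.indicator_of_notMem h2]

/-! ### The form in polar coordinates -/

/-- Radial derivative of a function of `(r, θ)`. -/
def dR (V : ℝ × ℝ → ℂ) (p : ℝ × ℝ) : ℂ := fderiv ℝ V p (1, 0)
/-- Angular derivative of a function of `(r, θ)`. -/
def dT (V : ℝ × ℝ → ℂ) (p : ℝ × ℝ) : ℂ := fderiv ℝ V p (0, 1)

theorem contDiff_dR {V : ℝ × ℝ → ℂ} (hV : ContDiff ℝ (⊤ : ℕ∞) V) : ContDiff ℝ (⊤ : ℕ∞) (dR V) :=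
  (hV.fderiv_right (m := (⊤ : ℕ∞)) (by simp)).clm_apply contDiff_const

theorem contDiff_dT {V : ℝ × ℝ → ℂ} (hV : ContDiff ℝ (⊤ : ℕ∞) V) : ContDiff ℝ (⊤ : ℕ∞) (dT V) :=
  (hV.fderiv_right (m := (⊤ : ℕ∞)) (by simp)).clm_apply contDiff_const

theorem hasDerivAt_dR {V : ℝ × ℝ → ℂ} (hV : ContDiff ℝ (⊤ : ℕ∞) V) (r θ : ℝ) :
    HasDerivAt (fun r => V (r, θ)) (dR V (r, θ)) r := by
  have h1 : HasDerivAt (fun r : ℝ => ((r, θ) : ℝ × ℝ)) (1, 0) r :=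
    (hasDerivAt_id r).prodMk (hasDerivAt_const r θ)
  exact ((hV.differentiable (by simp)) (r, θ)).hasFDerivAt.comp_hasDerivAt r h1

theorem hasDerivAt_dT {V : ℝ × ℝ → ℂ} (hV : ContDiff ℝ (⊤ : ℕ∞) V) (r θ : ℝ) :
    HasDerivAt (fun θ => V (r, θ)) (dT V (r, θ)) θ := by
  have h1 : HasDerivAt (fun θ : ℝ => ((r, θ) : ℝ × ℝ)) (0, 1) θ :=
    (hasDerivAt_const θ r).prodMk (hasDerivAt_id θ)
  exact ((hV.differentiable (by simp)) (r, θ)).hasFDerivAt.comp_hasDerivAt θ h1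

/-- The form density of the operator at radius `r` in polar coordinates, integrated over the
angle, for spectral parameter `-κ`. -/
def polEnergy (a b κ : ℝ) (V : ℝ × ℝ → ℂ) (r : ℝ) : ℝ :=
  ∫ θ in (-π)..π, (r * ‖dR V (r, θ)‖ ^ 2 + r⁻¹ * ‖dT V (r, θ)‖ ^ 2
    - r⁻¹ * ((a + b * Real.cos θ) * ‖V (r, θ)‖ ^ 2) + κ * r * ‖V (r, θ)‖ ^ 2)

/-- The quadratic form of the operator on the exterior of the unit disc. -/
def qForm (a b E : ℝ) (ψ : E2 → ℂ) : ℝ :=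
  ∫ x in {x : E2 | 1 < ‖x‖}, ((∑ j : Fin 2, ‖fderiv ℝ ψ x (EuclideanSpace.single j 1)‖ ^ 2)
          - ((a + b * x 0 / ‖x‖) / ‖x‖ ^ 2) * ‖ψ x‖ ^ 2 - E * ‖ψ x‖ ^ 2)

theorem polPt_eq (p : ℝ × ℝ) : polPt p = (p.1 * Real.cos p.2) • (EuclideanSpace.single 0 1 : E2) +
    (p.1 * Real.sin p.2) • (EuclideanSpace.single 1 1 : E2) := by
  ext i
  fin_cases i <;> simp [polPt]

theorem rotate_norm_sq (z w : ℂ) (c s : ℝ) (h : c ^ 2 + s ^ 2 = 1) :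
    ‖c • z + s • w‖ ^ 2 + ‖(-s) • z + c • w‖ ^ 2 = ‖z‖ ^ 2 + ‖w‖ ^ 2 := by
  simp only [Complex.sq_norm, Complex.normSq_apply, Complex.add_re, Complex.add_im, Complex.smul_re,
    Complex.smul_im, smul_eq_mul]
  linear_combination (z.re ^ 2 + z.im ^ 2 + w.re ^ 2 + w.im ^ 2) * h

theorem dR_comp_polPt {ψ : E2 → ℂ} (hψ : ContDiff ℝ (⊤ : ℕ∞) ψ) (r θ : ℝ) :
    dR (fun p => ψ (polPt p)) (r, θ) = Real.cos θ • fderiv ℝ ψ (polPt (r, θ)) (EuclideanSpace.single 0 1)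
      + Real.sin θ • fderiv ℝ ψ (polPt (r, θ)) (EuclideanSpace.single 1 1) := by
  have h1 := hasDerivAt_dR (hψ.comp contDiff_polPt) r θ
  have h2 : HasDerivAt (fun r : ℝ => polPt (r, θ)) (Real.cos θ • (EuclideanSpace.single 0 1 : E2) +
    Real.sin θ • (EuclideanSpace.single 1 1 : E2)) r := by
    simp only [polPt_eq]
    have ha := ((hasDerivAt_id r).mul_const (Real.cos θ)).smul_const (EuclideanSpace.single 0 1 : E2)
    have hb := ((hasDerivAt_id r).mul_const (Real.sin θ)).smul_const (EuclideanSpace.single 1 1 : E2)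
    rw [one_mul] at ha hb
    exact ha.add hb
  have h3 := ((hψ.differentiable (by simp)) (polPt (r, θ))).hasFDerivAt.comp_hasDerivAt r h2
  have h4 := h1.unique h3
  simp only [map_add, map_smul] at h4
  exact h4

theorem dT_comp_polPt {ψ : E2 → ℂ} (hψ : ContDiff ℝ (⊤ : ℕ∞) ψ) (r θ : ℝ) :
    dT (fun p => ψ (polPt p)) (r, θ) =
      r • ((-Real.sin θ) • fderiv ℝ ψ (polPt (r, θ)) (EuclideanSpace.single 0 1)
      + Real.cos θ • fderiv ℝ ψ (polPt (r, θ)) (EuclideanSpace.single 1 1)) := by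
  have h1 := hasDerivAt_dT (hψ.comp contDiff_polPt) r θ
  have h2 : HasDerivAt (fun θ : ℝ => polPt (r, θ)) ((r * -Real.sin θ) • (EuclideanSpace.single 0 1 : E2) +
    (r * Real.cos θ) • (EuclideanSpace.single 1 1 : E2)) θ := by
    simp only [polPt_eq]
    have ha := ((Real.hasDerivAt_cos θ).const_mul r).smul_const (EuclideanSpace.single 0 1 : E2)
    have hb := ((Real.hasDerivAt_sin θ).const_mul r).smul_const (EuclideanSpace.single 1 1 : E2)
    exact ha.add hb
  have h3 := ((hψ.differentiable (by simp)) (polPt (r, θ))).hasFDerivAt.comp_hasDerivAt θ h2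
  have h4 := h1.unique h3
  simp only [map_add, map_smul] at h4
  rw [smul_add, smul_smul, smul_smul]
  exact h4

/-- The potential term uses `x₀ / |x| = cos θ`; the gradient term is the orthogonal splitting into
radial and angular derivatives (`rotate_norm_sq`). -/
theorem qForm_eq (a b E : ℝ) {ψ : E2 → ℂ} (hψ : ContDiff ℝ (⊤ : ℕ∞) ψ) (S : ℝ) (hS1 : 1 ≤ S)
    (hS : tsupport ψ ⊆ Metric.ball 0 S) :
    qForm a b E ψ = ∫ r in (1 : ℝ)..S, polEnergy a b (-E) (fun p => ψ (polPt p)) r := by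
  unfold qForm
  have hfd : Continuous (fderiv ℝ ψ) := hψ.continuous_fderiv (by simp)
  rw [polar_integral _ _ S hS1 _]
  · refine intervalIntegral.integral_congr fun r hr => ?_
    rw [Set.uIcc_of_le hS1] at hr
    have hr0 : 0 < r := by linarith [hr.1]
    unfold polEnergy
    refine intervalIntegral.integral_congr fun θ _ => ?_
    have hn : ‖polPt (r, θ)‖ = r := by rw [norm_polPt, abs_of_pos hr0]
    have h0 : (polPt (r, θ)) 0 = r * Real.cos θ := by simp [polPt]
    have hrot := rotate_norm_sq (fderiv ℝ ψ (polPt (r, θ)) (EuclideanSpace.single 0 1))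
      (fderiv ℝ ψ (polPt (r, θ)) (EuclideanSpace.single 1 1)) (Real.cos θ) (Real.sin θ)
      (Real.cos_sq_add_sin_sq θ)
    beta_reduce
    rw [dR_comp_polPt hψ, dT_comp_polPt hψ, norm_smul, Fin.sum_univ_two, ← hrot, hn, h0,
      Real.norm_eq_abs, mul_pow, sq_abs]
    field_simp
    ring
  · have hne : ∀ x ∈ {x : E2 | 1 ≤ ‖x‖}, ‖x‖ ≠ 0 := by
      intro x hx
      have : 1 ≤ ‖x‖ := hx
      positivity
    have hn := continuous_norm (E := E2)
    have h0 : Continuous (fun x : E2 => x 0) := by fun_prop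
    have hc := hψ.continuous
    refine ContinuousOn.sub (ContinuousOn.sub ?_ (ContinuousOn.mul (ContinuousOn.div
      (ContinuousOn.add continuousOn_const (ContinuousOn.div ?_ hn.continuousOn hne)) ?_ ?_) ?_)) ?_
    · exact Continuous.continuousOn (continuous_finsetSum _ fun j _ =>
        ((hfd.clm_apply continuous_const).norm.pow 2))
    · exact (continuous_const.mul h0).continuousOn
    · exact (hn.pow 2).continuousOn
    · exact fun x hx => pow_ne_zero 2 (hne x hx)
    · exact (hc.norm.pow 2).continuousOn
    · exact (continuous_const.mul (hc.norm.pow 2)).continuousOn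
  · intro x hx
    have hx' : x ∉ tsupport ψ := by
      intro h
      have := hS h
      rw [mem_ball_zero_iff] at this
      linarith
    rw [fderiv_of_notMem_tsupport ℝ hx', image_eq_zero_of_notMem_tsupport hx']
    simp

theorem polPt_periodic (r : ℝ) (ψ : E2 → ℂ) :
    Function.Periodic (fun θ => ψ (polPt (r, θ))) (2 * π) := by
  intro θ
  simp [polPt]

/-! ### The one-dimensional Riccati estimate -/

theorem continuous_slice_integral {F : ℝ × ℝ → ℝ} (hF : Continuous F) :
    Continuous (fun r => ∫ θ in (-π)..π, F (r, θ)) :=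
  intervalIntegral.continuous_parametric_intervalIntegral_of_continuous'
    (f := fun r θ => F (r, θ)) (by exact hF) _ _

/-- The angular coefficient of `V` along `g`, as a function of the radius. -/
def coeff (g : ℝ → ℂ) (V : ℝ × ℝ → ℂ) (r : ℝ) : ℂ := ip g (fun θ => V (r, θ))

theorem continuous_coeff {g : ℝ → ℂ} (hg : Continuous g) {V : ℝ × ℝ → ℂ} (hV : Continuous V) :
    Continuous (coeff g V) := by
  unfold coeff ip
  refine intervalIntegral.continuous_parametric_intervalIntegral_of_continuous'
    (f := fun r θ => (starRingEnd ℂ) (g θ) * V (r, θ)) ?_ _ _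
  exact (Complex.continuous_conj.comp (hg.comp continuous_snd)).mul hV

theorem hasDerivAt_coeff {g : ℝ → ℂ} (hg : Continuous g) {V : ℝ × ℝ → ℂ}
    (hV : ContDiff ℝ (⊤ : ℕ∞) V) (r : ℝ) : HasDerivAt (coeff g V) (coeff g (dR V) r) r := by
  have hVc := hV.continuous
  have hD := (contDiff_dR hV).continuous
  have hcg : Continuous (fun θ => (starRingEnd ℂ) (g θ)) := Complex.continuous_conj.comp hg
  have hF : Continuous (fun p : ℝ × ℝ => (starRingEnd ℂ) (g p.2) * dR V p) :=
    (hcg.comp continuous_snd).mul hD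
  obtain ⟨B, hB⟩ := (isCompact_Icc (a := r - 1) (b := r + 1)).prod (isCompact_Icc (a := -π) (b := π))
    |>.exists_bound_of_continuousOn hF.continuousOn
  have hππ : -π ≤ π := by linarith [pi_pos]
  refine (intervalIntegral.hasDerivAt_integral_of_dominated_loc_of_deriv_le (𝕜 := ℝ)
    (F := fun r θ => (starRingEnd ℂ) (g θ) * V (r, θ))
    (F' := fun r θ => (starRingEnd ℂ) (g θ) * dR V (r, θ)) (bound := fun _ => B)
    (Icc_mem_nhds (by linarith : r - 1 < r) (by linarith : r < r + 1)) ?_ ?_ ?_ ?_ ?_ ?_).2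
  · refine Eventually.of_forall fun x => Continuous.aestronglyMeasurable ?_
    exact hcg.mul (hVc.comp (by fun_prop))
  · exact (hcg.mul (hVc.comp (by fun_prop : Continuous fun θ => (r, θ)))).intervalIntegrable _ _
  · exact Continuous.aestronglyMeasurable (hcg.mul (hD.comp (by fun_prop)))
  · refine Eventually.of_forall fun t ht x hx => ?_
    rw [Set.uIoc_of_le hππ] at ht
    exact hB (x, t) ⟨hx, Set.Ioc_subset_Icc_self ht⟩
  · exact intervalIntegrable_const
  · refine Eventually.of_forall fun t _ x _ => ?_
    exact (hasDerivAt_dR hV x t).const_mul _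

/-- On an interval of logarithmic length less than `π / k`, the form `∫ r |c'|² - k² r⁻¹ |c|²` is
non-negative on functions vanishing at both ends. With `M` the midpoint of the interval in `log r`,
the function `f(r) = -k tan (k (log r - M))` solves `r f' = -(k² + f²)`, and the integrand is
`(f |c|²)' + r⁻¹ |r c' - f c|²`. -/
theorem riccati_nonneg {c c' : ℝ → ℂ} (hc : ∀ r, HasDerivAt c (c' r) r) (hc' : Continuous c')
    {k α β : ℝ} (hk : 0 < k) (hα : 0 < α) (hαβ : α ≤ β) (hlen : k * (Real.log β - Real.log α) < π)
    (h0 : c α = 0) (h1 : c β = 0) :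
    0 ≤ ∫ r in α..β, (r * ‖c' r‖ ^ 2 - k ^ 2 * r⁻¹ * ‖c r‖ ^ 2) := by
  have hcc : Continuous c := continuous_iff_continuousAt.2 fun r => (hc r).continuousAt
  set M := (Real.log α + Real.log β) / 2 with hM
  set f : ℝ → ℝ := fun r => -k * Real.tan (k * (Real.log r - M)) with hf
  have hpos : ∀ r ∈ Set.Icc α β, 0 < r := fun r hr => hα.trans_le hr.1
  -- the argument stays in `(-π/2, π/2)`, so the tangent has no pole
  have hcos : ∀ r ∈ Set.Icc α β, Real.cos (k * (Real.log r - M)) ≠ 0 := by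
    intro r hr
    have l1 := Real.log_le_log hα hr.1
    have l2 := Real.log_le_log (hpos r hr) hr.2
    refine (Real.cos_pos_of_mem_Ioo ⟨?_, ?_⟩).ne'
    · have : k * (Real.log r - M) ≥ k * (Real.log α - M) := by gcongr
      have h3 : k * (Real.log α - M) = - (k * (Real.log β - Real.log α)) / 2 := by rw [hM]; ring
      linarith
    · have : k * (Real.log r - M) ≤ k * (Real.log β - M) := by gcongr
      have h3 : k * (Real.log β - M) = (k * (Real.log β - Real.log α)) / 2 := by rw [hM]; ring
      linarith
  have hfd : ∀ r ∈ Set.Icc α β, HasDerivAt f (-(k ^ 2 + f r ^ 2) * r⁻¹) r := by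
    intro r hr
    have d1 : HasDerivAt (fun r => k * (Real.log r - M)) (k * r⁻¹) r :=
      ((Real.hasDerivAt_log (hpos r hr).ne').sub_const M).const_mul k
    have d2 := ((Real.hasDerivAt_tan (hcos r hr)).comp r d1).const_mul (-k)
    have e : -k * (1 / Real.cos (k * (Real.log r - M)) ^ 2 * (k * r⁻¹)) = -(k ^ 2 + f r ^ 2) * r⁻¹ := by
      rw [hf]
      beta_reduce
      have hne := hcos r hr
      have hcs := Real.sin_sq_add_cos_sq (k * (Real.log r - M))
      rw [Real.tan_eq_sin_div_cos]
      field_simp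
      linear_combination r⁻¹ * hcs
    rw [e] at d2
    exact d2
  set G' : ℝ → ℝ := fun r => (-(k ^ 2 + f r ^ 2) * r⁻¹) * ‖c r‖ ^ 2 + f r * (2 * ⟪c r, c' r⟫_ℝ)
  have hG : ∀ r ∈ Set.Icc α β, HasDerivAt (fun r => f r * ‖c r‖ ^ 2) (G' r) r := fun r hr =>
    (hfd r hr).mul (hc r).norm_sq
  have hfc : ContinuousOn f (Set.Icc α β) := fun r hr => (hfd r hr).continuousAt.continuousWithinAt
  have hinv : ContinuousOn (fun r : ℝ => r⁻¹) (Set.Icc α β) :=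
    continuousOn_inv₀.mono fun r hr => (hpos r hr).ne'
  have hG'c : ContinuousOn G' (Set.Icc α β) := by
    refine ContinuousOn.add (((ContinuousOn.add continuousOn_const (hfc.pow 2)).neg.mul hinv).mul
      (hcc.norm.pow 2).continuousOn) (hfc.mul (Continuous.continuousOn ?_))
    exact continuous_const.mul (hcc.inner hc')
  have hF_int : IntervalIntegrable G' volume α β := by
    apply ContinuousOn.intervalIntegrable
    rwa [Set.uIcc_of_le hαβ]
  have hFTC := intervalIntegral.integral_eq_sub_of_hasDerivAt
    (fun r hr => hG r (by rwa [Set.uIcc_of_le hαβ] at hr)) hF_int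
  rw [h0, h1] at hFTC
  simp only [norm_zero, ne_eq, OfNat.ofNat_ne_zero, not_false_eq_true, zero_pow, mul_zero, sub_self] at hFTC
  rw [← hFTC]
  refine intervalIntegral.integral_mono_on hαβ hF_int ?_ fun r hr => ?_
  · apply ContinuousOn.intervalIntegrable
    rw [Set.uIcc_of_le hαβ]
    exact (continuous_id.mul (hc'.norm.pow 2)).continuousOn.sub ((continuousOn_const.mul hinv).mul
      (hcc.norm.pow 2).continuousOn)
  · have hr0 := hpos r hr
    have hsq : 0 ≤ ‖r • c' r - f r • c r‖ ^ 2 := by positivity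
    rw [norm_sub_sq_real, norm_smul, norm_smul, real_inner_smul_left, real_inner_smul_right,
      real_inner_comm, mul_pow, mul_pow, Real.norm_eq_abs, Real.norm_eq_abs, sq_abs, sq_abs] at hsq
    have h2 : 0 ≤ r⁻¹ * (r ^ 2 * ‖c' r‖ ^ 2 - 2 * (r * (f r * ⟪c r, c' r⟫_ℝ)) + f r ^ 2 * ‖c r‖ ^ 2) :=
      mul_nonneg (inv_nonneg.2 hr0.le) hsq
    have h3 : r⁻¹ * (r ^ 2 * ‖c' r‖ ^ 2 - 2 * (r * (f r * ⟪c r, c' r⟫_ℝ)) + f r ^ 2 * ‖c r‖ ^ 2) =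
        (r * ‖c' r‖ ^ 2 - k ^ 2 * r⁻¹ * ‖c r‖ ^ 2) - G' r := by
      simp only [G']
      field_simp
      ring
    linarith

/-- The Riccati estimate on `[1, e^L]`, cut into `n` blocks of logarithmic length `L / n < π / k`, for a
function vanishing at all block ends. -/
theorem riccati_blocks {c c' : ℝ → ℂ} (hc : ∀ r, HasDerivAt c (c' r) r) (hc' : Continuous c')
    {k L : ℝ} (hk : 0 < k) (hL : 0 ≤ L) (n : ℕ) (hn : 0 < n) (hlen : k * L < π * n)
    (h0 : ∀ i ≤ n, c (Real.exp (i * L / n)) = 0) :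
    0 ≤ ∫ r in (1 : ℝ)..(Real.exp L), (r * ‖c' r‖ ^ 2 - k ^ 2 * r⁻¹ * ‖c r‖ ^ 2) := by
  have hcc : Continuous c := continuous_iff_continuousAt.2 fun r => (hc r).continuousAt
  have hn0 : (0 : ℝ) < n := by exact_mod_cast hn
  have hmono : ∀ i : ℕ, Real.exp (i * L / n) ≤ Real.exp ((i + 1 : ℕ) * L / n) := by
    intro i
    apply Real.exp_le_exp.2
    push_cast
    gcongr
    linarith
  have hs := intervalIntegral.sum_integral_adjacent_intervals (μ := volume) (n := n)
    (a := fun i : ℕ => Real.exp (i * L / n))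
    (f := fun r => r * ‖c' r‖ ^ 2 - k ^ 2 * r⁻¹ * ‖c r‖ ^ 2) ?_
  · simp only [Nat.cast_zero, zero_mul, zero_div, Real.exp_zero] at hs
    rw [mul_div_cancel_left₀ _ hn0.ne'] at hs
    rw [← hs]
    refine Finset.sum_nonneg fun i hi => ?_
    have hi' := Finset.mem_range.1 hi
    refine riccati_nonneg hc hc' hk (Real.exp_pos _) (hmono i) ?_ (h0 i hi'.le) (h0 (i + 1) hi')
    rw [Real.log_exp, Real.log_exp]
    push_cast
    have : k * ((↑i + 1) * L / ↑n - ↑i * L / ↑n) = k * L / n := by ring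
    rw [this, div_lt_iff₀ hn0]
    exact hlen
  · intro i _
    apply ContinuousOn.intervalIntegrable
    rw [Set.uIcc_of_le (hmono i)]
    have hinv : ContinuousOn (fun r : ℝ => r⁻¹) (Set.Icc (Real.exp (i * L / n))
        (Real.exp ((i + 1 : ℕ) * L / n))) :=
      continuousOn_inv₀.mono fun r hr => ((Real.exp_pos _).trans_le hr.1).ne'
    exact (continuous_id.mul (hc'.norm.pow 2)).continuousOn.sub ((continuousOn_const.mul hinv).mul
      (hcc.norm.pow 2).continuousOn)

/-! ### The upper bound -/

theorem smoothPer_slice {V : ℝ × ℝ → ℂ} (hV : ContDiff ℝ (⊤ : ℕ∞) V) {r : ℝ}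
    (hp : Function.Periodic (fun θ => V (r, θ)) (2 * π)) : SmoothPer (fun θ => V (r, θ)) :=
  ⟨hV.comp (contDiff_const.prodMk contDiff_id), hp⟩

theorem smoothPer_slice_dR {V : ℝ × ℝ → ℂ} (hV : ContDiff ℝ (⊤ : ℕ∞) V)
    (hp : ∀ r, Function.Periodic (fun θ => V (r, θ)) (2 * π)) (r : ℝ) :
    SmoothPer (fun θ => dR V (r, θ)) := by
  refine ⟨(contDiff_dR hV).comp (contDiff_const.prodMk contDiff_id), fun θ => ?_⟩
  have h1 := hasDerivAt_dR hV r (θ + 2 * π)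
  have h2 := hasDerivAt_dR hV r θ
  have : (fun r => V (r, θ + 2 * π)) = fun r => V (r, θ) := funext fun r => hp r θ
  rw [this] at h1
  exact h1.unique h2

theorem polEnergy_split (a b κ : ℝ) {V : ℝ × ℝ → ℂ} (hV : ContDiff ℝ (⊤ : ℕ∞) V) (r : ℝ) :
    polEnergy a b κ V r = r * (∫ θ in (-π)..π, ‖dR V (r, θ)‖ ^ 2)
      + r⁻¹ * ((∫ θ in (-π)..π, (‖dT V (r, θ)‖ ^ 2 - b * Real.cos θ * ‖V (r, θ)‖ ^ 2))
        - a * ∫ θ in (-π)..π, ‖V (r, θ)‖ ^ 2)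
      + κ * r * ∫ θ in (-π)..π, ‖V (r, θ)‖ ^ 2 := by
  have h1 : Continuous (fun θ => V (r, θ)) := hV.continuous.comp (by fun_prop)
  have h2 : Continuous (fun θ => dR V (r, θ)) := (contDiff_dR hV).continuous.comp (by fun_prop)
  have h3 : Continuous (fun θ => dT V (r, θ)) := (contDiff_dT hV).continuous.comp (by fun_prop)
  rw [← intervalIntegral.integral_const_mul a, ← intervalIntegral.integral_sub
    (Continuous.intervalIntegrable (by fun_prop) _ _) (Continuous.intervalIntegrable (by fun_prop) _ _),
    ← intervalIntegral.integral_const_mul, ← intervalIntegral.integral_const_mul,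
    ← intervalIntegral.integral_const_mul, ← intervalIntegral.integral_add
    (Continuous.intervalIntegrable (by fun_prop) _ _) (Continuous.intervalIntegrable (by fun_prop) _ _),
    ← intervalIntegral.integral_add
    (Continuous.intervalIntegrable (by fun_prop) _ _) (Continuous.intervalIntegrable (by fun_prop) _ _)]
  unfold polEnergy
  congr 1; funext θ; ring

theorem continuousOn_polEnergy (a b κ : ℝ) {V : ℝ × ℝ → ℂ} (hV : ContDiff ℝ (⊤ : ℕ∞) V) :
    ContinuousOn (polEnergy a b κ V) (Set.Ioi 0) := by
  have h1 : Continuous V := hV.continuous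
  have h2 : Continuous (dR V) := (contDiff_dR hV).continuous
  have h3 : Continuous (dT V) := (contDiff_dT hV).continuous
  have hinv : ContinuousOn (fun r : ℝ => r⁻¹) (Set.Ioi 0) :=
    continuousOn_inv₀.mono fun r hr => (ne_of_gt hr)
  have c1 := continuous_slice_integral (F := fun p => ‖dR V p‖ ^ 2) (by fun_prop)
  have c2 := continuous_slice_integral
    (F := fun p => ‖dT V p‖ ^ 2 - b * Real.cos p.2 * ‖V p‖ ^ 2) (by fun_prop)
  have c3 := continuous_slice_integral (F := fun p => ‖V p‖ ^ 2) (by fun_prop)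
  rw [show polEnergy a b κ V = _ from funext fun r => polEnergy_split a b κ hV r]
  exact ((continuous_id.mul c1).continuousOn.add (hinv.mul (c2.sub (continuous_const.mul c3)).continuousOn)).add
    ((continuous_const.mul continuous_id).mul c3).continuousOn

theorem intervalIntegrable_polEnergy (a b κ : ℝ) {V : ℝ × ℝ → ℂ} (hV : ContDiff ℝ (⊤ : ℕ∞) V)
    {α β : ℝ} (hα : 0 < α) (hαβ : α ≤ β) : IntervalIntegrable (polEnergy a b κ V) volume α β := by
  apply ContinuousOn.intervalIntegrable
  rw [Set.uIcc_of_le hαβ]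
  exact (continuousOn_polEnergy a b κ hV).mono fun r hr => hα.trans_le hr.1

/-- At radii with `κ r² ≥ |a| + b` the term `κ r |V|²` dominates the potential. -/
theorem polEnergy_nonneg (a b κ : ℝ) (hb : 0 ≤ b) (V : ℝ × ℝ → ℂ) {r : ℝ} (hr : 0 < r)
    (h : |a| + b ≤ κ * r ^ 2) : 0 ≤ polEnergy a b κ V r := by
  unfold polEnergy
  refine intervalIntegral.integral_nonneg (by linarith [pi_pos]) fun θ _ => ?_
  have h1 : a + b * Real.cos θ ≤ κ * r ^ 2 := by
    have := mul_le_mul_of_nonneg_left (Real.cos_le_one θ) hb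
    linarith [le_abs_self a]
  have h2 : r⁻¹ * ((a + b * Real.cos θ) * ‖V (r, θ)‖ ^ 2) ≤ r⁻¹ * ((κ * r ^ 2) * ‖V (r, θ)‖ ^ 2) := by
    gcongr
  have h3 : r⁻¹ * ((κ * r ^ 2) * ‖V (r, θ)‖ ^ 2) = κ * r * ‖V (r, θ)‖ ^ 2 := by field_simp
  have h4 : 0 ≤ r * ‖dR V (r, θ)‖ ^ 2 + r⁻¹ * ‖dT V (r, θ)‖ ^ 2 := by positivity
  linarith

section
variable {a b : ℝ} {m : ℕ} {g : Fin m → ℝ → ℂ} {e : Fin m → ℝ}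

/-- Bessel's inequality for the radial derivative and the spectral bound for the angular part reduce
the form density to the channels below `a`. -/
theorem MathieuFamily.polEnergy_lower (h : MathieuFamily a b g e) {κ : ℝ} (hκ : 0 ≤ κ)
    {V : ℝ × ℝ → ℂ} (hV : ContDiff ℝ (⊤ : ℕ∞) V)
    (hp : ∀ r, Function.Periodic (fun θ => V (r, θ)) (2 * π)) {r : ℝ} (hr : 0 < r) :
    ∑ j, (r * ‖coeff (g j) (dR V) r‖ ^ 2 - Real.sqrt (a - e j) ^ 2 * r⁻¹ * ‖coeff (g j) V r‖ ^ 2)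
      ≤ polEnergy a b κ V r := by
  rw [polEnergy_split a b κ hV]
  have h1 := h.bessel (smoothPer_slice_dR hV hp r)
  have h2 := h.bound _ (smoothPer_slice hV (hp r))
  have h3 : mForm b (fun θ => V (r, θ)) =
      ∫ θ in (-π)..π, (‖dT V (r, θ)‖ ^ 2 - b * Real.cos θ * ‖V (r, θ)‖ ^ 2) := by
    unfold mForm
    congr 1; funext θ
    rw [(hasDerivAt_dT hV r θ).deriv]
  rw [h3] at h2
  have h4 : 0 ≤ κ * r * ∫ θ in (-π)..π, ‖V (r, θ)‖ ^ 2 :=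
    mul_nonneg (by positivity)
      (intervalIntegral.integral_nonneg (by linarith [pi_pos]) fun t _ => by positivity)
  have h5 := mul_le_mul_of_nonneg_left h1 hr.le
  have h6 := mul_le_mul_of_nonneg_left (sub_le_iff_le_add.2 (by linarith [h2]) :
    (0 : ℝ) - ∑ j, (a - e j) * ‖ip (g j) (fun θ => V (r, θ))‖ ^ 2 ≤
      (∫ θ in (-π)..π, (‖dT V (r, θ)‖ ^ 2 - b * Real.cos θ * ‖V (r, θ)‖ ^ 2))
        - a * ∫ θ in (-π)..π, ‖V (r, θ)‖ ^ 2) (inv_nonneg.2 hr.le)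
  have h7 : ∑ j, (r * ‖coeff (g j) (dR V) r‖ ^ 2 - Real.sqrt (a - e j) ^ 2 * r⁻¹ * ‖coeff (g j) V r‖ ^ 2)
      = r * ∑ j, ‖ip (g j) (fun θ => dR V (r, θ))‖ ^ 2
        + r⁻¹ * (0 - ∑ j, (a - e j) * ‖ip (g j) (fun θ => V (r, θ))‖ ^ 2) := by
    rw [Finset.sum_sub_distrib, Finset.mul_sum, zero_sub, mul_neg, ← sub_eq_add_neg, Finset.mul_sum]
    congr 1
    refine Finset.sum_congr rfl fun j _ => ?_
    rw [Real.sq_sqrt (by linarith [h.lt j])]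
    unfold coeff
    ring
  rw [h7]
  linarith

/-- The least number of blocks of logarithmic length less than `π / k` into which `[1, e^L]` can be
cut (for `k, L ≥ 0`). -/
def nBlocks (k L : ℝ) : ℕ := ⌊k * L / π⌋₊ + 1

/-- The logarithm of the radius beyond which the form density is non-negative. -/
def cutLog (a b E : ℝ) : ℝ := Real.log (1 + (|a| + b) / (-E)) / 2

/-- The form is non-negative on functions all of whose channel coefficients vanish at the block ends:
inside `log r ≤ cutLog a b E` by `riccati_blocks`, outside by `polEnergy_nonneg`. -/
theorem MathieuFamily.qForm_nonneg (h : MathieuFamily a b g e) (hb : 0 ≤ b) {E : ℝ} (hE : E < 0)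
    {ψ : E2 → ℂ} (hψ : ContDiff ℝ (⊤ : ℕ∞) ψ) (hsupp : HasCompactSupport ψ)
    (h0 : ∀ j, ∀ i ≤ nBlocks (Real.sqrt (a - e j)) (cutLog a b E),
      coeff (g j) (fun p => ψ (polPt p))
        (Real.exp (i * cutLog a b E / nBlocks (Real.sqrt (a - e j)) (cutLog a b E))) = 0) :
    0 ≤ qForm a b E ψ := by
  set L := cutLog a b E with hL
  set V : ℝ × ℝ → ℂ := fun p => ψ (polPt p) with hVdef
  have hV : ContDiff ℝ (⊤ : ℕ∞) V := hψ.comp contDiff_polPt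
  have hp : ∀ r, Function.Periodic (fun θ => V (r, θ)) (2 * π) := fun r => polPt_periodic r ψ
  have hquo : 0 ≤ (|a| + b) / (-E) := div_nonneg (by positivity) (by linarith)
  have hL0 : 0 ≤ L := by
    rw [hL, cutLog]
    have := Real.log_nonneg (by linarith : 1 ≤ 1 + (|a| + b) / (-E))
    linarith
  have hℓ1 : 1 ≤ Real.exp L := Real.one_le_exp hL0
  have hℓ2 : Real.exp L ^ 2 = 1 + (|a| + b) / (-E) := by
    rw [← Real.exp_nat_mul, hL, cutLog]
    push_cast
    rw [mul_div_cancel₀ _ two_ne_zero, Real.exp_log (by linarith)]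
  obtain ⟨S₀, hS₀⟩ := hsupp.isCompact.isBounded.subset_ball (0 : E2)
  set S := max S₀ (Real.exp L) with hS
  have hS' : tsupport ψ ⊆ Metric.ball 0 S := hS₀.trans (Metric.ball_subset_ball (le_max_left _ _))
  have hSℓ : Real.exp L ≤ S := le_max_right _ _
  rw [qForm_eq a b E hψ S (hℓ1.trans hSℓ) hS', ← intervalIntegral.integral_add_adjacent_intervals
    (intervalIntegrable_polEnergy a b (-E) hV one_pos hℓ1)
    (intervalIntegrable_polEnergy a b (-E) hV (Real.exp_pos L) hSℓ)]
  refine add_nonneg ?_ ?_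
  · have hcg : ∀ j, Continuous (g j) := fun j => (h.sol j).smoothPer.continuous
    have hc1 : ∀ j, Continuous (coeff (g j) V) := fun j => continuous_coeff (hcg j) hV.continuous
    have hc2 : ∀ j, Continuous (coeff (g j) (dR V)) := fun j =>
      continuous_coeff (hcg j) (contDiff_dR hV).continuous
    have hinv : ContinuousOn (fun r : ℝ => r⁻¹) (Set.Icc 1 (Real.exp L)) :=
      continuousOn_inv₀.mono fun r hr => (one_pos.trans_le hr.1).ne'
    have hii : ∀ j, IntervalIntegrable (fun r => r * ‖coeff (g j) (dR V) r‖ ^ 2 -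
        Real.sqrt (a - e j) ^ 2 * r⁻¹ * ‖coeff (g j) V r‖ ^ 2) volume 1 (Real.exp L) := by
      intro j
      apply ContinuousOn.intervalIntegrable
      rw [Set.uIcc_of_le hℓ1]
      exact (continuous_id.mul ((hc2 j).norm.pow 2)).continuousOn.sub ((continuousOn_const.mul hinv).mul
        ((hc1 j).norm.pow 2).continuousOn)
    have hsum := intervalIntegral.integral_finsetSum (μ := volume) (a := 1) (b := Real.exp L)
      (s := Finset.univ) (fun j _ => hii j)
    refine le_trans ?_ (intervalIntegral.integral_mono_on hℓ1 (IntervalIntegrable.sum Finset.univ fun j _ => hii j)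
      (intervalIntegrable_polEnergy a b (-E) hV one_pos hℓ1) fun r hr => ?_)
    · simp only [Finset.sum_apply]
      rw [hsum]
      refine Finset.sum_nonneg fun j _ => ?_
      have hk : 0 < Real.sqrt (a - e j) := Real.sqrt_pos.2 (by linarith [h.lt j])
      refine riccati_blocks (fun r => hasDerivAt_coeff (hcg j) hV r) (hc2 j) hk hL0
        (nBlocks (Real.sqrt (a - e j)) L) (Nat.succ_pos _) ?_ (h0 j)
      have := Nat.lt_floor_add_one (Real.sqrt (a - e j) * L / π)
      rw [div_lt_iff₀ pi_pos] at this
      unfold nBlocks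
      push_cast
      linarith
    · simp only [Finset.sum_apply]
      exact h.polEnergy_lower (by linarith) hV hp (by linarith [hr.1])
  · refine intervalIntegral.integral_nonneg hSℓ fun r hr => ?_
    have hr0 : 0 < r := (Real.exp_pos L).trans_le hr.1
    refine polEnergy_nonneg a b (-E) hb V hr0 ?_
    have h1 : Real.exp L ^ 2 ≤ r ^ 2 := pow_le_pow_left₀ (Real.exp_pos L).le hr.1 2
    have h2 : (-E) * ((|a| + b) / (-E)) = |a| + b := mul_div_cancel₀ _ (by linarith)
    have h3 : (-E) * (1 + (|a| + b) / (-E)) ≤ (-E) * r ^ 2 := by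
      rw [← hℓ2]; exact mul_le_mul_of_nonneg_left h1 (by linarith)
    nlinarith

/-- Evaluating the channel coefficients at the block ends is injective on a subspace where the form is
negative, so its dimension is at most the number of evaluations. -/
theorem MathieuFamily.upper_bound (h : MathieuFamily a b g e) (hb : 0 ≤ b) {E : ℝ} (hE : E < 0) :
    negIndexOn (fun ψ : E2 → ℂ => ContDiff ℝ (⊤ : ℕ∞) ψ ∧ HasCompactSupport ψ) (qForm a b E) ≤
      ((∑ j, (nBlocks (Real.sqrt (a - e j)) (cutLog a b E) + 1) : ℕ) : ℕ∞) := by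
  unfold negIndexOn
  refine iSup₂_le fun W hW => ?_
  obtain ⟨hWP, hWn⟩ := hW
  set L := cutLog a b E with hL
  have hcg : ∀ j, Continuous (g j) := fun j => (h.sol j).smoothPer.continuous
  have hcs : ∀ (ψ : W) (r : ℝ), Continuous (fun θ => (ψ : E2 → ℂ) (polPt (r, θ))) := fun ψ r =>
    ((hWP ψ.2).1.continuous.comp contDiff_polPt.continuous).comp (by fun_prop)
  let Φ : W →ₗ[ℂ] ((Σ j : Fin m, Fin (nBlocks (Real.sqrt (a - e j)) L + 1)) → ℂ) :=
    { toFun := fun ψ x => coeff (g x.1) (fun p => (ψ : E2 → ℂ) (polPt p))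
        (Real.exp ((x.2 : ℕ) * L / nBlocks (Real.sqrt (a - e x.1)) L))
      map_add' := fun ψ φ => by
        funext x
        exact ip_add_right (hcg x.1) (hcs ψ _) (hcs φ _)
      map_smul' := fun c ψ => by
        funext x
        exact ip_mul_right (g x.1) _ c }
  have hinj : Function.Injective Φ := by
    rw [← LinearMap.ker_eq_bot, LinearMap.ker_eq_bot']
    intro ψ hψ
    by_contra hne
    have hlt := hWn ψ ψ.2 (fun h => hne (Subtype.ext h))
    have hge := h.qForm_nonneg hb hE (hWP ψ.2).1 (hWP ψ.2).2 (fun j i hi => by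
      exact congrFun hψ ⟨j, ⟨i, Nat.lt_succ_of_le hi⟩⟩)
    linarith
  have := LinearMap.finrank_le_finrank_of_injective hinj
  rw [Module.finrank_fintype_fun_eq_card, Fintype.card_sigma] at this
  simp only [Fintype.card_fin] at this
  exact_mod_cast this
end

/-! ### Radial profiles of negative energy -/

theorem deriv_smoothTransition_of_neg {x : ℝ} (hx : x < 0) : deriv smoothTransition x = 0 := by
  have : smoothTransition =ᶠ[𝓝 x] fun _ => 0 := by
    filter_upwards [Iio_mem_nhds hx] with y hy
    exact smoothTransition.zero_of_nonpos (le_of_lt hy)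
  rw [this.deriv_eq, deriv_const]

theorem deriv_smoothTransition_of_one_lt {x : ℝ} (hx : 1 < x) : deriv smoothTransition x = 0 := by
  have : smoothTransition =ᶠ[𝓝 x] fun _ => 1 := by
    filter_upwards [Ioi_mem_nhds hx] with y hy
    exact smoothTransition.one_of_one_le (le_of_lt hy)
  rw [this.deriv_eq, deriv_const]

theorem continuous_deriv_smoothTransition : Continuous (deriv smoothTransition) :=
  (smoothTransition.contDiff (n := 1)).continuous_deriv (by simp)

/-- A smooth function of `y` vanishing for `n * y ≤ 1` and equal to `y` for `n * y ≥ 2`. -/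
def cutId (n : ℕ) (y : ℝ) : ℝ := y * smoothTransition (n * y - 1)

/-- The derivative of `cutId n`. -/
def cutId' (n : ℕ) (y : ℝ) : ℝ :=
  smoothTransition (n * y - 1) + n * y * deriv smoothTransition (n * y - 1)

theorem contDiff_cutId (n : ℕ) : ContDiff ℝ (⊤ : ℕ∞) (cutId n) :=
  contDiff_id.mul (smoothTransition.contDiff.comp ((contDiff_const.mul contDiff_id).sub contDiff_const))

theorem continuous_cutId' (n : ℕ) : Continuous (cutId' n) := by
  have h1 := continuous_deriv_smoothTransition
  have h2 := smoothTransition.continuous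
  unfold cutId'
  fun_prop

theorem hasDerivAt_cutId (n : ℕ) (y : ℝ) : HasDerivAt (cutId n) (cutId' n y) y := by
  have h1 : HasDerivAt smoothTransition (deriv smoothTransition (n * y - 1)) (n * y - 1) :=
    ((smoothTransition.contDiff (n := 1)).differentiable (by simp) _).hasDerivAt
  have h2 : HasDerivAt (fun y : ℝ => (n : ℝ) * y - 1) (n : ℝ) y := by
    simpa using ((hasDerivAt_id y).const_mul (n : ℝ)).sub_const 1
  have := (hasDerivAt_id y).mul (h1.comp y h2)
  refine this.congr_deriv ?_
  simp [cutId']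
  ring

theorem cutId_eq_zero {n : ℕ} {y : ℝ} (h : n * y ≤ 1) : cutId n y = 0 := by
  rw [cutId, smoothTransition.zero_of_nonpos (by linarith), mul_zero]

theorem abs_cutId_le (n : ℕ) (y : ℝ) : |cutId n y| ≤ |y| := by
  rw [cutId, abs_mul, abs_of_nonneg (smoothTransition.nonneg _)]
  exact mul_le_of_le_one_right (abs_nonneg _) (smoothTransition.le_one _)

/-- The derivatives of the cut-offs are bounded uniformly in `n`: the factor `n` coming from the
chain rule is compensated by `y ≤ 2 / n` on the transition region. -/
theorem exists_cutId'_bound : ∃ C, ∀ n y, |cutId' n y| ≤ C := by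
  obtain ⟨C, hC⟩ := isCompact_Icc.exists_bound_of_continuousOn (s := Set.Icc (0 : ℝ) 1)
    continuous_deriv_smoothTransition.continuousOn
  have hC0 : 0 ≤ C := (norm_nonneg _).trans (hC 0 ⟨le_rfl, zero_le_one⟩)
  refine ⟨1 + 2 * C, fun n y => ?_⟩
  unfold cutId'
  refine (abs_add_le _ _).trans (add_le_add ?_ ?_)
  · rw [abs_of_nonneg (smoothTransition.nonneg _)]
    exact smoothTransition.le_one _
  · rw [abs_mul]
    rcases lt_or_ge (n * y - 1) 0 with h | h
    · rw [deriv_smoothTransition_of_neg h]; simp [hC0]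
    rcases lt_or_ge 1 (n * y - 1) with h' | h'
    · rw [deriv_smoothTransition_of_one_lt h']; simp [hC0]
    · have := hC _ ⟨h, h'⟩
      rw [Real.norm_eq_abs] at this
      refine mul_le_mul ?_ this (abs_nonneg _) (by norm_num)
      rw [abs_of_nonneg (by linarith)]; linarith

theorem tendsto_cutId {y : ℝ} (hy : 0 < y) :
    (∀ᶠ n : ℕ in atTop, cutId n y = y) ∧ ∀ᶠ n : ℕ in atTop, cutId' n y = 1 := by
  have h : ∀ᶠ n : ℕ in atTop, 3 / y ≤ n := eventually_ge_atTop (⌈3 / y⌉₊) |>.mono fun n hn =>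
    (Nat.le_ceil _).trans (by exact_mod_cast hn)
  constructor <;> filter_upwards [h] with n hn <;> rw [div_le_iff₀ hy] at hn
  · rw [cutId, smoothTransition.one_of_one_le (by linarith), mul_one]
  · rw [cutId', smoothTransition.one_of_one_le (by linarith),
      deriv_smoothTransition_of_one_lt (by linarith), mul_zero, add_zero]

theorem integral_trig {k : ℝ} (hk : 0 < k) (K : ℝ) :
    ∫ s in (0 : ℝ)..(π / k), ((k * Real.cos (k * s)) ^ 2 - K ^ 2 * Real.sin (k * s) ^ 2) =
      (k ^ 2 - K ^ 2) * (π / k) / 2 := by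
  have h := intervalIntegral.integral_comp_mul_left (a := 0) (b := π / k)
    (fun t => (k * Real.cos t) ^ 2 - K ^ 2 * Real.sin t ^ 2) hk.ne'
  simp only [smul_eq_mul] at h
  rw [h, mul_zero, mul_div_cancel₀ _ hk.ne', intervalIntegral.integral_sub (by
    apply Continuous.intervalIntegrable; fun_prop) (by apply Continuous.intervalIntegrable; fun_prop)]
  simp only [mul_pow, intervalIntegral.integral_const_mul, integral_cos_sq, integral_sin_sq]
  simp
  field_simp

/-- The Dirichlet eigenvalue of `-d²/ds²` on an interval of length `π / k` is `k²`; hence for `K > k`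
a smooth function compactly supported in the interval makes `∫ w'² - K² w²` negative. -/
theorem exists_bump {k K : ℝ} (hk : 0 < k) (hK : k < K) :
    ∃ w : ℝ → ℝ, ContDiff ℝ (⊤ : ℕ∞) w ∧ tsupport w ⊆ Set.Ioo 0 (π / k) ∧
      ∫ s, (deriv w s ^ 2 - K ^ 2 * w s ^ 2) < 0 := by
  have hL : 0 < π / k := div_pos pi_pos hk
  have hsin : ∀ s ∈ Set.Ioo 0 (π / k), 0 < Real.sin (k * s) := fun s hs =>
    Real.sin_pos_of_pos_of_lt_pi (mul_pos hk hs.1) (by rw [mul_comm]; exact (lt_div_iff₀ hk).1 hs.2)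
  obtain ⟨C, hC⟩ := exists_cutId'_bound
  have hlim : Tendsto (fun n : ℕ => ∫ s in (0 : ℝ)..(π / k),
      ((cutId' n (Real.sin (k * s)) * (k * Real.cos (k * s))) ^ 2 - K ^ 2 * cutId n (Real.sin (k * s)) ^ 2))
      atTop (𝓝 (∫ s in (0 : ℝ)..(π / k), ((k * Real.cos (k * s)) ^ 2 - K ^ 2 * Real.sin (k * s) ^ 2))) := by
    refine intervalIntegral.tendsto_integral_filter_of_dominated_convergence
      (fun _ => (C * k) ^ 2 + K ^ 2) ?_ ?_ ?_ ?_
    · refine Eventually.of_forall fun n => Continuous.aestronglyMeasurable ?_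
      have h1 := continuous_cutId' n
      have h2 := (contDiff_cutId n).continuous
      fun_prop
    · refine Eventually.of_forall fun n => Eventually.of_forall fun s _ => ?_
      rw [Real.norm_eq_abs]
      refine (abs_sub _ _).trans (add_le_add ?_ ?_)
      · rw [abs_of_nonneg (sq_nonneg _), ← sq_abs]
        refine pow_le_pow_left₀ (abs_nonneg _) ?_ 2
        rw [abs_mul]
        refine mul_le_mul (hC _ _) ?_ (abs_nonneg _) ((abs_nonneg _).trans (hC 0 0))
        rw [abs_mul, abs_of_pos hk]
        exact mul_le_of_le_one_right hk.le (Real.abs_cos_le_one _)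
      · rw [abs_of_nonneg (by positivity)]
        refine mul_le_of_le_one_right (sq_nonneg _) ?_
        rw [← sq_abs]
        exact pow_le_one₀ (abs_nonneg _) ((abs_cutId_le _ _).trans (Real.abs_sin_le_one _))
    · exact intervalIntegrable_const
    · have hne : ∀ᵐ s : ℝ, s ≠ π / k := by simp [ae_iff, measure_singleton]
      filter_upwards [hne] with s hs1 hs
      rw [Set.uIoc_of_le hL.le] at hs
      have := tendsto_cutId (hsin s ⟨hs.1, lt_of_le_of_ne hs.2 hs1⟩)
      refine tendsto_const_nhds.congr' ?_
      filter_upwards [this.1, this.2] with n h1 h2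
      rw [h1, h2, one_mul]
  rw [integral_trig hk] at hlim
  have hneg : (k ^ 2 - K ^ 2) * (π / k) / 2 < 0 := by
    have : k ^ 2 < K ^ 2 := pow_lt_pow_left₀ hK hk.le two_ne_zero
    have := mul_neg_of_neg_of_pos (sub_neg.2 this) hL
    linarith
  obtain ⟨n, hn, hn1⟩ := ((hlim.eventually_lt_const hneg).and (eventually_ge_atTop 1)).exists
  have hn0 : (0 : ℝ) < n := by exact_mod_cast hn1
  set u : ℝ → ℝ := fun s => cutId n (Real.sin (k * s)) with hu
  have hu_smooth : ContDiff ℝ (⊤ : ℕ∞) u :=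
    (contDiff_cutId n).comp (Real.contDiff_sin.comp (contDiff_const.mul contDiff_id))
  have hu' : ∀ s, HasDerivAt u (cutId' n (Real.sin (k * s)) * (k * Real.cos (k * s))) s := fun s => by
    have h1 : HasDerivAt (fun s => Real.sin (k * s)) (Real.cos (k * s) * k) s := by
      simpa using ((hasDerivAt_id s).const_mul k).sin
    exact ((hasDerivAt_cutId n _).comp s h1).congr_deriv (by ring)
  -- `u` vanishes where `sin (k s) ≤ 1 / n`, so cutting it off at the zeros `0`, `π / k` keeps it smooth
  let w : ℝ → ℝ := (Set.Ioo 0 (π / k)).indicator u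
  have hw_in : ∀ s ∈ Set.Ioo 0 (π / k), w =ᶠ[𝓝 s] u := fun s hs => by
    filter_upwards [isOpen_Ioo.mem_nhds hs] with t ht
    exact Set.indicator_of_mem ht _
  have hw_end : ∀ s, Real.sin (k * s) = 0 → w =ᶠ[𝓝 s] fun _ => 0 := fun s hs => by
    have hc : Continuous fun s => (n : ℝ) * Real.sin (k * s) := by fun_prop
    filter_upwards [(isOpen_lt hc continuous_const).mem_nhds
      (show (n : ℝ) * Real.sin (k * s) < 1 by rw [hs]; simp)] with t ht
    by_cases h : t ∈ Set.Ioo 0 (π / k)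
    · rw [show w t = u t from Set.indicator_of_mem h _]
      exact cutId_eq_zero (le_of_lt ht)
    · exact Set.indicator_of_notMem h _
  have hw_out : ∀ s, s ∉ Set.Ioo 0 (π / k) → w =ᶠ[𝓝 s] fun _ => 0 := fun s hs => by
    by_cases h0 : s = 0
    · exact hw_end s (by simp [h0])
    by_cases h1 : s = π / k
    · exact hw_end s (by rw [h1, mul_div_cancel₀ _ hk.ne']; exact Real.sin_pi)
    · have : s ∈ (Set.Icc 0 (π / k))ᶜ := fun h =>
        hs ⟨lt_of_le_of_ne h.1 (Ne.symm h0), lt_of_le_of_ne h.2 h1⟩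
      filter_upwards [isClosed_Icc.isOpen_compl.mem_nhds this] with t ht
      exact Set.indicator_of_notMem (fun h => ht (Set.Ioo_subset_Icc_self h)) _
  refine ⟨w, ?_, ?_, ?_⟩
  · rw [contDiff_iff_contDiffAt]
    intro s
    by_cases hs : s ∈ Set.Ioo 0 (π / k)
    · exact hu_smooth.contDiffAt.congr_of_eventuallyEq (hw_in s hs)
    · exact contDiffAt_const.congr_of_eventuallyEq (hw_out s hs)
  · intro s hs
    by_contra h
    exact (notMem_tsupport_iff_eventuallyEq.2 (hw_out s h)) hs
  · rw [intervalIntegral.integral_of_le hL.le, integral_Ioc_eq_integral_Ioo] at hn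
    refine lt_of_eq_of_lt ?_ hn
    rw [← setIntegral_eq_integral_of_forall_compl_eq_zero (s := Set.Ioo 0 (π / k))]
    · refine setIntegral_congr_fun measurableSet_Ioo fun s hs => ?_
      rw [(hw_in s hs).deriv_eq, (hu' s).deriv, (hw_in s hs).eq_of_nhds]
    · intro s hs
      rw [(hw_out s hs).deriv_eq, (hw_out s hs).eq_of_nhds]
      simp

/-! ### Functions with separated variables -/

/-- The point `x` of the plane as a complex number. -/
def toC (x : E2) : ℂ := x 0 + x 1 * Complex.I

theorem contDiff_toC : ContDiff ℝ (⊤ : ℕ∞) toC := by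
  unfold toC
  have h : ∀ i : Fin 2, ContDiff ℝ (⊤ : ℕ∞) (fun x : E2 => ((x i : ℝ) : ℂ)) := fun i =>
    Complex.ofRealCLM.contDiff.comp (EuclideanSpace.proj (𝕜 := ℝ) i).contDiff
  exact (h 0).add ((h 1).mul contDiff_const)

theorem toC_ne_zero {x : E2} (hx : x ≠ 0) : toC x ≠ 0 := by
  intro h
  apply hx
  have h0 := congrArg Complex.re h
  have h1 := congrArg Complex.im h
  simp [toC] at h0 h1
  ext i
  fin_cases i <;> simp [h0, h1]

theorem toC_polPt (r θ : ℝ) : toC (polPt (r, θ)) = r * Complex.exp (θ * Complex.I) := by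
  rw [Complex.exp_mul_I]
  simp [toC, polPt]
  ring

/-- A `2π`-periodic function evaluated at the argument depends only on the class of the angle. -/
theorem periodic_arg {g : ℝ → ℂ} (hg : Function.Periodic g (2 * π)) {r α : ℝ} (hr : 0 < r) :
    g (Complex.arg (r * Complex.exp (α * Complex.I))) = g α := by
  rw [Complex.arg_real_mul _ hr, Complex.arg_exp_mul_I]
  rw [toIocMod, hg.sub_zsmul_eq]

theorem contDiffAt_arg {g : ℝ → ℂ} (hg : SmoothPer g) {x : E2} (hx : x ≠ 0) :
    ContDiffAt ℝ (⊤ : ℕ∞) (fun x => g (Complex.arg (toC x))) x := by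
  set z := toC x with hz
  have hz0 : z ≠ 0 := toC_ne_zero hx
  -- rotating the plane by `-arg z` moves the point away from the branch cut of the logarithm
  let c : ℂ := Complex.exp (-(Complex.arg z * Complex.I))
  have hzc : z * c = ‖z‖ := by
    nth_rw 1 [← Complex.norm_mul_exp_arg_mul_I z]
    rw [mul_assoc, ← Complex.exp_add]
    simp
  have hev : (fun x => g (Complex.arg (toC x))) =ᶠ[𝓝 x]
      fun x => g (Complex.arg z + (Complex.log (toC x * c)).im) := by
    filter_upwards [isOpen_ne.mem_nhds hx] with y hy
    have hy0 := toC_ne_zero hy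
    have hc : c ≠ 0 := Complex.exp_ne_zero _
    have hnc : ‖c‖ = 1 := by
      simp only [c]
      rw [← neg_mul, ← Complex.ofReal_neg, Complex.norm_exp_ofReal_mul_I]
    have h1 := Complex.norm_mul_exp_arg_mul_I (toC y * c)
    have h2 : toC y = ‖toC y‖ * Complex.exp (((Complex.arg z + (Complex.log (toC y * c)).im : ℝ) : ℂ) * Complex.I) := by
      rw [norm_mul, hnc, mul_one] at h1
      rw [Complex.log_im]
      push_cast
      rw [add_mul, Complex.exp_add, mul_left_comm, h1, mul_comm (toC y), ← mul_assoc, ← Complex.exp_add]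
      simp
    conv_lhs => rw [h2]
    exact periodic_arg hg.2 (norm_pos_iff.2 hy0)
  refine ContDiffAt.congr_of_eventuallyEq ?_ hev
  have hslit : toC x * c ∈ Complex.slitPlane := by
    rw [← hz, hzc]
    exact Complex.ofReal_mem_slitPlane.2 (norm_pos_iff.2 hz0)
  have hlog : ContDiffAt ℝ (⊤ : ℕ∞) (fun x => Complex.log (toC x * c)) x :=
    ContDiffAt.comp (g := Complex.log) x ((Complex.contDiffAt_log hslit).restrict_scalars ℝ)
      (contDiff_toC.mul contDiff_const).contDiffAt
  exact hg.1.contDiffAt.comp x (contDiffAt_const.add (Complex.imCLM.contDiff.contDiffAt.comp x hlog))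

/-- The function `Φ (log |x|) * g (arg x)` on the plane. -/
def trial (Φ g : ℝ → ℂ) (x : E2) : ℂ := Φ (Real.log ‖x‖) * g (Complex.arg (toC x))

theorem contDiff_trial {Φ g : ℝ → ℂ} (hΦ : ContDiff ℝ (⊤ : ℕ∞) Φ) (hg : SmoothPer g)
    (h0 : ∀ s ≤ 0, Φ s = 0) : ContDiff ℝ (⊤ : ℕ∞) (trial Φ g) := by
  rw [contDiff_iff_contDiffAt]
  intro x
  rcases lt_or_ge ‖x‖ 1 with h | h
  · refine (contDiffAt_const (c := (0 : ℂ))).congr_of_eventuallyEq ?_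
    filter_upwards [(isOpen_lt continuous_norm continuous_const).mem_nhds h] with y hy
    rw [trial, h0 _ (Real.log_nonpos (norm_nonneg _) (le_of_lt hy)), zero_mul]
  · have hx : x ≠ 0 := by rintro rfl; simp at h; linarith
    exact (hΦ.contDiffAt.comp x ((contDiffAt_norm ℝ hx).log (norm_ne_zero_iff.2 hx))).mul
      (contDiffAt_arg hg hx)

theorem trial_polPt {Φ g : ℝ → ℂ} (hg : SmoothPer g) {r : ℝ} (hr : 0 < r) (θ : ℝ) :
    trial Φ g (polPt (r, θ)) = Φ (Real.log r) * g θ := by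
  rw [trial, norm_polPt, toC_polPt, periodic_arg hg.2 hr, abs_of_pos hr]

/-! ### Energy of sums of separated functions -/

section
variable {a b : ℝ} {m : ℕ} {g : Fin m → ℝ → ℂ} {e : Fin m → ℝ}

/-- The linear combination `∑ A j * g j`. -/
def comb (g : Fin m → ℝ → ℂ) (A : Fin m → ℂ) (θ : ℝ) : ℂ := ∑ j, A j * g j θ

theorem comb_eq_sum (g : Fin m → ℝ → ℂ) (A : Fin m → ℂ) :
    comb g A = ∑ j, fun θ => A j * g j θ := by
  funext θ
  simp [comb]

theorem smoothPer_comb (hg : ∀ j, SmoothPer (g j)) (A : Fin m → ℂ) : SmoothPer (comb g A) := by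
  refine ⟨ContDiff.sum fun j _ => contDiff_const.mul (hg j).1, fun θ => ?_⟩
  simp only [comb, (hg _).2 θ]

theorem deriv_comb (hg : ∀ j, SmoothPer (g j)) (A : Fin m → ℂ) :
    deriv (comb g A) = comb (fun j => deriv (g j)) A := by
  funext θ
  exact (HasDerivAt.fun_sum fun j _ => ((hg j).differentiable θ).hasDerivAt.const_mul (A j)).deriv

theorem MathieuFamily.ip_comb (h : MathieuFamily a b g e) (A B : Fin m → ℂ) :
    ip (comb g A) (comb g B) = ∑ j, (starRingEnd ℂ) (A j) * B j := by
  have hg : ∀ j, SmoothPer (g j) := fun j => (h.sol j).smoothPer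
  have key : ∀ (j : Fin m) (A : Fin m → ℂ), ip (g j) (comb g A) = A j := fun j A => by
    rw [comb_eq_sum, ip_sum_right _ (hg j).continuous _ fun i => ((hg i).const_mul _).continuous]
    simp [ip_mul_right, h.orth]
  rw [comb_eq_sum g B, ip_sum_right _ (smoothPer_comb hg A).continuous _
    fun i => ((hg i).const_mul _).continuous]
  refine Finset.sum_congr rfl fun j _ => ?_
  rw [ip_mul_right, ← ip_conj_symm, key, mul_comm]

theorem MathieuFamily.integral_comb (h : MathieuFamily a b g e) (A : Fin m → ℂ) :
    ∫ θ in (-π)..π, ‖comb g A θ‖ ^ 2 = ∑ j, ‖A j‖ ^ 2 := by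
  have h1 := ip_self (comb g A)
  rw [h.ip_comb] at h1
  simp only [Complex.conj_mul'] at h1
  exact_mod_cast h1.symm

theorem MathieuFamily.mForm_comb (h : MathieuFamily a b g e) (A : Fin m → ℂ) :
    mForm b (comb g A) = ∑ j, e j * ‖A j‖ ^ 2 := by
  have hg : ∀ j, SmoothPer (g j) := fun j => (h.sol j).smoothPer
  have h1 : mathieuOp b 0 (comb g A) = comb g (fun j => e j * A j) := by
    funext t
    have h3 := fun j => (h.sol j).2.2 t
    simp only [_root_.mathieuOp, deriv_comb hg, deriv_comb (fun j => (hg j).deriv)]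
    simp only [comb, Finset.mul_sum]
    rw [← Finset.sum_add_distrib, ← Finset.sum_add_distrib]
    refine Finset.sum_congr rfl fun j _ => ?_
    rw [Complex.ofReal_zero]
    linear_combination A j * h3 j
  have h2 := ip_self_mathieuOp b 0 (smoothPer_comb hg A)
  rw [h1, h.ip_comb] at h2
  have h4 : ∀ j, (starRingEnd ℂ) (A j) * (e j * A j) = ((e j * ‖A j‖ ^ 2 : ℝ) : ℂ) := fun j => by
    rw [mul_left_comm, Complex.conj_mul']; push_cast; rfl
  simp only [h4, zero_mul, zero_add] at h2
  exact_mod_cast h2.symm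

/-- The energy density, in the variable `s = log r`, of a function `∑ Φ j (log r) * g j θ`. -/
def radDensity (a κ : ℝ) (e : Fin m → ℝ) (Φ : Fin m → ℝ → ℂ) (s : ℝ) : ℝ :=
  ∑ j, (‖deriv (Φ j) s‖ ^ 2 - (a - e j - κ * Real.exp (2 * s)) * ‖Φ j s‖ ^ 2)

/-- Orthonormality of the family decouples the channels; the factor `r⁻¹` is `ds / dr` for
`s = log r`. -/
theorem MathieuFamily.polEnergy_comb (h : MathieuFamily a b g e) (κ : ℝ) {Φ : Fin m → ℝ → ℂ}
    (hΦ : ∀ j, ContDiff ℝ (⊤ : ℕ∞) (Φ j)) {V : ℝ × ℝ → ℂ} (hV : ContDiff ℝ (⊤ : ℕ∞) V)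
    (hVe : ∀ r, 0 < r → ∀ θ, V (r, θ) = comb g (fun j => Φ j (Real.log r)) θ) {r : ℝ} (hr : 0 < r) :
    polEnergy a b κ V r = radDensity a κ e Φ (Real.log r) * r⁻¹ := by
  have hg : ∀ j, SmoothPer (g j) := fun j => (h.sol j).smoothPer
  have hT : ∀ θ, dT V (r, θ) = deriv (comb g (fun j => Φ j (Real.log r))) θ := fun θ => by
    have h1 := (hasDerivAt_dT hV r θ).deriv
    rw [← h1, show (fun θ => V (r, θ)) = _ from funext fun θ => hVe r hr θ]
  have hR : ∀ θ, dR V (r, θ) = comb g (fun j => (r⁻¹ : ℝ) * deriv (Φ j) (Real.log r)) θ := fun θ => by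
    have h1 := hasDerivAt_dR hV r θ
    have h2 : (fun r => V (r, θ)) =ᶠ[𝓝 r] fun r => comb g (fun j => Φ j (Real.log r)) θ := by
      filter_upwards [Ioi_mem_nhds hr] with t ht
      exact hVe t ht θ
    refine h1.unique (HasDerivAt.congr_of_eventuallyEq ?_ h2)
    refine HasDerivAt.fun_sum fun j _ => HasDerivAt.mul_const ?_ _
    have h3 : HasDerivAt (Φ j) (deriv (Φ j) (Real.log r)) (Real.log r) :=
      ((hΦ j).differentiable (by simp) _).hasDerivAt
    exact (h3.scomp r (Real.hasDerivAt_log hr.ne')).congr_deriv (by simp)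
  rw [polEnergy_split a b κ hV r]
  simp only [hT, hR, hVe r hr]
  have hm : ∫ θ in (-π)..π, (‖deriv (comb g (fun j => Φ j (Real.log r))) θ‖ ^ 2 -
      b * Real.cos θ * ‖comb g (fun j => Φ j (Real.log r)) θ‖ ^ 2) = _ :=
    h.mForm_comb (fun j => Φ j (Real.log r))
  rw [hm, h.integral_comb, h.integral_comb, radDensity, Finset.mul_sum, Finset.mul_sum, Finset.mul_sum,
    ← Finset.sum_sub_distrib, Finset.mul_sum, Finset.sum_mul, ← Finset.sum_add_distrib,
    ← Finset.sum_add_distrib]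
  refine Finset.sum_congr rfl fun j _ => ?_
  rw [norm_mul, Complex.norm_real, Real.norm_eq_abs, abs_of_pos (inv_pos.2 hr), two_mul,
    Real.exp_add, Real.exp_log hr]
  field_simp
  ring

theorem continuous_radDensity (a κ : ℝ) (e : Fin m → ℝ) {Φ : Fin m → ℝ → ℂ}
    (hΦ : ∀ j, ContDiff ℝ (⊤ : ℕ∞) (Φ j)) : Continuous (radDensity a κ e Φ) := by
  unfold radDensity
  refine continuous_finsetSum _ fun j _ => ?_
  have h1 := (hΦ j).continuous
  have h2 : Continuous (deriv (Φ j)) := (hΦ j).continuous_deriv (by simp)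
  fun_prop

/-- The form of `∑ Φ_j(log |x|) g_j(arg x)`, with profiles supported in `[0, T]`, as an integral in
`s = log |x|`. -/
theorem MathieuFamily.qForm_trial (h : MathieuFamily a b g e) (E : ℝ) {Φ : Fin m → ℝ → ℂ}
    (hΦ : ∀ j, ContDiff ℝ (⊤ : ℕ∞) (Φ j)) {T : ℝ} (hT : 0 ≤ T) (h0 : ∀ j, ∀ s ≤ 0, Φ j s = 0)
    (h1 : ∀ j, ∀ s, T ≤ s → Φ j s = 0) :
    qForm a b E (∑ j, trial (Φ j) (g j)) = ∫ s in (0 : ℝ)..(T + 1), radDensity a (-E) e Φ s := by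
  have hg : ∀ j, SmoothPer (g j) := fun j => (h.sol j).smoothPer
  have hψ : ContDiff ℝ (⊤ : ℕ∞) (∑ j, trial (Φ j) (g j)) := by
    rw [show (∑ j, trial (Φ j) (g j)) = fun x => ∑ j, trial (Φ j) (g j) x by ext; simp]
    exact ContDiff.sum fun j _ => contDiff_trial (hΦ j) (hg j) (h0 j)
  have hS1 : 1 ≤ Real.exp (T + 1) := Real.one_le_exp (by linarith)
  have hsupp : tsupport (∑ j, trial (Φ j) (g j)) ⊆ Metric.ball 0 (Real.exp (T + 1)) := by
    refine (closure_minimal (t := Metric.closedBall (0 : E2) (Real.exp T)) ?_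
      Metric.isClosed_closedBall).trans (Metric.closedBall_subset_ball (Real.exp_lt_exp.2 (by linarith)))
    intro x hx
    by_contra hx'
    rw [mem_closedBall_zero_iff, not_le] at hx'
    apply hx
    rw [Finset.sum_apply]
    refine Finset.sum_eq_zero fun j _ => ?_
    rw [trial, h1 j _ ((Real.lt_log_iff_exp_lt ((Real.exp_pos T).trans hx')).2 hx').le, zero_mul]
  rw [qForm_eq a b E hψ _ hS1 hsupp]
  have hpe : ∀ r ∈ Set.uIcc 1 (Real.exp (T + 1)),
      polEnergy a b (-E) (fun p => (∑ j, trial (Φ j) (g j)) (polPt p)) r =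
        (radDensity a (-E) e Φ ∘ Real.log) r * r⁻¹ := fun r hr => by
    rw [Set.uIcc_of_le hS1] at hr
    refine h.polEnergy_comb (-E) hΦ (hψ.comp contDiff_polPt) (fun r hr θ => ?_) (by linarith [hr.1])
    simp [comb, trial_polPt (hg _) hr]
  rw [intervalIntegral.integral_congr hpe, intervalIntegral.integral_comp_mul_deriv,
    Real.log_one, Real.log_exp]
  · intro r hr
    rw [Set.uIcc_of_le hS1] at hr
    exact Real.hasDerivAt_log (by linarith [hr.1])
  · rw [Set.uIcc_of_le hS1]
    exact continuousOn_inv₀.mono fun r hr => (one_pos.trans_le hr.1).ne'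
  · exact continuous_radDensity _ _ _ hΦ

end

/-! ### The lower bound -/

theorem norm_sum_sq_of_disjoint {n : ℕ} {f : Fin n → ℂ} (hf : ∀ i j, i ≠ j → f i = 0 ∨ f j = 0) :
    ‖∑ i, f i‖ ^ 2 = ∑ i, ‖f i‖ ^ 2 := by
  by_cases h : ∀ i, f i = 0
  · simp [h]
  · push Not at h
    obtain ⟨i, hi⟩ := h
    have h0 : ∀ j, j ≠ i → f j = 0 := fun j hj => (hf j i hj).resolve_right hi
    rw [Finset.sum_eq_single i (fun j _ hj => h0 j hj) (by simp),
      Finset.sum_eq_single i (fun j _ hj => by simp [h0 j hj]) (by simp)]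

/-- A combination of `n` consecutive translates of the profile `w`, the `i`-th one by `i * L`. -/
def chain (w : ℝ → ℝ) (L : ℝ) {n : ℕ} (c : Fin n → ℂ) (s : ℝ) : ℂ :=
  ∑ i : Fin n, c i * ((w (s - i * L) : ℝ) : ℂ)

section
variable {w : ℝ → ℝ} {L : ℝ} {n : ℕ}

theorem contDiff_chain (hw : ContDiff ℝ (⊤ : ℕ∞) w) (c : Fin n → ℂ) :
    ContDiff ℝ (⊤ : ℕ∞) (chain w L c) :=
  ContDiff.sum fun _ _ => contDiff_const.mul
    (Complex.ofRealCLM.contDiff.comp (hw.comp (contDiff_id.sub contDiff_const)))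

theorem eq_zero_of_notMem_Ioo (hs : tsupport w ⊆ Set.Ioo 0 L) {s : ℝ} (h : s ∉ Set.Ioo 0 L) :
    w s = 0 ∧ deriv w s = 0 := by
  have h1 : s ∉ tsupport w := fun h' => h (hs h')
  exact ⟨image_eq_zero_of_notMem_tsupport h1,
    Function.notMem_support.1 fun h2 => h1 (support_deriv_subset h2)⟩

theorem chain_eq_zero_left (hL : 0 < L) (hs : tsupport w ⊆ Set.Ioo 0 L) (c : Fin n → ℂ) {s : ℝ}
    (h : s ≤ 0) : chain w L c s = 0 := by
  refine Finset.sum_eq_zero fun i _ => ?_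
  have : (0 : ℝ) ≤ (i : ℕ) * L := by positivity
  rw [(eq_zero_of_notMem_Ioo hs fun h' => by linarith [h'.1]).1]
  simp

theorem chain_eq_zero_right (hL : 0 < L) (hs : tsupport w ⊆ Set.Ioo 0 L) (c : Fin n → ℂ) {s : ℝ}
    (h : n * L ≤ s) : chain w L c s = 0 := by
  refine Finset.sum_eq_zero fun i _ => ?_
  have h1 : ((i : ℕ) : ℝ) + 1 ≤ n := by exact_mod_cast i.2
  have h2 := mul_le_mul_of_nonneg_right h1 hL.le
  rw [(eq_zero_of_notMem_Ioo hs fun h' => by linarith [h'.2]).1]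
  simp

theorem hasDerivAt_chain (hw : ContDiff ℝ (⊤ : ℕ∞) w) (c : Fin n → ℂ) (s : ℝ) :
    HasDerivAt (chain w L c) (∑ i : Fin n, c i * ((deriv w (s - i * L) : ℝ) : ℂ)) s := by
  refine HasDerivAt.fun_sum fun i _ => HasDerivAt.const_mul _ (HasDerivAt.ofReal_comp ?_)
  have h1 : HasDerivAt w (deriv w (s - i * L)) (s - i * L) :=
    (hw.differentiable (by simp) _).hasDerivAt
  exact h1.comp_sub_const s _

/-- The translates have disjoint supports, so the energy of a chain splits; the perturbation
`κ * exp (2 * s)` is absorbed by lowering the constant from `A` to `K ^ 2`. -/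
theorem chain_density_le (hw : ContDiff ℝ (⊤ : ℕ∞) w) (hL : 0 < L) (hs : tsupport w ⊆ Set.Ioo 0 L)
    (c : Fin n → ℂ) {A K κ : ℝ} (hκ : 0 ≤ κ) (hn : κ * Real.exp (2 * (n * L)) ≤ A - K ^ 2) (s : ℝ) :
    ‖deriv (chain w L c) s‖ ^ 2 - (A - κ * Real.exp (2 * s)) * ‖chain w L c s‖ ^ 2 ≤
      ∑ i : Fin n, ‖c i‖ ^ 2 * (deriv w (s - i * L) ^ 2 - K ^ 2 * w (s - i * L) ^ 2) := by
  have hdis : ∀ i j : Fin n, i ≠ j → s - i * L ∉ Set.Ioo 0 L ∨ s - j * L ∉ Set.Ioo 0 L := by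
    intro i j hij
    by_contra! hh
    obtain ⟨⟨h1, h2⟩, h3, h4⟩ := hh
    have key : ∀ i j : Fin n, i < j → s - i * L < L → 0 < s - j * L → False := by
      intro i j hlt h5 h6
      have h7 : ((i : ℕ) : ℝ) + 1 ≤ (j : ℕ) := by exact_mod_cast hlt
      have h8 := mul_le_mul_of_nonneg_right h7 hL.le
      linarith
    rcases lt_or_gt_of_ne hij with h | h
    · exact key i j h h2 h3
    · exact key j i h h4 h1
  rw [(hasDerivAt_chain hw c s).deriv, chain,
    norm_sum_sq_of_disjoint fun i j hij => (hdis i j hij).imp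
      (fun h => by rw [(eq_zero_of_notMem_Ioo hs h).2]; simp)
      (fun h => by rw [(eq_zero_of_notMem_Ioo hs h).2]; simp),
    norm_sum_sq_of_disjoint fun i j hij => (hdis i j hij).imp
      (fun h => by rw [(eq_zero_of_notMem_Ioo hs h).1]; simp)
      (fun h => by rw [(eq_zero_of_notMem_Ioo hs h).1]; simp),
    Finset.mul_sum, ← Finset.sum_sub_distrib]
  refine Finset.sum_le_sum fun i _ => ?_
  simp only [norm_mul, Complex.norm_real, Real.norm_eq_abs, mul_pow, sq_abs]
  by_cases h : s - i * L ∈ Set.Ioo 0 L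
  · have h1 : ((i : ℕ) : ℝ) + 1 ≤ n := by exact_mod_cast i.2
    have h2 := mul_le_mul_of_nonneg_right h1 hL.le
    have h3 : Real.exp (2 * s) ≤ Real.exp (2 * (n * L)) := Real.exp_le_exp.2 (by linarith [h.2])
    have h4 := mul_le_mul_of_nonneg_left h3 hκ
    have h5 : K ^ 2 ≤ A - κ * Real.exp (2 * s) := by linarith
    have h6 := mul_le_mul_of_nonneg_right h5 (show 0 ≤ ‖c i‖ ^ 2 * w (s - i * L) ^ 2 by positivity)
    linarith
  · rw [(eq_zero_of_notMem_Ioo hs h).1, (eq_zero_of_notMem_Ioo hs h).2]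
    simp

theorem integral_translate (hL : 0 < L) (hs : tsupport w ⊆ Set.Ioo 0 L) (K : ℝ) (i : Fin n) {T : ℝ}
    (hT : n * L ≤ T) :
    ∫ s in (0 : ℝ)..T, (deriv w (s - i * L) ^ 2 - K ^ 2 * w (s - i * L) ^ 2) =
      ∫ s, (deriv w s ^ 2 - K ^ 2 * w s ^ 2) := by
  rw [intervalIntegral.integral_comp_sub_right (fun s => deriv w s ^ 2 - K ^ 2 * w s ^ 2) (i * L)]
  refine intervalIntegral.integral_eq_integral_of_support_subset fun s hs' => ?_
  have h1 : ((i : ℕ) : ℝ) + 1 ≤ n := by exact_mod_cast i.2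
  have h2 := mul_le_mul_of_nonneg_right h1 hL.le
  have h3 : (0 : ℝ) ≤ (i : ℕ) * L := by positivity
  by_cases h : s ∈ Set.Ioo 0 L
  · exact ⟨by linarith [h.1], by linarith [h.2]⟩
  · exfalso
    apply hs'
    simp [(eq_zero_of_notMem_Ioo hs h).1, (eq_zero_of_notMem_Ioo hs h).2]

end

section
variable {a b E : ℝ} {m : ℕ} {g : Fin m → ℝ → ℂ} {e : Fin m → ℝ}

/-- For each channel `j`, the `n j` consecutive translates of a bump on an interval of length `π / k j`
span, times `g j`, a subspace on which the form is negative. The hypothesis `hn` says that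
`-E e^{2s}` stays below the gap `a - e j - K j ^ 2` on the supports. -/
theorem MathieuFamily.lower_bound (h : MathieuFamily a b g e) (hE : E < 0) {k K : Fin m → ℝ}
    (hk : ∀ j, 0 < k j) (hkK : ∀ j, k j < K j) (n : Fin m → ℕ)
    (hn : ∀ j, -E * Real.exp (2 * (n j * (π / k j))) ≤ a - e j - K j ^ 2) :
    ((∑ j, n j : ℕ) : ℕ∞) ≤ negIndexOn
      (fun ψ : E2 → ℂ => ContDiff ℝ (⊤ : ℕ∞) ψ ∧ HasCompactSupport ψ) (qForm a b E) := by
  choose w hw hs hI using fun j => exists_bump (hk j) (hkK j)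
  have hg : ∀ j, SmoothPer (g j) := fun j => (h.sol j).smoothPer
  have hL : ∀ j, 0 < π / k j := fun j => div_pos pi_pos (hk j)
  set T : ℝ := ∑ j, n j * (π / k j) with hT
  have hTj : ∀ j, n j * (π / k j) ≤ T := fun j =>
    Finset.single_le_sum (f := fun j => (n j : ℝ) * (π / k j))
      (fun j _ => mul_nonneg (Nat.cast_nonneg _) (hL j).le) (Finset.mem_univ j)
  have hT0 : 0 ≤ T := Finset.sum_nonneg fun j _ => mul_nonneg (Nat.cast_nonneg _) (hL j).le
  -- the trial functions, as a linear map in the coefficients of the bumps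
  let τ : ((Σ j, Fin (n j)) → ℂ) →ₗ[ℂ] (E2 → ℂ) := Fintype.linearCombination ℂ
    (fun p : (Σ j, Fin (n j)) => trial (fun s => ((w p.1 (s - p.2 * (π / k p.1)) : ℝ) : ℂ)) (g p.1))
  let Φ : ((Σ j, Fin (n j)) → ℂ) → Fin m → ℝ → ℂ := fun c j =>
    chain (w j) (π / k j) (fun i => c ⟨j, i⟩)
  have hτ : ∀ c, τ c = ∑ j, trial (Φ c j) (g j) := fun c => by
    funext x
    simp only [τ, Fintype.linearCombination_apply, Fintype.sum_sigma, Finset.sum_apply, Pi.smul_apply,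
      smul_eq_mul, trial, Φ, chain, Finset.sum_mul, mul_assoc]
  have hΦ : ∀ c j, ContDiff ℝ (⊤ : ℕ∞) (Φ c j) := fun c j => contDiff_chain (hw j) _
  have hΦ0 : ∀ c j, ∀ s ≤ 0, Φ c j s = 0 := fun c j s hs' => chain_eq_zero_left (hL j) (hs j) _ hs'
  have hΦ1 : ∀ c j, ∀ s, T ≤ s → Φ c j s = 0 := fun c j s hs' =>
    chain_eq_zero_right (hL j) (hs j) _ ((hTj j).trans hs')
  have hneg : ∀ c, c ≠ 0 → qForm a b E (τ c) < 0 := by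
    intro c hc
    rw [hτ, h.qForm_trial E (hΦ c) hT0 (hΦ0 c) (hΦ1 c)]
    have hcont : ∀ (j : Fin m) (i : Fin (n j)), Continuous fun s : ℝ => ‖c ⟨j, i⟩‖ ^ 2 *
        (deriv (w j) (s - i * (π / k j)) ^ 2 - K j ^ 2 * w j (s - i * (π / k j)) ^ 2) := fun j i => by
      have h1 := (hw j).continuous
      have h2 : Continuous (deriv (w j)) := (hw j).continuous_deriv (by simp)
      fun_prop
    have hle : (∫ s in (0 : ℝ)..(T + 1), radDensity a (-E) e (Φ c) s) ≤
        ∫ s in (0 : ℝ)..(T + 1), ∑ j, ∑ i : Fin (n j), ‖c ⟨j, i⟩‖ ^ 2 *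
          (deriv (w j) (s - i * (π / k j)) ^ 2 - K j ^ 2 * w j (s - i * (π / k j)) ^ 2) := by
      refine intervalIntegral.integral_mono_on (by linarith)
        ((continuous_radDensity _ _ _ (hΦ c)).intervalIntegrable _ _)
        (Continuous.intervalIntegrable (continuous_finsetSum _ fun j _ =>
          continuous_finsetSum _ fun i _ => hcont j i) _ _) fun s _ => ?_
      exact Finset.sum_le_sum fun j _ => chain_density_le (hw j) (hL j) (hs j) _ (by linarith) (hn j) s
    refine lt_of_le_of_lt hle ?_
    rw [intervalIntegral.integral_finsetSum fun j _ => Continuous.intervalIntegrable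
      (continuous_finsetSum _ fun i _ => hcont j i) _ _]
    have hj : ∀ j, (∫ s in (0 : ℝ)..(T + 1), ∑ i : Fin (n j), ‖c ⟨j, i⟩‖ ^ 2 *
          (deriv (w j) (s - i * (π / k j)) ^ 2 - K j ^ 2 * w j (s - i * (π / k j)) ^ 2)) =
        ∑ i : Fin (n j), ‖c ⟨j, i⟩‖ ^ 2 * ∫ s, (deriv (w j) s ^ 2 - K j ^ 2 * w j s ^ 2) := fun j => by
      rw [intervalIntegral.integral_finsetSum fun i _ => (hcont j i).intervalIntegrable _ _]
      refine Finset.sum_congr rfl fun i _ => ?_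
      rw [intervalIntegral.integral_const_mul, integral_translate (hL j) (hs j) _ i
        (by linarith [hTj j])]
    simp only [hj]
    rw [← Fintype.sum_sigma' (f := fun j (i : Fin (n j)) => ‖c ⟨j, i⟩‖ ^ 2 *
      ∫ s, (deriv (w j) s ^ 2 - K j ^ 2 * w j s ^ 2))]
    obtain ⟨p, hp⟩ := Function.ne_iff.1 hc
    refine Finset.sum_neg' (fun p _ => mul_nonpos_of_nonneg_of_nonpos (sq_nonneg _) (hI _).le)
      ⟨p, Finset.mem_univ _, mul_neg_of_pos_of_neg ?_ (hI _)⟩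
    exact pow_pos (norm_pos_iff.2 hp) 2
  have hinj : Function.Injective τ := by
    rw [← LinearMap.ker_eq_bot, LinearMap.ker_eq_bot']
    intro c hc
    by_contra hc0
    have := hneg c hc0
    rw [hc] at this
    simp [qForm] at this
  have hmem : LinearMap.range τ ∈ {W : Submodule ℂ (E2 → ℂ) | (W : Set (E2 → ℂ)) ⊆
      {ψ | ContDiff ℝ (⊤ : ℕ∞) ψ ∧ HasCompactSupport ψ} ∧ ∀ ψ ∈ W, ψ ≠ 0 → qForm a b E ψ < 0} := by
    refine ⟨?_, ?_⟩
    · rintro _ ⟨c, rfl⟩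
      rw [hτ]
      refine ⟨?_, ?_⟩
      · rw [show (∑ j, trial (Φ c j) (g j)) = fun x => ∑ j, trial (Φ c j) (g j) x by ext; simp]
        exact ContDiff.sum fun j _ => contDiff_trial (hΦ c j) (hg j) (hΦ0 c j)
      · refine HasCompactSupport.intro (isCompact_closedBall (0 : E2) (Real.exp T)) fun x hx => ?_
        rw [mem_closedBall_zero_iff, not_le] at hx
        rw [Finset.sum_apply]
        refine Finset.sum_eq_zero fun j _ => ?_
        rw [trial, hΦ1 c j _ ((Real.lt_log_iff_exp_lt ((Real.exp_pos T).trans hx)).2 hx).le, zero_mul]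
    · rintro _ ⟨c, rfl⟩ hc
      exact hneg c (by rintro rfl; simp at hc)
  have hfin : Module.finrank ℂ (LinearMap.range τ) = ∑ j, n j := by
    rw [LinearMap.finrank_range_of_inj hinj]
    simp
  unfold negIndexOn
  rw [← hfin]
  exact le_iSup₂ (f := fun (W : Submodule ℂ (E2 → ℂ)) (_ : W ∈ {W : Submodule ℂ (E2 → ℂ) |
    (W : Set (E2 → ℂ)) ⊆ {ψ | ContDiff ℝ (⊤ : ℕ∞) ψ ∧ HasCompactSupport ψ} ∧
      ∀ ψ ∈ W, ψ ≠ 0 → qForm a b E ψ < 0}) => (Module.finrank ℂ W : ℕ∞)) _ hmem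

end

/-! ### Asymptotics -/

theorem tendsto_neg_log_neg :
    Tendsto (fun E : ℝ => -Real.log (-E)) (𝓝[<] 0) atTop := by
  refine tendsto_neg_atBot_atTop.comp (Real.tendsto_log_nhdsGT_zero.comp ?_)
  refine tendsto_nhdsWithin_iff.2 ⟨?_, ?_⟩
  · have : Tendsto (fun E : ℝ => -E) (𝓝 0) (𝓝 (-0)) := continuous_neg.tendsto 0
    rw [neg_zero] at this
    exact this.mono_left nhdsWithin_le_nhds
  · filter_upwards [self_mem_nhdsWithin] with E hE
    exact neg_pos.2 (Set.mem_Iio.1 hE)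

theorem tendsto_cutLog_div (a : ℝ) {b : ℝ} (hb : 0 < b) :
    Tendsto (fun E : ℝ => cutLog a b E / (-Real.log (-E))) (𝓝[<] 0) (𝓝 (1 / 2)) := by
  have hB : 0 < |a| + b := by positivity
  have h1 : Tendsto (fun E : ℝ => Real.log (-E + (|a| + b))) (𝓝[<] 0) (𝓝 (Real.log (|a| + b))) := by
    have h2 : ContinuousAt (fun E : ℝ => Real.log (-E + (|a| + b))) 0 :=
      ContinuousAt.log (by fun_prop) (by simpa using hB.ne')
    have h3 := h2.tendsto
    simp only [neg_zero, zero_add] at h3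
    exact h3.mono_left nhdsWithin_le_nhds
  have h2 := ((h1.div_atTop tendsto_neg_log_neg).add_const 1).div_const 2
  rw [zero_add] at h2
  refine h2.congr' ?_
  filter_upwards [self_mem_nhdsWithin, tendsto_neg_log_neg.eventually_gt_atTop 0] with E hE hΛ
  have hE' : 0 < -E := neg_pos.2 hE
  have h4 : 1 + (|a| + b) / (-E) = (-E + (|a| + b)) / (-E) := by
    rw [add_div (-E), div_self hE'.ne']
  rw [cutLog, h4, Real.log_div (by positivity) hE'.ne']
  generalize Real.log (-E) = l at *
  have : l ≠ 0 := by rintro rfl; simp at hΛ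
  field_simp
  ring

section
variable {a b : ℝ} {m : ℕ} {g : Fin m → ℝ → ℂ} {e : Fin m → ℝ}

/-- The counting function: the negativity index of `qForm a b E` on test functions. -/
def negCount (a b E : ℝ) : ℕ∞ :=
  negIndexOn (fun ψ : E2 → ℂ => ContDiff ℝ (⊤ : ℕ∞) ψ ∧ HasCompactSupport ψ) (qForm a b E)

theorem MathieuFamily.negCount_ne_top (h : MathieuFamily a b g e) (hb : 0 ≤ b) {E : ℝ} (hE : E < 0) :
    negCount a b E ≠ ⊤ :=
  ne_top_of_le_ne_top (ENat.natCast_ne_top _) (h.upper_bound hb hE)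

/-- The upper bound counts at most `∑ (k_j L / π + 2)` dimensions with `L / |log (-E)| → 1 / 2`. -/
theorem MathieuFamily.eventually_lt (h : MathieuFamily a b g e) (hb : 0 < b) {u : ℝ}
    (hu : (∑ j, Real.sqrt (a - e j)) / (2 * π) < u) :
    ∀ᶠ E in 𝓝[<] (0 : ℝ), ((negCount a b E).toNat : ℝ) / (-Real.log (-E)) < u := by
  have hlim : Tendsto (fun E : ℝ => ∑ j, (Real.sqrt (a - e j) / π * (cutLog a b E / (-Real.log (-E)))
      + 2 / (-Real.log (-E)))) (𝓝[<] 0) (𝓝 (∑ j, (Real.sqrt (a - e j) / π * (1 / 2) + 0))) :=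
    tendsto_finsetSum _ fun j _ => ((tendsto_cutLog_div a hb).const_mul _).add
      (tendsto_const_nhds.div_atTop tendsto_neg_log_neg)
  have hval : ∑ j, (Real.sqrt (a - e j) / π * (1 / 2) + 0) = (∑ j, Real.sqrt (a - e j)) / (2 * π) := by
    rw [Finset.sum_div]
    refine Finset.sum_congr rfl fun j _ => ?_
    field_simp
    ring
  rw [hval] at hlim
  filter_upwards [hlim.eventually_lt_const hu, self_mem_nhdsWithin,
    tendsto_neg_log_neg.eventually_gt_atTop 0] with E h1 hE hΛ
  refine lt_of_le_of_lt ?_ h1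
  have h2 : (negCount a b E).toNat ≤ ∑ j, (nBlocks (Real.sqrt (a - e j)) (cutLog a b E) + 1) := by
    have := h.upper_bound hb.le hE
    exact ENat.toNat_le_of_le_natCast this
  have h3 : ((negCount a b E).toNat : ℝ) ≤
      ∑ j, (Real.sqrt (a - e j) * cutLog a b E / π + 2) := by
    refine (show ((negCount a b E).toNat : ℝ) ≤
      ((∑ j, (nBlocks (Real.sqrt (a - e j)) (cutLog a b E) + 1) : ℕ) : ℝ) by exact_mod_cast h2).trans ?_
    push_cast
    refine Finset.sum_le_sum fun j _ => ?_
    have hE' : 0 < -E := neg_pos.2 hE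
    have hc : 0 ≤ cutLog a b E := by
      unfold cutLog
      have : 0 ≤ (|a| + b) / (-E) := by positivity
      have := Real.log_nonneg (show 1 ≤ 1 + (|a| + b) / (-E) by linarith)
      linarith
    have := Nat.floor_le (show 0 ≤ Real.sqrt (a - e j) * cutLog a b E / π by positivity)
    unfold nBlocks
    push_cast
    linarith
  rw [div_le_iff₀ hΛ, Finset.sum_mul]
  refine h3.trans (le_of_eq (Finset.sum_congr rfl fun j _ => ?_))
  rw [add_mul, mul_assoc, div_mul_cancel₀ _ hΛ.ne', div_mul_cancel₀ _ hΛ.ne']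
  ring

/-- The lower bound with `k = (1 - 2δ) k_j`, `K = (1 - δ) k_j` and
`n_j = ⌊k (log η_j - log (-E)) / (2π)⌋`, the largest number of bumps allowed by the gap
`η_j = k_j² - K²`. -/
theorem MathieuFamily.eventually_gt (h : MathieuFamily a b g e) (hb : 0 < b) {l : ℝ}
    (hl : l < (∑ j, Real.sqrt (a - e j)) / (2 * π)) :
    ∀ᶠ E in 𝓝[<] (0 : ℝ), l < ((negCount a b E).toNat : ℝ) / (-Real.log (-E)) := by
  obtain ⟨δ, hδ0, hδ1, hδ⟩ : ∃ δ : ℝ, 0 < δ ∧ δ < 1 / 2 ∧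
      l < (1 - 2 * δ) * ((∑ j, Real.sqrt (a - e j)) / (2 * π)) := by
    have hc : Tendsto (fun δ : ℝ => (1 - 2 * δ) * ((∑ j, Real.sqrt (a - e j)) / (2 * π))) (𝓝[>] 0)
        (𝓝 ((1 - 2 * 0) * ((∑ j, Real.sqrt (a - e j)) / (2 * π)))) :=
      (Continuous.tendsto (by fun_prop) 0).mono_left nhdsWithin_le_nhds
    rw [mul_zero, sub_zero, one_mul] at hc
    obtain ⟨δ, h1, h2, h3⟩ := ((hc.eventually_const_lt hl).and (Filter.Eventually.and
      self_mem_nhdsWithin (nhdsWithin_le_nhds (Iio_mem_nhds (show (0 : ℝ) < 1 / 2 by norm_num))))).exists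
    exact ⟨δ, h2, h3, h1⟩
  have hk : ∀ j, 0 < Real.sqrt (a - e j) := fun j => Real.sqrt_pos.2 (by linarith [h.lt j])
  set k : Fin m → ℝ := fun j => (1 - 2 * δ) * Real.sqrt (a - e j) with hkdef
  set K : Fin m → ℝ := fun j => (1 - δ) * Real.sqrt (a - e j) with hKdef
  have hk0 : ∀ j, 0 < k j := fun j => mul_pos (by linarith) (hk j)
  have hkK : ∀ j, k j < K j := fun j => mul_lt_mul_of_pos_right (by linarith) (hk j)
  have hη : ∀ j, 0 < a - e j - K j ^ 2 := fun j => by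
    have h1 : Real.sqrt (a - e j) ^ 2 = a - e j := Real.sq_sqrt (by linarith [h.lt j])
    have h2 := h.lt j
    have h3 : (1 - δ) ^ 2 < 1 := by nlinarith
    simp only [hKdef, mul_pow, h1]
    nlinarith
  set η : Fin m → ℝ := fun j => a - e j - K j ^ 2 with hηdef
  have hlim : Tendsto (fun E : ℝ => ∑ j, (k j / (2 * π) * (Real.log (η j) / (-Real.log (-E)) + 1)
      - 1 / (-Real.log (-E)))) (𝓝[<] 0) (𝓝 (∑ j, (k j / (2 * π) * (0 + 1) - 0))) :=
    tendsto_finsetSum _ fun j _ => (((tendsto_const_nhds.div_atTop tendsto_neg_log_neg).add_const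
      1).const_mul _).sub (tendsto_const_nhds.div_atTop tendsto_neg_log_neg)
  have hval : ∑ j, (k j / (2 * π) * (0 + 1) - 0) =
      (1 - 2 * δ) * ((∑ j, Real.sqrt (a - e j)) / (2 * π)) := by
    rw [Finset.sum_div, Finset.mul_sum]
    refine Finset.sum_congr rfl fun j _ => ?_
    simp only [hkdef]
    ring
  rw [hval] at hlim
  have hlarge : ∀ᶠ E in 𝓝[<] (0 : ℝ), ∀ j, -Real.log (η j) ≤ -Real.log (-E) :=
    eventually_all.2 fun j => tendsto_neg_log_neg.eventually_ge_atTop _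
  filter_upwards [hlim.eventually_const_lt hδ, self_mem_nhdsWithin,
    tendsto_neg_log_neg.eventually_gt_atTop 0, hlarge] with E h1 hE hΛ hlg
  refine lt_of_lt_of_le h1 ?_
  have hE' : 0 < -E := neg_pos.2 hE
  let n : Fin m → ℕ := fun j => ⌊k j / (2 * π) * (Real.log (η j) - Real.log (-E))⌋₊
  have hn0 : ∀ j, 0 ≤ k j / (2 * π) * (Real.log (η j) - Real.log (-E)) := fun j =>
    mul_nonneg (div_nonneg (hk0 j).le (by positivity)) (by linarith [hlg j])
  have hn : ∀ j, -E * Real.exp (2 * (n j * (π / k j))) ≤ η j := fun j => by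
    have h2 := Nat.floor_le (hn0 j)
    have hkj := hk0 j
    have h3 : 2 * ((n j : ℝ) * (π / k j)) ≤ Real.log (η j) - Real.log (-E) := by
      have h4 := mul_le_mul_of_nonneg_right h2 (show 0 ≤ 2 * π / k j by positivity)
      refine le_trans (le_of_eq ?_) (h4.trans (le_of_eq ?_))
      · ring
      · field_simp
    have h4 := mul_le_mul_of_nonneg_left (Real.exp_le_exp.2 h3) hE'.le
    rwa [Real.exp_sub, Real.exp_log (hη j), Real.exp_log hE', mul_div_cancel₀ _ hE'.ne'] at h4
  have h2 := h.lower_bound hE hk0 hkK n hn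
  have h3 : (∑ j, n j) ≤ (negCount a b E).toNat := by
    rw [← ENat.natCast_le_natCast, ENat.natCast_toNat (h.negCount_ne_top hb.le hE)]
    exact h2
  have h4 : ∑ j, (k j / (2 * π) * (Real.log (η j) - Real.log (-E)) - 1) ≤
      ((negCount a b E).toNat : ℝ) := by
    refine le_trans ?_ (show ((∑ j, n j : ℕ) : ℝ) ≤ ((negCount a b E).toNat : ℝ) by exact_mod_cast h3)
    push_cast
    exact Finset.sum_le_sum fun j _ => (Nat.sub_one_lt_floor _).le
  rw [le_div_iff₀ hΛ, Finset.sum_mul]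
  refine le_trans (le_of_eq (Finset.sum_congr rfl fun j _ => ?_)) h4
  generalize Real.log (-E) = l at *
  have : l ≠ 0 := by rintro rfl; simp at hΛ
  field_simp
  ring

theorem MathieuFamily.tendsto_count (h : MathieuFamily a b g e) (hb : 0 < b) :
    Tendsto (fun E : ℝ => ((negCount a b E).toNat : ℝ) / |Real.log (abs E)|) (𝓝[<] 0)
      (𝓝 ((∑ j, Real.sqrt (a - e j)) / (2 * π))) := by
  have h1 : Tendsto (fun E : ℝ => ((negCount a b E).toNat : ℝ) / (-Real.log (-E))) (𝓝[<] 0)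
      (𝓝 ((∑ j, Real.sqrt (a - e j)) / (2 * π))) :=
    tendsto_order.2 ⟨fun l hl => h.eventually_gt hb hl, fun u hu => h.eventually_lt hb hu⟩
  refine h1.congr' ?_
  filter_upwards [self_mem_nhdsWithin, tendsto_neg_log_neg.eventually_gt_atTop 0] with E hE hΛ
  rw [abs_of_neg (Set.mem_Iio.1 hE), abs_of_neg (by linarith)]

end

theorem dipole_schroedinger_neumann_accumulation
    (a b : ℝ) (hb : 0 < b)
    (A : Set E2) (hA : A = {x : E2 | 1 < ‖x‖})
    (N : ℝ → ℕ∞)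
    (hN : ∀ E, N E = negIndexOn
      (fun ψ : E2 → ℂ => ContDiff ℝ (⊤ : ℕ∞) ψ ∧ HasCompactSupport ψ)
      (fun ψ => ∫ x in A,
        ((∑ j : Fin 2, ‖fderiv ℝ ψ x (EuclideanSpace.single j 1)‖ ^ 2)
          - ((a + b * x 0 / ‖x‖) / ‖x‖ ^ 2) * ‖ψ x‖ ^ 2 - E * ‖ψ x‖ ^ 2))) :
    (∀ E < (0 : ℝ), N E ≠ ⊤) ∧
      Tendsto (fun E : ℝ => ((N E).toNat : ℝ) / |Real.log (abs E)|)
        (nhdsWithin 0 (Set.Iio (0 : ℝ)))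
        (nhds ((1 / (2 * π)) *
          ∑' e : {e : ℝ // IsMathieuEV b e ∧ e < a},
            (mathieuMult b e : ℝ) * Real.sqrt (a - (e : ℝ)))) := by
  subst hA
  obtain ⟨m, g, e, h⟩ := exists_mathieuFamily a b hb.le
  obtain rfl : N = negCount a b := funext fun E => hN E
  refine ⟨fun E hE => h.negCount_ne_top hb.le hE, ?_⟩
  rw [h.tsum_eq, one_div, inv_mul_eq_div]
  exact h.tendsto_count hb
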